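/- Let q be a prime power with ω(q^3 − 1) ≥ 24 or q ≥ 8·10^{12}. Then for every a in F_q there exists a primitive element ξ of F_{q^3} such that ξ + ξ^{-1} is also a primitive element of F_{q^3} and Tr(ξ) = a. -/

import Mathlib

/-!
A pair of primitive elements `(ξ, ξ + ξ⁻¹)` with `Tr ξ = a` is found by a sieve over the prime
divisors of `q ^ 3 - 1`: some of them, the core, are treated by inclusion-exclusion over
multiplicative characters, the others by a union bound. The error terms are the sums
`∑ χA x χB (x² + 1) ψ (Tr x)`, which are at most `3 * √(q ^ 3)` in absolute value by Weil's theorem.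

For Weil's bound, the L-function of such a sum is a polynomial of degree at most three whose
reciprocal roots give the sums over all extension fields as negated power sums, so it suffices to
bound the sums over large extensions up to a constant factor. Averaging over the shifts
`x ↦ x + z ^ q - z`, which preserve the trace, removes the additive character and leaves the
problem of counting the `x` for which the norm of a polynomial lies in a given coset. Stepanov's
method does this: a polynomial of small degree is constructed that vanishes at all these `x`.

The sieve needs `q` to be large compared with `ω(q ^ 3 - 1)`. The product of the prime divisors
bounds `q ^ 3` from below, and this suffices when there are many of them. When there are at most
28, one uses that the primes congruent to `2` modulo `3` that divide `q ^ 3 - 1` already divide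
`q - 1`. Only a few distributions of the primes over the residue classes modulo `3` then resist;
in these, the primes congruent to `2` are enumerated, and their product, which divides `q - 1`,
leaves few candidates for `q`.
-/

namespace PrimitivePair

open Polynomial

universe u v

section Kummer

theorem isCoprime_X_pow_sub_C {M : Type*} [Field M] {a : M} {d : ℕ}
    (ha : ∀ e : ℕ, (∃ b : M, b ^ d = a ^ e) → d ∣ e) {η : M[X]} (hη : η ≠ 0)
    (hdeg : η.natDegree < d) : IsCoprime η (X ^ d - C a) := by
  refine isCoprime_of_irreducible_dvd (fun h => hη h.1) fun P hP hPη hPd => ?_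
  have : Fact (Irreducible P) := ⟨hP⟩
  have hroot : AdjoinRoot.root P ^ d = algebraMap M (AdjoinRoot P) a := by
    have := AdjoinRoot.mk_eq_zero.2 hPd
    rwa [map_sub, map_pow, AdjoinRoot.mk_X, AdjoinRoot.mk_C, sub_eq_zero] at this
  -- The norm of a root of `P` is a `d`-th root of `a ^ deg P`, so `d ∣ deg P ≤ deg η < d`.
  have hnorm : Algebra.norm M (AdjoinRoot.root P) ^ d = a ^ P.natDegree := by
    rw [← map_pow, hroot, Algebra.norm_algebraMap,
      (AdjoinRoot.powerBasis hP.ne_zero).finrank, AdjoinRoot.powerBasis_dim]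
  have hd := Nat.le_of_dvd hP.natDegree_pos (ha _ ⟨_, hnorm⟩)
  exact (hd.trans (natDegree_le_of_dvd hPη hη)).not_gt hdeg

theorem natDegree_resultant_le {R : Type*} [CommRing R] {f g : R[X][X]} {a b : ℕ} (m n : ℕ)
    (hf : ∀ i, (f.coeff i).natDegree ≤ a) (hg : ∀ i, (g.coeff i).natDegree ≤ b) :
    (resultant f g m n).natDegree ≤ n * a + m * b := by
  rw [resultant, Matrix.det_apply]
  refine natDegree_sum_le_of_forall_le _ _ fun σ _ => ?_
  refine (natDegree_smul_le _ _).trans <| (natDegree_prod_le _ _).trans ?_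
  rw [Fin.sum_univ_add, add_comm (n * a)]
  gcongr
  · refine (Finset.sum_le_card_nsmul _ _ b fun i _ => ?_).trans (by simp)
    simp only [sylvester, Matrix.of_apply, Fin.addCases_left]
    split_ifs
    · exact hg _
    · simp
  · refine (Finset.sum_le_card_nsmul _ _ a fun i _ => ?_).trans (by simp)
    simp only [sylvester, Matrix.of_apply, Fin.addCases_right]
    split_ifs
    · exact hf _
    · simp

end Kummer

section Substitution

variable {k : Type*} [Field k]

/-- The specialisation `P(x, y) ↦ P(x, x ^ r)`, where `x` is the outer and `y` the inner variable
of `k[X][X]`. -/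
noncomputable def substXPow (k : Type*) [Field k] (r : ℕ) : k[X][X] →+* k[X] :=
  eval₂RingHom (expand k r : k[X] →+* k[X]) X

theorem substXPow_C (r : ℕ) (H : k[X]) : substXPow k r (C H) = expand k r H := by
  simp [substXPow]

theorem substXPow_map_C (r : ℕ) (G : k[X]) : substXPow k r (G.map C) = G := by
  have hC : (expand k r : k[X] →+* k[X]).comp C = C := by ext; simp
  simp only [substXPow, coe_eval₂RingHom, eval₂_map, hC, eval₂_C_X]

theorem coeff_substXPow {r : ℕ} {P : k[X][X]} (hP : P.natDegree < r) {i : ℕ} (hi : i < r)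
    (l : ℕ) : (substXPow k r P).coeff (i + l * r) = (P.coeff i).coeff l := by
  have hr : 0 < r := by lia
  simp only [substXPow, coe_eval₂RingHom]
  rw [eval₂_eq_sum_range' _ hP, finsetSum_coeff, Finset.sum_eq_single i]
  · rw [add_comm i, coeff_mul_X_pow]
    exact coeff_expand_mul hr _ _
  · intro j hj hji
    rw [coeff_mul_X_pow']
    split_ifs with hle
    · change ((expand k r) (P.coeff j)).coeff _ = 0
      rw [coeff_expand hr, if_neg]
      rintro ⟨c, hc⟩
      have hmod : (i + l * r) % r = (j + r * c) % r := by congr 1; lia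
      rw [Nat.add_mul_mod_self_right, Nat.add_mul_mod_self_left, Nat.mod_eq_of_lt hi,
        Nat.mod_eq_of_lt (Finset.mem_range.1 hj)] at hmod
      exact hji hmod.symm
    · rfl
  · exact fun h => absurd (Finset.mem_range.2 hi) h

theorem eq_zero_of_substXPow_eq_zero {r : ℕ} {P : k[X][X]} (hP : P.natDegree < r)
    (h : substXPow k r P = 0) : P = 0 := by
  ext i l
  by_cases hi : i < r
  · rw [← coeff_substXPow hP hi, h]
    simp
  · simp [coeff_eq_zero_of_natDegree_lt (hP.trans_le (not_lt.1 hi))]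

end Substitution

section NonVanishing

variable {k : Type*} [Field k]

/-- The multiplicities of the irreducible factors of `G`, together with `d`, have greatest common
divisor `1`. This is the condition making `Y ^ d - G` geometrically irreducible. -/
def CoprimeMultiplicities (d : ℕ) (G : k[X]) : Prop :=
  ∀ e, (∀ π : k[X], Irreducible π → d ∣ e * multiplicity π G) → d ∣ e

theorem multiplicity_C_C (π G : k[X]) :
    multiplicity (C π : k[X][X]) (C G) = multiplicity π G := by
  refine multiplicity_eq_of_emultiplicity_eq (emultiplicity_eq_emultiplicity_iff.2 fun n => ?_)
  rw [← C_pow, C_dvd_iff_dvd_coeff]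
  refine ⟨fun h => by simpa using h 0, fun h i => ?_⟩
  rw [coeff_C]
  split_ifs <;> simp [h]

theorem not_C_dvd_map_C {π H : k[X]} (hπ : Irreducible π) (hH : H ≠ 0) :
    ¬ (C π : k[X][X]) ∣ H.map C := by
  intro h
  have hdvd := (C_dvd_iff_dvd_coeff _ _).1 h H.natDegree
  rw [coeff_map] at hdvd
  exact hπ.not_isUnit (isUnit_of_dvd_unit hdvd (isUnit_C.2 (by simpa using hH)))

theorem CoprimeMultiplicities.dvd_of_pow_mul_pow_eq {d e : ℕ} {G H : k[X]}
    (hG : CoprimeMultiplicities d G) (hG0 : G ≠ 0) (hH0 : H ≠ 0) {u v : k[X][X]} (hu : u ≠ 0)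
    (hv : v ≠ 0) (h : u ^ d * G.map C ^ e = C H ^ e * v ^ d) : d ∣ e := by
  refine hG e fun π hπ => ?_
  have hp : Prime (C π : k[X][X]) := prime_C_iff.2 hπ.prime
  have hfin : ∀ z : k[X][X], z ≠ 0 → FiniteMultiplicity (C π : k[X][X]) z :=
    fun z hz => FiniteMultiplicity.of_prime_left hp hz
  have hu' : Bivariate.swap u ≠ 0 := by simpa using hu
  have hv' : Bivariate.swap v ≠ 0 := by simpa using hv
  have hG' : (C G : k[X][X]) ≠ 0 := by simpa using hG0
  have hH' : (H.map C : k[X][X]) ≠ 0 := (Polynomial.map_ne_zero_iff C_injective).2 hH0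
  have hmul := congrArg (multiplicity (C π : k[X][X])) (congrArg (Bivariate.swap (R := k)) h)
  simp only [map_mul, map_pow, Bivariate.swap_C, Bivariate.swap_map_C] at hmul
  rw [multiplicity_mul hp (hfin _ (by positivity)), multiplicity_mul hp (hfin _ (by positivity)),
    (hfin _ hu').multiplicity_pow hp, (hfin _ hv').multiplicity_pow hp,
    (hfin _ hG').multiplicity_pow hp, (hfin _ hH').multiplicity_pow hp, multiplicity_C_C,
    multiplicity_eq_zero.2 (not_C_dvd_map_C hπ hH0), mul_zero, zero_add] at hmul
  exact (Nat.dvd_add_right (dvd_mul_right d _)).1 (hmul ▸ dvd_mul_right d _)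

/-- The polynomial `G(x) Z ^ d - H(y)` of `k[y][x][Z]`. Under `y = x ^ r`, and when
`H(x ^ r) = G(x) ^ r` with `r = d * w + 1`, it has the root `Z = G ^ w`. -/
noncomputable def kummerPoly (d : ℕ) (G H : k[X]) : k[X][X][X] :=
  C (G.map C) * X ^ d - C (C H)

variable {d : ℕ} {G H : k[X]}

theorem natDegree_kummerPoly (hG0 : G ≠ 0) : (kummerPoly d G H).natDegree = d := by
  rw [kummerPoly, natDegree_sub_C,
    natDegree_C_mul_X_pow _ _ ((Polynomial.map_ne_zero_iff C_injective).2 hG0)]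

theorem natDegree_coeff_kummerPoly_le (i : ℕ) :
    ((kummerPoly d G H).coeff i).natDegree ≤ G.natDegree := by
  rw [kummerPoly, coeff_sub, coeff_C_mul, coeff_X_pow, coeff_C]
  refine (natDegree_sub_le _ _).trans (max_le ?_ ?_)
  · split_ifs
    · rw [mul_one]
      exact natDegree_map_le
    · simp
  · split_ifs <;> simp

theorem eval_map_substXPow_kummerPoly {w r : ℕ} (hr : r = d * w + 1)
    (hGH : expand k r H = G ^ r) : ((kummerPoly d G H).map (substXPow k r)).eval (G ^ w) = 0 := by
  simp only [kummerPoly, Polynomial.map_sub, Polynomial.map_mul, map_C, Polynomial.map_pow, map_X,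
    eval_sub, eval_mul, eval_C, eval_pow, eval_X, substXPow_map_C, substXPow_C, hGH]
  rw [hr]
  ring

theorem CoprimeMultiplicities.isCoprime_map_kummerPoly (hG : CoprimeMultiplicities d G)
    (hd : 0 < d) (hG0 : G ≠ 0) (hH0 : H ≠ 0) {η : k[X][X][X]} (hη : η ≠ 0)
    (hηd : η.natDegree < d) :
    IsCoprime (η.map (algebraMap k[X][X] (FractionRing k[X][X])))
      ((kummerPoly d G H).map (algebraMap k[X][X] (FractionRing k[X][X]))) := by
  set φ := algebraMap k[X][X] (FractionRing k[X][X])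
  have hφ : Function.Injective φ := IsFractionRing.injective _ _
  have hG' : φ (G.map C) ≠ 0 :=
    (map_ne_zero_iff φ hφ).2 ((Polynomial.map_ne_zero_iff C_injective).2 hG0)
  have hH' : φ (C H) ≠ 0 := (map_ne_zero_iff φ hφ).2 (by simpa using hH0)
  have hfactor : (kummerPoly d G H).map φ
      = C (φ (G.map C)) * (X ^ d - C (φ (C H) / φ (G.map C))) := by
    rw [kummerPoly, mul_sub, ← C_mul, mul_div_cancel₀ _ hG']
    simp
  rw [hfactor, isCoprime_mul_unit_left_right (isUnit_C.2 (isUnit_iff_ne_zero.2 hG'))]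
  refine isCoprime_X_pow_sub_C ?_ ((Polynomial.map_ne_zero_iff hφ).2 hη)
    (by rwa [natDegree_map_eq_of_injective hφ])
  rintro e ⟨b, hb⟩
  obtain ⟨u, v, hv, rfl⟩ := IsFractionRing.div_surjective (A := k[X][X]) b
  have hv' : φ v ≠ 0 := (map_ne_zero_iff φ hφ).2 (nonZeroDivisors.ne_zero hv)
  have hu : u ≠ 0 := by
    rintro rfl
    rw [map_zero, zero_div, zero_pow hd.ne'] at hb
    exact pow_ne_zero e (div_ne_zero hH' hG') hb.symm
  refine hG.dvd_of_pow_mul_pow_eq hG0 hH0 hu (nonZeroDivisors.ne_zero hv) (hφ ?_)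
  change (φ u / φ v) ^ d = _ at hb
  rw [div_pow, div_pow, div_eq_div_iff (by positivity) (by positivity)] at hb
  simpa using hb

theorem CoprimeMultiplicities.resultant_kummerPoly_ne_zero (hG : CoprimeMultiplicities d G)
    (hd : 0 < d) (hG0 : G ≠ 0) (hH0 : H ≠ 0) {η : k[X][X][X]} (hη : η ≠ 0)
    (hηd : η.natDegree < d) : resultant η (kummerPoly d G H) ≠ 0 := by
  have hφ : Function.Injective (algebraMap k[X][X] (FractionRing k[X][X])) :=
    IsFractionRing.injective _ _
  have hres := resultant_ne_zero _ _ (hG.isCoprime_map_kummerPoly hd hG0 hH0 hη hηd)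
  rw [natDegree_map_eq_of_injective hφ, natDegree_map_eq_of_injective hφ,
    resultant_map_map] at hres
  exact fun h => hres (by rw [h, map_zero])

theorem CoprimeMultiplicities.eval_map_substXPow_ne_zero (hG : CoprimeMultiplicities d G)
    {w r a : ℕ} (hd : 0 < d) (hr : r = d * w + 1) (hG0 : G ≠ 0) (hH0 : H ≠ 0)
    (hGH : expand k r H = G ^ r) {η : k[X][X][X]} (hη : η ≠ 0) (hηd : η.natDegree < d)
    (hηa : ∀ i, (η.coeff i).natDegree ≤ a) (hlt : d * a + (d - 1) * G.natDegree < r) :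
    (η.map (substXPow k r)).eval (G ^ w) ≠ 0 := by
  intro h0
  -- The resultant vanishes at `y = x ^ r`, but its `x`-degree is too small for that.
  refine hG.resultant_kummerPoly_ne_zero hd hG0 hH0 hη hηd
    (eq_zero_of_substXPow_eq_zero (r := r) ?_ ?_)
  · refine (natDegree_resultant_le _ _ hηa natDegree_coeff_kummerPoly_le).trans_lt
      (lt_of_le_of_lt ?_ hlt)
    rw [natDegree_kummerPoly hG0]
    gcongr
    lia
  · obtain ⟨p, q, -, -, hpq⟩ := exists_mul_add_mul_eq_C_resultant η (kummerPoly d G H) le_rfl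
      le_rfl (.inr (by rw [natDegree_kummerPoly hG0]; lia))
    have heval := congrArg (fun z => (z.map (substXPow k r)).eval (G ^ w)) hpq
    simpa only [Polynomial.map_add, Polynomial.map_mul, eval_add, eval_mul, h0, map_C, eval_C,
      eval_map_substXPow_kummerPoly hr hGH, zero_mul, zero_add, eq_comm] using heval

end NonVanishing

section Stepanov

variable {k : Type*} [Field k]

theorem exists_sum_C_mul_eq_zero {ι : Type*} [Fintype ι] {N : ℕ} (v : ι → k[X])
    (hv : ∀ t, (v t).natDegree < N) (hN : N < Fintype.card ι) :
    ∃ b : ι → k, b ≠ 0 ∧ ∑ t, C (b t) * v t = 0 := by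
  let v' : ι → degreeLT k N := fun t =>
    ⟨v t, mem_degreeLT.2 (degree_le_natDegree.trans_lt (by exact_mod_cast hv t))⟩
  have hdep : ¬ LinearIndependent k v' := fun hli => by
    have : Module.Finite k (degreeLT k N) := Module.Finite.equiv (degreeLTEquiv k N).symm
    have hle := hli.fintype_card_le_finrank
    rw [(degreeLTEquiv k N).finrank_eq, Module.finrank_fin_fun] at hle
    exact hle.not_gt hN
  obtain ⟨b, hb, t, ht⟩ := Fintype.not_linearIndependent_iff.1 hdep
  refine ⟨b, fun h => ht (congrFun h t), ?_⟩
  simpa [v', smul_eq_C_mul] using congrArg (Submodule.subtype _) hb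

variable {d J A : ℕ}

/-- The polynomial `∑ aᵢⱼₗ y ^ j x ^ l Z ^ i` of `k[y][x][Z]`. -/
noncomputable def auxCoeffs (a : Fin d × Fin J × Fin A → k) : k[X][X][X] :=
  ∑ t, monomial (t.1 : ℕ) (monomial (t.2.2 : ℕ) (monomial (t.2.1 : ℕ) (a t)))

theorem coeff_auxCoeffs (a : Fin d × Fin J × Fin A → k) (t : Fin d × Fin J × Fin A) :
    (((auxCoeffs a).coeff t.1).coeff t.2.2).coeff t.2.1 = a t := by
  simp only [auxCoeffs, finsetSum_coeff]
  rw [Finset.sum_eq_single t]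
  · simp
  · intro s _ hst
    simp only [coeff_monomial, apply_ite (fun p : k[X][X] => p.coeff t.2.2),
      apply_ite (fun p : k[X] => p.coeff t.2.1), coeff_zero]
    rw [← ite_and, ← ite_and, if_neg]
    exact fun h => hst (Prod.ext (Fin.ext h.1.1) (Prod.ext (Fin.ext h.2) (Fin.ext h.1.2)))
  · simp

theorem auxCoeffs_ne_zero {a : Fin d × Fin J × Fin A → k} (ha : a ≠ 0) : auxCoeffs a ≠ 0 := by
  contrapose! ha
  ext t
  simp [← coeff_auxCoeffs a t, ha]

theorem natDegree_auxCoeffs_lt (a : Fin d × Fin J × Fin A → k) (hd : 0 < d) :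
    (auxCoeffs a).natDegree < d :=
  Nat.lt_of_le_pred hd <| natDegree_sum_le_of_forall_le _ _ fun t _ =>
    (natDegree_monomial_le _).trans (Nat.le_pred_of_lt t.1.2)

theorem natDegree_coeff_auxCoeffs_le (a : Fin d × Fin J × Fin A → k) (i : ℕ) :
    ((auxCoeffs a).coeff i).natDegree ≤ A - 1 := by
  rw [auxCoeffs, finsetSum_coeff]
  refine natDegree_sum_le_of_forall_le _ _ fun t _ => ?_
  rw [coeff_monomial]
  split_ifs
  · exact (natDegree_monomial_le _).trans (Nat.le_pred_of_lt t.2.2.2)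
  · simp

/-- Stepanov's auxiliary polynomial, the value of `auxCoeffs a` at `y = x ^ r` and `Z = W(x)`. -/
noncomputable def auxPoly (r : ℕ) (W : k[X]) (a : Fin d × Fin J × Fin A → k) : k[X] :=
  ∑ t, C (a t) * X ^ ((t.2.1 : ℕ) * r + t.2.2) * W ^ (t.1 : ℕ)

theorem eval_map_auxCoeffs (r : ℕ) (W : k[X]) (a : Fin d × Fin J × Fin A → k) :
    ((auxCoeffs a).map (substXPow k r)).eval W = auxPoly r W a := by
  simp only [auxCoeffs, auxPoly, Polynomial.map_sum, eval_finsetSum, map_monomial, eval_monomial]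
  refine Finset.sum_congr rfl fun t _ => ?_
  simp only [substXPow, coe_eval₂RingHom, eval₂_monomial]
  change expand k r _ * _ * _ = _
  rw [expand_monomial, ← C_mul_X_pow_eq_monomial, mul_assoc (C _), ← pow_add]

theorem natDegree_auxPoly_le (r D w : ℕ) {W : k[X]} (a : Fin d × Fin J × Fin A → k)
    (hW : W.natDegree ≤ w * D) (hw : d * w ≤ r) :
    (auxPoly r W a).natDegree ≤ (A - 1) + (J - 1) * r + D * r := by
  refine natDegree_sum_le_of_forall_le _ _ fun t _ => natDegree_mul_le.trans ?_
  have hWt : (W ^ (t.1 : ℕ)).natDegree ≤ D * r := calc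
    (W ^ (t.1 : ℕ)).natDegree ≤ t.1 * (w * D) := natDegree_pow_le.trans (by gcongr)
    _ ≤ d * (w * D) := by gcongr; exact t.1.2.le
    _ = D * (d * w) := by ring
    _ ≤ D * r := by gcongr
  have hX : (C (a t) * X ^ ((t.2.1 : ℕ) * r + t.2.2)).natDegree ≤ (J - 1) * r + (A - 1) := by
    refine (natDegree_C_mul_X_pow_le _ _).trans ?_
    gcongr
    · exact Nat.le_pred_of_lt t.2.1.2
    · exact Nat.le_pred_of_lt t.2.2.2
  lia

theorem exists_stepanov_relation {r D w : ℕ} {W : k[X]} (hW : W.natDegree ≤ w * D)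
    (hw : d * w ≤ r) (hcount : r * A + J + D * r < d * (J * A)) (c : k) :
    ∃ b : Fin d × Fin J × Fin A → k, b ≠ 0 ∧ ∑ t, C (b t) *
      (C (c ^ (t.1 : ℕ)) * X ^ ((t.2.2 : ℕ) * r + t.2.1) * W ^ (d - 1 - t.1)) = 0 := by
  refine exists_sum_C_mul_eq_zero (N := r * A + J + D * r) (fun t : Fin d × Fin J × Fin A =>
    C (c ^ (t.1 : ℕ)) * X ^ ((t.2.2 : ℕ) * r + t.2.1) * W ^ (d - 1 - t.1)) (fun t => ?_) ?_
  · have hX : (C (c ^ (t.1 : ℕ)) * X ^ ((t.2.2 : ℕ) * r + t.2.1) : k[X]).natDegree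
        ≤ (t.2.2 : ℕ) * r + t.2.1 := natDegree_C_mul_X_pow_le _ _
    have hl : (t.2.2 : ℕ) * r ≤ r * A := by
      rw [mul_comm]; gcongr; exact t.2.2.2.le
    have hWt : (W ^ (d - 1 - (t.1 : ℕ))).natDegree ≤ D * r := calc
      (W ^ (d - 1 - (t.1 : ℕ))).natDegree ≤ (d - 1 - t.1) * (w * D) :=
        natDegree_pow_le.trans (by gcongr)
      _ ≤ d * (w * D) := by gcongr; lia
      _ = D * (d * w) := by ring
      _ ≤ D * r := by gcongr
    calc _ ≤ (C (c ^ (t.1 : ℕ)) * X ^ ((t.2.2 : ℕ) * r + t.2.1) : k[X]).natDegree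
          + (W ^ (d - 1 - (t.1 : ℕ))).natDegree := natDegree_mul_le
      _ ≤ (t.2.2 * r + t.2.1) + D * r := add_le_add hX hWt
      _ < r * A + J + D * r := by have := t.2.1.2; lia
  · simpa using hcount

theorem eval_auxPoly_pow_mul {p m r : ℕ} [Fact p.Prime] [CharP k p] (hr : r = p ^ m)
    (W : k[X]) {a b : Fin d × Fin J × Fin A → k} (hab : ∀ t, a t ^ r = b t) {x c : k}
    (hx : x ^ (r * r) = x) (hWx : W.eval x ^ (r + 1) = c) :
    (auxPoly r W a).eval x ^ r * W.eval x ^ (d - 1) = (∑ t, C (b t) *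
      (C (c ^ (t.1 : ℕ)) * X ^ ((t.2.2 : ℕ) * r + t.2.1) * W ^ (d - 1 - t.1))).eval x := by
  rw [auxPoly, eval_finsetSum, eval_finsetSum, hr, sum_pow_char_pow, ← hr, Finset.sum_mul]
  refine Finset.sum_congr rfl fun t _ => ?_
  have hsplit : W.eval x ^ (d - 1) = W.eval x ^ (t.1 : ℕ) * W.eval x ^ (d - 1 - t.1) := by
    rw [← pow_add, Nat.add_sub_of_le (Nat.le_sub_one_of_lt t.1.2)]
  have hxj : (x ^ ((t.2.1 : ℕ) * r)) ^ r = x ^ (t.2.1 : ℕ) := by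
    rw [← pow_mul, mul_assoc, mul_comm, pow_mul, hx]
  simp only [eval_mul, eval_C, eval_pow, eval_X, hsplit, ← hab t, ← hWx, mul_pow, pow_add, hxj]
  ring

-- With `A = w - D` and `J = w + D + 3`, these are the dimension count for the existence of
-- `auxPoly` and the degree condition for its non-vanishing.
theorem stepanov_parameters {d w D A : ℕ} (hd : 0 < d) (hA : w = A + D)
    (hw : D * (d * D + 3 * d + 2) + D + 3 < w) :
    (d * w + 1) * A + (w + D + 3) + D * (d * w + 1) < d * ((w + D + 3) * A) ∧
      d * (A - 1) + (d - 1) * D < d * w + 1 := by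
  obtain ⟨d, rfl⟩ := Nat.exists_eq_add_one.2 hd
  constructor
  · subst hA
    nlinarith [Nat.zero_le (d * A), Nat.zero_le (d * D), Nat.zero_le (d * D * D),
      Nat.zero_le (D * D), Nat.zero_le (d * D * A), Nat.zero_le (D * A)]
  · have hA' : (d + 1) * (A - 1) ≤ (d + 1) * A := by gcongr; lia
    rw [Nat.add_sub_cancel]
    subst hA
    nlinarith

end Stepanov

section CountingPoints

variable {k : Type*} [Field k] [Fintype k]

theorem exists_stepanov_polynomial {p m r d w D : ℕ} [Fact p.Prime] [CharP k p]
    (hrp : r = p ^ m) (hcard : Fintype.card k = r ^ 2) (hd : 0 < d) (hr : r = d * w + 1)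
    {G : k[X]} (hG0 : G ≠ 0) (hG : CoprimeMultiplicities d G) (hD : G.natDegree ≤ D)
    (hw : D * (d * D + 3 * d + 2) + D + 3 < w) (c : k) :
    ∃ g : k[X], g ≠ 0 ∧ g.natDegree ≤ (w - D - 1) + (w + D + 2) * r + D * r ∧
      ∀ x, G.eval x ≠ 0 → G.eval x ^ (w * (r + 1)) = c → g.IsRoot x := by
  obtain ⟨A, hA⟩ : ∃ A, w = A + D := ⟨w - D, by lia⟩
  obtain ⟨hcount, hdegree⟩ := stepanov_parameters hd hA hw
  rw [← hr] at hcount hdegree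
  have hWdeg : (G ^ w).natDegree ≤ w * D := natDegree_pow_le.trans (by gcongr)
  obtain ⟨b, hb0, hb⟩ := exists_stepanov_relation hWdeg (by lia) hcount c
  have hFrob : ∀ y : k, y ^ (r * r) = y := fun y => by
    rw [← pow_two, ← hcard, FiniteField.pow_card]
  have hab : ∀ t, (b t ^ r) ^ r = b t := fun t => by rw [← pow_mul, hFrob]
  have hr0 : r ≠ 0 := by lia
  have ha0 : (fun t => b t ^ r) ≠ 0 := fun h => hb0 (funext fun t =>
    (pow_eq_zero_iff hr0).1 (congrFun h t))
  refine ⟨auxPoly r (G ^ w) fun t => b t ^ r, ?_, ?_, fun x hx hxc => ?_⟩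
  · rw [← eval_map_auxCoeffs]
    refine hG.eval_map_substXPow_ne_zero hd hr hG0
      ((Polynomial.map_ne_zero_iff (iterateFrobenius k p m).injective).2 hG0)
      (by rw [← map_expand, hrp, map_iterateFrobenius_expand]) (auxCoeffs_ne_zero ha0)
      (natDegree_auxCoeffs_lt _ hd) (natDegree_coeff_auxCoeffs_le _) (lt_of_le_of_lt ?_ hdegree)
    gcongr
  · obtain rfl : A = w - D := by lia
    exact natDegree_auxPoly_le r D w _ hWdeg (by lia)
  · have hmul := eval_auxPoly_pow_mul hrp (G ^ w) hab (hFrob x)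
      (show (G ^ w).eval x ^ (r + 1) = c by rw [eval_pow, ← pow_mul, hxc])
    rw [hb, eval_zero] at hmul
    exact (pow_eq_zero_iff hr0).1 ((mul_eq_zero.1 hmul).resolve_right
      (pow_ne_zero _ (by rw [eval_pow]; exact pow_ne_zero _ hx)))

theorem card_filter_pow_eq_le {p m r d w D : ℕ} [Fact p.Prime] [CharP k p] [DecidableEq k]
    (hrp : r = p ^ m) (hcard : Fintype.card k = r ^ 2) (hd : 0 < d) (hr : r = d * w + 1)
    {G : k[X]} (hG0 : G ≠ 0) (hG : CoprimeMultiplicities d G) (hD : G.natDegree ≤ D)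
    (hw : D * (d * D + 3 * d + 2) + D + 3 < w) (c : k) :
    d * (Finset.univ.filter fun x : k => G.eval x ≠ 0 ∧ G.eval x ^ (w * (r + 1)) = c).card
      ≤ r ^ 2 + 2 * d * (D + 1) * r := by
  obtain ⟨g, hg0, hgdeg, hroot⟩ := exists_stepanov_polynomial hrp hcard hd hr hG0 hG hD hw c
  have hsub : (Finset.univ.filter fun x : k => G.eval x ≠ 0 ∧ G.eval x ^ (w * (r + 1)) = c)
      ⊆ g.roots.toFinset := fun x hx => by
    obtain ⟨-, hx0, hxc⟩ := Finset.mem_filter.1 hx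
    exact Multiset.mem_toFinset.2 ((mem_roots hg0).2 (hroot x hx0 hxc))
  calc d * _ ≤ d * g.natDegree := by
        gcongr
        exact (Finset.card_le_card hsub).trans
          ((Multiset.toFinset_card_le _).trans (card_roots' _))
    _ ≤ d * (w + (w + D + 2) * r + D * r) := by gcongr; lia
    _ = d * w * (r + 1) + 2 * d * (D + 1) * r := by ring
    _ ≤ r ^ 2 + 2 * d * (D + 1) * r := by
        gcongr
        rw [hr]
        nlinarith

end CountingPoints

section Multiplicities

variable {k : Type*} [Field k] {d A B : ℕ}

theorem multiplicity_eq_one_of_separable {P π : k[X]} (hP : P.Separable) (hπ : Irreducible π)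
    (hdvd : π ∣ P) : multiplicity π P = 1 := by
  have hfin : FiniteMultiplicity π P := .of_prime_left hπ.prime hP.ne_zero
  refine hfin.multiplicity_eq_iff.2 ⟨by simpa using hdvd, fun hsq => hπ.not_isUnit ?_⟩
  exact hP.squarefree π (by rwa [← pow_two])

theorem dvd_mul_of_dvd_mul_multiplicity {P R : k[X]} {e : ℕ} (hP : P.Separable)
    (hdeg : P.natDegree ≠ 0) (hR : R ≠ 0) (hPR : IsCoprime P R)
    (h : ∀ π : k[X], Irreducible π → d ∣ e * multiplicity π (P ^ A * R ^ B)) : d ∣ e * A := by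
  obtain ⟨π, hπ, hπP⟩ := exists_irreducible_of_natDegree_ne_zero hdeg
  have hfin : ∀ G : k[X], G ≠ 0 → FiniteMultiplicity π G := fun G hG =>
    .of_prime_left hπ.prime hG
  have hπR : ¬ π ∣ R := fun hπR => hπ.not_isUnit (hPR.isUnit_of_dvd' hπP hπR)
  have hmult : multiplicity π (P ^ A * R ^ B) = A := by
    rw [multiplicity_mul hπ.prime
        (hfin _ (mul_ne_zero (pow_ne_zero _ hP.ne_zero) (pow_ne_zero _ hR))),
      (hfin P hP.ne_zero).multiplicity_pow hπ.prime, (hfin R hR).multiplicity_pow hπ.prime,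
      multiplicity_eq_one_of_separable hP hπ hπP, multiplicity_eq_zero.2 hπR]
    simp
  exact hmult ▸ h π hπ

theorem separable_of_derivative_eq_neg_one {Z : k[X]} (hZ : derivative Z = -1) :
    Z.Separable := by
  rw [separable_def, hZ]
  exact isCoprime_one_right.neg_right

theorem dvd_mul_of_dvd_mul_multiplicity_sq_add_one {Z : k[X]} {e : ℕ} (hZ : derivative Z = -1)
    (hdeg : Z.natDegree ≠ 0) (hd : (2 : k) = 0 → d.Coprime 2)
    (h : ∀ π : k[X], Irreducible π → d ∣ e * multiplicity π ((Z ^ 2 + 1) ^ B * Z ^ A)) :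
    d ∣ e * B := by
  have hZ0 : Z ≠ 0 := (separable_of_derivative_eq_neg_one hZ).ne_zero
  by_cases h2 : (2 : k) = 0
  · have h2X : (2 : k[X]) = 0 := by rw [← C_ofNat, h2, C_0]
    have hsq : Z ^ 2 + 1 = (Z + 1) ^ 2 := by linear_combination (-Z) * h2X
    have hdegree : (Z + 1).natDegree ≠ 0 := by rwa [← C_1, natDegree_add_C]
    rw [hsq] at h
    simp only [← pow_mul] at h
    have hdvd : d ∣ e * (2 * B) := dvd_mul_of_dvd_mul_multiplicity
      (separable_of_derivative_eq_neg_one (by simp [hZ])) hdegree hZ0 ⟨1, -1, by ring⟩ h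
    exact (hd h2).dvd_of_dvd_mul_left (by rwa [mul_left_comm] at hdvd)
  · have hsep : (Z ^ 2 + 1).Separable := by
      have hinv : (C (2⁻¹) * 2 : k[X]) = 1 := by
        rw [← C_ofNat, ← C_mul, inv_mul_cancel₀ h2, C_1]
      refine ⟨1, C 2⁻¹ * Z, ?_⟩
      simp only [derivative_add, derivative_pow, hZ, derivative_one]
      push_cast
      simp only [C_ofNat]
      linear_combination (-Z ^ 2) * hinv
    have hdegree : (Z ^ 2 + 1).natDegree ≠ 0 := by
      rw [← C_1, natDegree_add_C, natDegree_pow]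
      lia
    exact dvd_mul_of_dvd_mul_multiplicity hsep hdegree hZ0 ⟨1, -Z, by ring⟩ h

theorem sq_add_one_ne_zero_of_natDegree_ne_zero {Z : k[X]} (hdeg : Z.natDegree ≠ 0) :
    Z ^ 2 + 1 ≠ 0 := fun h0 => hdeg <| by
  have := congrArg natDegree h0
  rw [← C_1, natDegree_add_C, natDegree_pow] at this
  simpa using this

theorem coprimeMultiplicities_pow_mul_sq_add_one_pow {Z : k[X]} (hZ : derivative Z = -1)
    (hdeg : Z.natDegree ≠ 0) (hd : (2 : k) = 0 → d.Coprime 2)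
    (hAB : ∀ e, d ∣ e * A → d ∣ e * B → d ∣ e) :
    CoprimeMultiplicities d (Z ^ A * (Z ^ 2 + 1) ^ B) := fun e he => by
  refine hAB e ?_ ?_
  · exact dvd_mul_of_dvd_mul_multiplicity (separable_of_derivative_eq_neg_one hZ) hdeg
      (sq_add_one_ne_zero_of_natDegree_ne_zero hdeg) ⟨-Z, 1, by ring⟩ he
  · exact dvd_mul_of_dvd_mul_multiplicity_sq_add_one (A := A) hZ hdeg hd
      (by simpa only [mul_comm] using he)

end Multiplicities

section Characters

theorem norm_mulChar_apply_le_one {K : Type*} [Field K] [Finite K] (χ : MulChar K ℂ) (x : K) :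
    ‖χ x‖ ≤ 1 := by
  by_cases hx : IsUnit x
  · obtain ⟨u, rfl⟩ := hx
    obtain ⟨n, hn, hu⟩ := (isOfFinOrder_of_finite u).exists_pow_eq_one
    refine (Complex.norm_eq_one_of_pow_eq_one (n := n) ?_ hn.ne').le
    rw [← map_pow, ← Units.val_pow_eq_pow_val, hu, Units.val_one, map_one]
  · simp [χ.map_nonunit hx]

theorem pow_eq_pow_of_mulChar_apply_eq {K R : Type*} [Field K] [Fintype K] [CommRing R]
    {χ : MulChar K R} {e : ℕ} (he : orderOf χ * e = Fintype.card K - 1) {u v : K} (hu : u ≠ 0)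
    (hv : v ≠ 0) (huv : χ u = χ v) : u ^ e = v ^ e := by
  classical
  obtain ⟨g, hg⟩ := IsCyclic.exists_generator (α := Kˣ)
  obtain ⟨i, hi : g ^ i = Units.mk0 u hu * (Units.mk0 v hv)⁻¹⟩ :=
    mem_powers_iff_mem_zpowers.2 (hg _)
  have hgi : χ g ^ i = 1 := by
    rw [← map_pow, ← Units.val_pow_eq_pow_val, hi]
    have hvv : χ v * χ ((Units.mk0 v hv)⁻¹ : Kˣ) = 1 := by
      rw [← map_mul, Units.val_inv_eq_inv_val, Units.val_mk0, mul_inv_cancel₀ hv, map_one]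
    simpa [huv] using hvv
  have hχi : χ ^ i = 1 := MulChar.ext fun x => by
    obtain ⟨j, rfl⟩ := mem_powers_iff_mem_zpowers.2 (hg x)
    simp only [MulChar.pow_apply_coe, MulChar.one_apply_coe, Units.val_pow_eq_pow_val, map_pow]
    rw [hgi]
  obtain ⟨j, rfl⟩ := orderOf_dvd_of_pow_eq_one hχi
  have hone : (Units.mk0 u hu * (Units.mk0 v hv)⁻¹) ^ e = 1 := by
    rw [← hi, ← pow_mul, mul_right_comm, he, pow_mul, ← Fintype.card_units, pow_card_eq_one,
      one_pow]
  rw [mul_pow, inv_pow, mul_inv_eq_one] at hone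
  simpa using congrArg Units.val hone

theorem sum_nthRootsFinset_one {R : Type*} [CommRing R] [IsDomain R] {μ : R} {d : ℕ}
    (hμ : IsPrimitiveRoot μ d) (hd : 1 < d) : ∑ ζ ∈ nthRootsFinset d (1 : R), ζ = 0 := by
  have : NeZero d := ⟨by lia⟩
  rw [← hμ.geom_sum_eq_zero hd]
  refine (Finset.sum_bij (fun i _ => μ ^ i) ?_ ?_ ?_ fun _ _ => rfl).symm
  · intro i _
    rw [mem_nthRootsFinset (by lia), ← pow_mul, mul_comm, pow_mul, hμ.pow_eq_one, one_pow]
  · exact fun i hi j hj => hμ.pow_inj (Finset.mem_range.1 hi) (Finset.mem_range.1 hj)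
  · intro ζ hζ
    obtain ⟨i, hi, rfl⟩ := hμ.eq_pow_of_pow_eq_one ((mem_nthRootsFinset (by lia) _).1 hζ)
    exact ⟨i, Finset.mem_range.2 hi, rfl⟩

-- Since the `d`-th roots of unity sum to zero, `T / d` can be subtracted from all the fiber sizes.
theorem norm_sum_le_of_card_fiber_le {ι : Type*} {d : ℕ} (hd : 1 < d) {s : Finset ι} {f : ι → ℂ}
    (hf : ∀ z ∈ s, f z ^ d = 1) {T : ℝ}
    (hT : ∀ ζ : ℂ, ζ ^ d = 1 → d * ((s.filter fun z => f z = ζ).card : ℝ) ≤ T) :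
    ‖∑ z ∈ s, f z‖ ≤ T - s.card := by
  classical
  have hd0 : (0 : ℝ) < d := by positivity
  obtain ⟨μ, hμ⟩ : ∃ μ : ℂ, IsPrimitiveRoot μ d := ⟨_, Complex.isPrimitiveRoot_exp d (by lia)⟩
  have hmaps : ∀ z ∈ s, f z ∈ nthRootsFinset d (1 : ℂ) := fun z hz =>
    (mem_nthRootsFinset (by lia) _).2 (hf z hz)
  have hsum : ∑ z ∈ s, f z = ∑ ζ ∈ nthRootsFinset d (1 : ℂ),
      ζ * (((s.filter fun z => f z = ζ).card - T / d : ℝ) : ℂ) := by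
    push_cast
    simp only [mul_sub, Finset.sum_sub_distrib, ← Finset.sum_mul,
      sum_nthRootsFinset_one hμ hd, zero_mul, sub_zero]
    rw [← Finset.sum_fiberwise_of_maps_to hmaps]
    refine Finset.sum_congr rfl fun ζ _ => ?_
    rw [Finset.sum_congr rfl fun z hz => (Finset.mem_filter.1 hz).2, Finset.sum_const,
      nsmul_eq_mul, mul_comm]
  calc ‖∑ z ∈ s, f z‖ ≤ ∑ ζ ∈ nthRootsFinset d (1 : ℂ),
        (T / d - ((s.filter fun z => f z = ζ).card : ℝ)) := by
        rw [hsum]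
        refine norm_sum_le_of_le _ fun ζ hζ => ?_
        have hζd : ζ ^ d = 1 := (mem_nthRootsFinset (by lia) _).1 hζ
        have hle : ((s.filter fun z => f z = ζ).card : ℝ) ≤ T / d := by
          rw [le_div_iff₀' hd0]
          exact hT ζ hζd
        rw [norm_mul, Complex.norm_eq_one_of_pow_eq_one hζd (by lia), one_mul,
          Complex.norm_real, Real.norm_eq_abs, abs_sub_comm, abs_of_nonneg (by linarith)]
    _ = T - s.card := by
        rw [Finset.sum_sub_distrib, Finset.sum_const, hμ.card_nthRootsFinset, nsmul_eq_mul,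
          mul_div_cancel₀ _ hd0.ne', ← Nat.cast_sum,
          ← Finset.card_eq_sum_card_fiberwise hmaps]

theorem exists_pow_eq_and_pow_eq {G : Type*} [CommGroup G] [Finite G] [IsCyclic G] {a b : G}
    (hab : a ≠ 1 ∨ b ≠ 1) : ∃ (g : G) (A B : ℕ), A ≠ 0 ∧ B ≠ 0 ∧ a = g ^ A ∧ b = g ^ B ∧ g ≠ 1 ∧
      ∀ e, orderOf g ∣ e * A → orderOf g ∣ e * B → orderOf g ∣ e := by
  let H := Subgroup.closure {a, b}
  obtain ⟨⟨g, hgH⟩, hg⟩ := IsCyclic.exists_generator (α := H)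
  have hpow : ∀ x ∈ H, ∃ A, A ≠ 0 ∧ x = g ^ A := fun x hx => by
    obtain ⟨i, hi⟩ := mem_powers_iff_mem_zpowers.2 (hg ⟨x, hx⟩)
    have hgi : g ^ i = x := congrArg Subtype.val hi
    refine ⟨i + orderOf g, ?_, by rw [pow_add, pow_orderOf_eq_one, mul_one, hgi]⟩
    exact (Nat.add_pos_right _ (orderOf_pos g)).ne'
  obtain ⟨A, hA, ha⟩ := hpow a (Subgroup.subset_closure (by simp))
  obtain ⟨B, hB, hb⟩ := hpow b (Subgroup.subset_closure (by simp))
  refine ⟨g, A, B, hA, hB, ha, hb, ?_, fun e heA heB => ?_⟩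
  · rintro rfl
    simp [ha, hb] at hab
  · have hker : H ≤ (powMonoidHom e : G →* G).ker := by
      rw [Subgroup.closure_le]
      rintro x (rfl | rfl)
      · simpa [MonoidHom.mem_ker, ha, ← pow_mul, mul_comm] using orderOf_dvd_iff_pow_eq_one.1 heA
      · simpa [MonoidHom.mem_ker, hb, ← pow_mul, mul_comm] using orderOf_dvd_iff_pow_eq_one.1 heB
    exact orderOf_dvd_of_pow_eq_one (hker hgH)

theorem isCyclic_mulChar_complex (K : Type*) [Field K] [Finite K] : IsCyclic (MulChar K ℂ) := by
  classical
  have := Fintype.ofFinite K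
  obtain ⟨φ⟩ := MulChar.mulEquiv_units K ℂ
  exact isCyclic_of_surjective φ.symm φ.symm.surjective

end Characters

section KummerSums

theorem card_eq_card_pow_sq {K L : Type*} [Field K] [Fintype K] [Field L] [Fintype L]
    [Algebra K L] {m : ℕ} (hm : Module.finrank K L = 2 * m) :
    Fintype.card L = (Fintype.card K ^ m) ^ 2 := by
  rw [Module.card_eq_pow_finrank (K := K) (V := L), hm, ← pow_mul, mul_comm]

theorem geom_sum_mul_eq_of_mul_eq_sub_one {Q d e w m : ℕ} (hd : 0 < d) (hQ : 0 < Q)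
    (he : d * e = Q - 1) (hw : Q ^ m = d * w + 1) :
    (∑ i ∈ Finset.range (2 * m), Q ^ i) * e = w * (Q ^ m + 1) := by
  have hsq : Q ^ (2 * m) = (d * w + 1) ^ 2 := by rw [mul_comm, pow_mul, hw]
  have hgeom := geom_sum_mul_add (Q - 1) (2 * m)
  rw [Nat.sub_add_cancel (by lia : 1 ≤ Q), hsq, ← he] at hgeom
  refine Nat.eq_of_mul_eq_mul_left hd ?_
  rw [hw]
  nlinarith

variable {K L : Type*} [Field K] [Fintype K] [Field L] [Fintype L] [Algebra K L]

open Classical in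
theorem card_filter_mulChar_norm_eval_eq_le {m : ℕ} (hm : Module.finrank K L = 2 * m)
    {ρ : MulChar K ℂ} {w D : ℕ} (hr : Fintype.card K ^ m = orderOf ρ * w + 1)
    {G : L[X]} (hG0 : G ≠ 0) (hG : CoprimeMultiplicities (orderOf ρ) G) (hD : G.natDegree ≤ D)
    (hw : D * (orderOf ρ * D + 3 * orderOf ρ + 2) + D + 3 < w) (ζ : ℂ) :
    orderOf ρ * (Finset.univ.filter fun z : L =>
        G.eval z ≠ 0 ∧ ρ (Algebra.norm K (G.eval z)) = ζ).card
      ≤ (Fintype.card K ^ m) ^ 2 + 2 * orderOf ρ * (D + 1) * Fintype.card K ^ m := by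
  obtain ⟨p, hp⟩ := CharP.exists K
  have : Fact p.Prime := ⟨CharP.char_is_prime K p⟩
  have : CharP L p := charP_of_injective_algebraMap (algebraMap K L).injective p
  obtain ⟨l, -, hl⟩ := FiniteField.card K p
  obtain ⟨e, he⟩ : orderOf ρ ∣ Fintype.card K - 1 := MulChar.orderOf_dvd_card_sub_one _ ρ
  have hd : 0 < orderOf ρ := orderOf_pos ρ
  have hnorm : ∀ y : L, algebraMap K L (Algebra.norm K y) ^ e
      = y ^ (w * (Fintype.card K ^ m + 1)) := fun y => by
    rw [FiniteField.algebraMap_norm_eq_pow_sum, ← pow_mul, hm, Nat.card_eq_fintype_card,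
      geom_sum_mul_eq_of_mul_eq_sub_one hd Fintype.card_pos he.symm hr]
  rcases Finset.eq_empty_or_nonempty (Finset.univ.filter fun z : L =>
    G.eval z ≠ 0 ∧ ρ (Algebra.norm K (G.eval z)) = ζ) with hempty | ⟨z₀, hz₀⟩
  · simp [hempty]
  obtain ⟨-, hz₀0, hz₀ζ⟩ := Finset.mem_filter.1 hz₀
  refine le_trans (Nat.mul_le_mul_left _ (Finset.card_le_card fun z hz => ?_))
    (card_filter_pow_eq_le (m := l * m) (by rw [hl, pow_mul]) (card_eq_card_pow_sq hm) hd hr hG0 hG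
      hD hw (G.eval z₀ ^ (w * (Fintype.card K ^ m + 1))))
  obtain ⟨-, hz0, hzζ⟩ := Finset.mem_filter.1 hz
  refine Finset.mem_filter.2 ⟨Finset.mem_univ _, hz0, ?_⟩
  have hpow := pow_eq_pow_of_mulChar_apply_eq he.symm (Algebra.norm_ne_zero_iff.2 hz0)
    (Algebra.norm_ne_zero_iff.2 hz₀0) (hzζ.trans hz₀ζ.symm)
  simpa only [hnorm, map_pow] using congrArg (algebraMap K L) hpow

theorem card_sub_natDegree_le_card_filter_eval_ne_zero [DecidableEq L] {G : L[X]} (hG0 : G ≠ 0) :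
    Fintype.card L ≤ (Finset.univ.filter fun z : L => G.eval z ≠ 0).card + G.natDegree := by
  rw [← Finset.card_univ, ← Finset.card_filter_add_card_filter_not (fun z : L => G.eval z ≠ 0)]
  refine Nat.add_le_add_left (le_trans (Finset.card_le_card (t := G.roots.toFinset) fun z hz => ?_)
    ((Multiset.toFinset_card_le _).trans (card_roots' G))) _
  rw [Multiset.mem_toFinset, mem_roots hG0]
  simpa using hz

theorem norm_sum_mulChar_norm_eval_le_of_large {m : ℕ} (hm : Module.finrank K L = 2 * m)
    {ρ : MulChar K ℂ} (hρ : ρ ≠ 1) {w D : ℕ} (hr : Fintype.card K ^ m = orderOf ρ * w + 1)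
    {G : L[X]} (hG0 : G ≠ 0) (hG : CoprimeMultiplicities (orderOf ρ) G) (hD : G.natDegree ≤ D)
    (hw : D * (orderOf ρ * D + 3 * orderOf ρ + 2) + D + 3 < w) :
    ‖∑ z : L, ρ (Algebra.norm K (G.eval z))‖
      ≤ (2 * orderOf ρ * (D + 1) + D : ℕ) * (Fintype.card K : ℝ) ^ m := by
  classical
  set s := Finset.univ.filter fun z : L => G.eval z ≠ 0
  have hd : 1 < orderOf ρ :=
    (Nat.one_lt_iff_ne_zero_and_ne_one).2 ⟨(orderOf_pos ρ).ne', by rwa [Ne, orderOf_eq_one_iff]⟩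
  have hsupp : ∑ z : L, ρ (Algebra.norm K (G.eval z)) = ∑ z ∈ s, ρ (Algebra.norm K (G.eval z)) := by
    refine (Finset.sum_subset (Finset.subset_univ s) fun z _ hz => ?_).symm
    have hz0 : G.eval z = 0 := by simpa [s] using hz
    rw [hz0, Algebra.norm_zero, MulChar.map_zero]
  have hroot : ∀ z ∈ s, ρ (Algebra.norm K (G.eval z)) ^ orderOf ρ = 1 := fun z hz => by
    have hne : Algebra.norm K (G.eval z) ≠ 0 :=
      Algebra.norm_ne_zero_iff.2 (Finset.mem_filter.1 hz).2
    rw [← MulChar.pow_apply' _ (orderOf_pos ρ).ne', pow_orderOf_eq_one,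
      MulChar.one_apply (isUnit_iff_ne_zero.2 hne)]
  have hfiber := norm_sum_le_of_card_fiber_le hd hroot
    (T := ((Fintype.card K : ℝ) ^ m) ^ 2 + 2 * orderOf ρ * (D + 1) * (Fintype.card K : ℝ) ^ m)
    fun ζ _ => by
      rw [Finset.filter_filter]
      exact_mod_cast card_filter_mulChar_norm_eval_eq_le hm hr hG0 hG hD hw ζ
  have hscard : ((Fintype.card K : ℝ) ^ m) ^ 2 ≤ s.card + D := by
    have := card_eq_card_pow_sq hm ▸ card_sub_natDegree_le_card_filter_eval_ne_zero hG0
    exact_mod_cast this.trans (Nat.add_le_add_left hD _)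
  have hone : (1 : ℝ) ≤ (Fintype.card K : ℝ) ^ m :=
    one_le_pow₀ (by exact_mod_cast Fintype.card_pos)
  rw [hsupp]
  push_cast
  nlinarith [mul_nonneg (Nat.cast_nonneg (α := ℝ) D) (sub_nonneg.2 hone)]

end KummerSums

theorem exists_norm_sum_mulChar_norm_eval_le {K : Type u} [Field K] [Fintype K] {ρ : MulChar K ℂ}
    (hρ : ρ ≠ 1) (D : ℕ) :
    ∃ C : ℝ, ∀ (L : Type v) [Field L] [Fintype L] [Algebra K L] (m : ℕ),
      Module.finrank K L = 2 * m → ∀ G : L[X], G ≠ 0 → CoprimeMultiplicities (orderOf ρ) G →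
        G.natDegree ≤ D →
          ‖∑ z : L, ρ (Algebra.norm K (G.eval z))‖ ≤ C * (Fintype.card K : ℝ) ^ m := by
  set d := orderOf ρ
  set w₀ := D * (d * D + 3 * d + 2) + D + 3
  refine ⟨((2 * d * (D + 1) + D : ℕ) : ℝ) + (d * w₀ + 1 : ℕ), fun L _ _ _ m hm G hG0 hG hD => ?_⟩
  have hpos : 0 < Fintype.card K ^ m := pow_pos Fintype.card_pos m
  obtain ⟨w, hw⟩ : d ∣ Fintype.card K ^ m - 1 :=
    (MulChar.orderOf_dvd_card_sub_one _ ρ).trans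
      (by simpa using Nat.sub_dvd_pow_sub_pow (Fintype.card K) 1 m)
  have hr : Fintype.card K ^ m = d * w + 1 := by lia
  rw [add_mul]
  by_cases hlarge : w₀ < w
  · exact (norm_sum_mulChar_norm_eval_le_of_large hm hρ hr hG0 hG hD hlarge).trans
      (le_add_of_nonneg_right (by positivity))
  · have htriv : ‖∑ z : L, ρ (Algebra.norm K (G.eval z))‖ ≤ Fintype.card L := by
      simpa using norm_sum_le_of_le Finset.univ fun z _ =>
          norm_mulChar_apply_le_one ρ (Algebra.norm K (G.eval z))
    have hsmall : Fintype.card K ^ m ≤ d * w₀ + 1 :=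
      hr.trans_le (by gcongr; exact not_lt.1 hlarge)
    refine htriv.trans (le_add_of_nonneg_of_le (by positivity) ?_)
    rw [card_eq_card_pow_sq hm, pow_two]
    exact_mod_cast Nat.mul_le_mul_right _ hsmall

section MixedCharacterSums

/-- The mixed character sum `∑ χA(N x) χB(N (x² + 1)) ψ(Tr x)` over an extension `L` of `K`, where
`N` and `Tr` are the norm and the trace of `L` over `K`. -/
noncomputable def mixedCharSum (K L : Type*) [Field K] [Field L] [Fintype L] [Algebra K L]
    (χA χB : MulChar K ℂ) (ψ : AddChar K ℂ) : ℂ :=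
  ∑ x : L, χA (Algebra.norm K x) * χB (Algebra.norm K (x ^ 2 + 1)) * ψ (Algebra.trace K L x)

theorem mixedCharSum_eq_sum_shift {K L : Type*} [Field K] [Fintype K] [Field L] [Fintype L]
    [Algebra K L] (χA χB : MulChar K ℂ) (ψ : AddChar K ℂ) (z : L) :
    mixedCharSum K L χA χB ψ = ∑ x : L, χA (Algebra.norm K (z ^ Fintype.card K - z + x)) *
      χB (Algebra.norm K ((z ^ Fintype.card K - z + x) ^ 2 + 1)) * ψ (Algebra.trace K L x) := by
  have htrace : Algebra.trace K L (z ^ Fintype.card K) = Algebra.trace K L z := by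
    simpa [FiniteField.coe_frobeniusAlgEquivOfAlgebraic] using
      Algebra.trace_eq_of_algEquiv (FiniteField.frobeniusAlgEquivOfAlgebraic K L) z
  rw [mixedCharSum, ← Equiv.sum_comp (Equiv.addLeft (z ^ Fintype.card K - z))]
  simp only [Equiv.coe_addLeft, map_add (Algebra.trace K L), map_sub, htrace, sub_self, zero_add]

-- Averaging over the trace-preserving shifts `x ↦ x + z ^ q - z` removes the additive character.
theorem norm_mixedCharSum_le_of_forall_shift {K L : Type*} [Field K] [Fintype K] [Field L]
    [Fintype L] [Algebra K L] {χA χB : MulChar K ℂ} {T : ℝ}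
    (hT : ∀ x : L, ‖∑ z : L, χA (Algebra.norm K (z ^ Fintype.card K - z + x)) *
      χB (Algebra.norm K ((z ^ Fintype.card K - z + x) ^ 2 + 1))‖ ≤ T) (ψ : AddChar K ℂ) :
    ‖mixedCharSum K L χA χB ψ‖ ≤ T := by
  have hsum : (Fintype.card L : ℂ) * mixedCharSum K L χA χB ψ = ∑ x : L,
      (∑ z : L, χA (Algebra.norm K (z ^ Fintype.card K - z + x)) *
        χB (Algebra.norm K ((z ^ Fintype.card K - z + x) ^ 2 + 1))) * ψ (Algebra.trace K L x) := by
    simp only [Finset.sum_mul]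
    rw [Finset.sum_comm, ← Finset.sum_congr rfl fun z _ => mixedCharSum_eq_sum_shift χA χB ψ z]
    simp
  refine le_of_mul_le_mul_left (a := (Fintype.card L : ℝ)) ?_ (by exact_mod_cast Fintype.card_pos)
  calc (Fintype.card L : ℝ) * ‖mixedCharSum K L χA χB ψ‖
      = ‖(Fintype.card L : ℂ) * mixedCharSum K L χA χB ψ‖ := by
        rw [norm_mul, Complex.norm_natCast]
    _ ≤ ∑ _x : L, T := by
        rw [hsum]
        refine norm_sum_le_of_le _ fun x _ => ?_
        rw [norm_mul, AddChar.norm_apply, mul_one]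
        exact hT x
    _ = Fintype.card L * T := by simp

theorem natDegree_X_pow_sub_X_add_C {k : Type*} [Field k] {Q : ℕ} (hQ : 1 < Q) (c : k) :
    (X ^ Q - X + C c : k[X]).natDegree = Q := by
  rw [natDegree_add_C, FiniteField.X_pow_card_sub_X_natDegree_eq k hQ]

theorem exists_norm_mixedCharSum_le {K : Type u} [Field K] [Fintype K] {χA χB : MulChar K ℂ}
    (hχ : χA ≠ 1 ∨ χB ≠ 1) (ψ : AddChar K ℂ) :
    ∃ C : ℝ, ∀ (L : Type v) [Field L] [Fintype L] [Algebra K L] (m : ℕ),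
      Module.finrank K L = 2 * m →
        ‖mixedCharSum K L χA χB ψ‖ ≤ C * (Fintype.card K : ℝ) ^ m := by
  have := isCyclic_mulChar_complex K
  obtain ⟨ρ, A, B, hA, hB, rfl, rfl, hρ, hAB⟩ := exists_pow_eq_and_pow_eq hχ
  obtain ⟨C₀, hC₀⟩ := exists_norm_sum_mulChar_norm_eval_le.{u, v} hρ ((A + 2 * B) * Fintype.card K)
  refine ⟨C₀, fun L _ _ _ m hm => norm_mixedCharSum_le_of_forall_shift (fun x => ?_) ψ⟩
  set Z : L[X] := X ^ Fintype.card K - X + C x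
  have hZdeg : Z.natDegree = Fintype.card K :=
    natDegree_X_pow_sub_X_add_C Fintype.one_lt_card x
  have hZ : derivative Z = -1 := by
    have hcard : (Fintype.card K : L) = 0 := by
      rw [← map_natCast (algebraMap K L), FiniteField.cast_card_eq_zero, map_zero]
    simp [Z, derivative_X_pow, hcard]
  have hd2 : (2 : L) = 0 → (orderOf ρ).Coprime 2 := fun h2 => by
    have h2K : (2 : K) = 0 := (algebraMap K L).injective (by rwa [map_ofNat, map_zero])
    have : CharP K 2 := CharTwo.of_one_ne_zero_of_two_eq_zero one_ne_zero h2K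
    have hodd : ¬ 2 ∣ Fintype.card K - 1 := by
      have := FiniteField.even_card_of_char_two (ringChar.eq K 2)
      have := Fintype.card_pos (α := K)
      lia
    exact ((Nat.prime_two.coprime_iff_not_dvd).2 fun h =>
      hodd (h.trans (MulChar.orderOf_dvd_card_sub_one _ ρ))).symm
  have hdegree : (Z ^ A * (Z ^ 2 + 1) ^ B).natDegree ≤ (A + 2 * B) * Fintype.card K := by
    refine natDegree_mul_le.trans ?_
    rw [natDegree_pow, natDegree_pow, ← C_1, natDegree_add_C (p := Z ^ 2), natDegree_pow, hZdeg]
    exact le_of_eq (by ring)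
  have hZdeg0 : Z.natDegree ≠ 0 := hZdeg ▸ Fintype.card_ne_zero
  have hne : Z ^ A * (Z ^ 2 + 1) ^ B ≠ 0 :=
    mul_ne_zero (pow_ne_zero _ (separable_of_derivative_eq_neg_one hZ).ne_zero)
      (pow_ne_zero _ (sq_add_one_ne_zero_of_natDegree_ne_zero hZdeg0))
  refine le_of_eq_of_le ?_ (hC₀ L m hm _ hne
    (coprimeMultiplicities_pow_mul_sq_add_one_pow hZ hZdeg0 hd2 hAB) hdegree)
  refine congrArg norm (Finset.sum_congr rfl fun z _ => ?_)
  simp [Z, MulChar.pow_apply' _ hA, MulChar.pow_apply' _ hB]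

end MixedCharacterSums

section NormModSqAddOne

variable {K : Type*} [Field K]

theorem monic_X_sq_add_one : (X ^ 2 + 1 : K[X]).Monic := by
  simpa only [map_one] using monic_X_pow_add_C (1 : K) two_ne_zero

theorem natDegree_X_sq_add_one : (X ^ 2 + 1 : K[X]).natDegree = 2 := by
  simpa only [map_one] using natDegree_X_pow_add_C (n := 2) (r := (1 : K))

theorem modByMonic_X_sq_add_one_eq {h g : K[X]} {a b : K}
    (e : h = (X ^ 2 + 1) * g + (C b * X + C a)) : h %ₘ (X ^ 2 + 1) = C b * X + C a := by
  refine (div_modByMonic_unique g _ monic_X_sq_add_one ⟨by rw [e]; ring, ?_⟩).2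
  rw [degree_eq_natDegree monic_X_sq_add_one.ne_zero, natDegree_X_sq_add_one]
  exact degree_linear_le.trans_lt (by norm_num)

theorem exists_eq_X_sq_add_one_mul_add (h : K[X]) :
    ∃ (g : K[X]) (a b : K), h = (X ^ 2 + 1) * g + (C b * X + C a) := by
  have hlt := natDegree_modByMonic_lt h monic_X_sq_add_one fun h1 => by
    simpa only [natDegree_X_sq_add_one, natDegree_one, OfNat.ofNat_ne_zero]
      using congrArg natDegree h1
  rw [natDegree_X_sq_add_one] at hlt
  refine ⟨h /ₘ (X ^ 2 + 1), (h %ₘ (X ^ 2 + 1)).coeff 0, (h %ₘ (X ^ 2 + 1)).coeff 1, ?_⟩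
  rw [← eq_X_add_C_of_natDegree_le_one (Nat.lt_succ_iff.1 hlt), add_comm, modByMonic_add_div]

/-- The norm from `K[X] / (X² + 1)` to `K` of the class of `h`, computed on the representative
`a + b X` as `a² + b²`. -/
noncomputable def normModSqAddOne (h : K[X]) : K :=
  (h %ₘ (X ^ 2 + 1)).coeff 0 ^ 2 + (h %ₘ (X ^ 2 + 1)).coeff 1 ^ 2

theorem normModSqAddOne_eq {h g : K[X]} {a b : K}
    (e : h = (X ^ 2 + 1) * g + (C b * X + C a)) : normModSqAddOne h = a ^ 2 + b ^ 2 := by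
  simp [normModSqAddOne, modByMonic_X_sq_add_one_eq e]

theorem normModSqAddOne_one : normModSqAddOne (1 : K[X]) = 1 := by
  rw [normModSqAddOne_eq (g := 0) (a := 1) (b := 0) (by simp)]
  simp

theorem normModSqAddOne_mul (h k : K[X]) :
    normModSqAddOne (h * k) = normModSqAddOne h * normModSqAddOne k := by
  obtain ⟨g, a, b, e⟩ := exists_eq_X_sq_add_one_mul_add h
  obtain ⟨g', a', b', e'⟩ := exists_eq_X_sq_add_one_mul_add k
  have emul : h * k = (X ^ 2 + 1) * ((X ^ 2 + 1) * g * g' + g * (C b' * X + C a') +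
      g' * (C b * X + C a) + C b * C b') + (C (a * b' + b * a') * X + C (a * a' - b * b')) := by
    rw [e, e']
    simp only [map_add, map_sub, map_mul]
    ring
  rw [normModSqAddOne_eq e, normModSqAddOne_eq e', normModSqAddOne_eq emul]
  ring

theorem normModSqAddOne_add_mul (h d : K[X]) :
    normModSqAddOne (h + (X ^ 2 + 1) * d) = normModSqAddOne h := by
  obtain ⟨g, a, b, e⟩ := exists_eq_X_sq_add_one_mul_add h
  rw [normModSqAddOne_eq e,
    normModSqAddOne_eq (g := g + d) (a := a) (b := b) (by rw [e]; ring)]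

theorem algebraMap_normModSqAddOne {R : Type*} [CommRing R] [Algebra K R] {i : R}
    (hi : i ^ 2 = -1) (h : K[X]) :
    algebraMap K R (normModSqAddOne h) = aeval i h * aeval (-i) h := by
  obtain ⟨g, a, b, e⟩ := exists_eq_X_sq_add_one_mul_add h
  have hpos : aeval i h = algebraMap K R b * i + algebraMap K R a := by simp [e, hi]
  have hneg : aeval (-i) h = -algebraMap K R b * i + algebraMap K R a := by simp [e, hi]
  rw [normModSqAddOne_eq e, hpos, hneg, map_add, map_pow, map_pow]
  linear_combination (algebraMap K R b) ^ 2 * hi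

theorem aeval_matrixCharpoly {R n : Type*} [CommRing R] [Algebra K R] [Fintype n]
    [DecidableEq n] (M : Matrix n n K) (r : R) :
    aeval r M.charpoly = (r • (1 : Matrix n n R) - (algebraMap K R).mapMatrix M).det := by
  rw [aeval_def, ← eval_map, ← Matrix.charpoly_map, Matrix.eval_charpoly,
    Matrix.smul_one_eq_diagonal]
  rfl

theorem det_sq_add_one {n : Type*} [Fintype n] [DecidableEq n] (M : Matrix n n K) :
    (M ^ 2 + 1).det = normModSqAddOne M.charpoly := by
  obtain ⟨i, hi⟩ := IsAlgClosed.exists_pow_nat_eq (-1 : AlgebraicClosure K) two_pos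
  apply (algebraMap K (AlgebraicClosure K)).injective
  rw [algebraMap_normModSqAddOne hi, aeval_matrixCharpoly, aeval_matrixCharpoly,
    ← Matrix.det_mul, RingHom.map_det]
  congr 1
  simp only [map_add, map_pow, map_one]
  generalize (algebraMap K (AlgebraicClosure K)).mapMatrix M = N
  simp only [sub_mul, mul_sub, smul_mul_assoc, one_mul, mul_smul_comm, mul_one, neg_smul, mul_neg,
    smul_sub, smul_smul, ← sq, hi, one_smul]
  abel

theorem norm_gen_sq_add_one {S : Type*} [CommRing S] [Algebra K S] (pb : PowerBasis K S) :
    Algebra.norm K (pb.gen ^ 2 + 1) = normModSqAddOne (minpoly K pb.gen) := by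
  rw [Algebra.norm_eq_matrix_det pb.basis, ← charpoly_leftMulMatrix, ← det_sq_add_one, map_add,
    map_pow, map_one]

end NormModSqAddOne

section CharWeight

variable {K : Type*} [Field K] (χA χB : MulChar K ℂ) (ψ : AddChar K ℂ)

/-- The completely multiplicative weight on monic polynomials `h = ∏ (X - xᵢ)` whose value is
`χA (∏ xᵢ) χB (∏ (xᵢ² + 1)) ψ (∑ xᵢ)`; its Dirichlet series is the L-function of the character
sum `∑ χA x χB (x² + 1) ψ x`. -/
noncomputable def charWeight (h : K[X]) : ℂ :=
  χA ((-1) ^ h.natDegree * h.coeff 0) * χB (normModSqAddOne h) * ψ (-h.nextCoeff)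

theorem charWeight_one : charWeight χA χB ψ 1 = 1 := by
  simp [charWeight, normModSqAddOne_one, nextCoeff]

theorem charWeight_mul {h k : K[X]} (hh : h.Monic) (hk : k.Monic) :
    charWeight χA χB ψ (h * k) = charWeight χA χB ψ h * charWeight χA χB ψ k := by
  have e : (-1 : K) ^ (h.natDegree + k.natDegree) * (h.coeff 0 * k.coeff 0) =
    ((-1) ^ h.natDegree * h.coeff 0) * ((-1) ^ k.natDegree * k.coeff 0) := by ring
  simp only [charWeight, hh.natDegree_mul hk, hh.nextCoeff_mul hk, normModSqAddOne_mul,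
    mul_coeff_zero, neg_add, AddChar.map_add_eq_mul, e, map_mul]
  ring

theorem charWeight_pow {h : K[X]} (hh : h.Monic) (n : ℕ) :
    charWeight χA χB ψ (h ^ n) = charWeight χA χB ψ h ^ n := by
  induction n with
  | zero => simp only [pow_zero, charWeight_one]
  | succ n ih => rw [pow_succ, charWeight_mul _ _ _ (hh.pow n) hh, ih, pow_succ]

/-- The power of the minimal polynomial of `x` that equals its characteristic polynomial
over `K`. -/
noncomputable def minpolyPow (K : Type*) {L : Type*} [Field K] [Field L] [Algebra K L] (x : L) :
    K[X] :=
  minpoly K x ^ Module.finrank (IntermediateField.adjoin K {x}) L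

variable {L : Type*} [Field L] [Algebra K L] [FiniteDimensional K L]

theorem monic_minpolyPow (x : L) : (minpolyPow K x).Monic :=
  (minpoly.monic (Algebra.IsIntegral.isIntegral x)).pow _

theorem finrank_adjoin_mul_natDegree_minpoly (x : L) :
    Module.finrank (IntermediateField.adjoin K {x}) L * (minpoly K x).natDegree =
      Module.finrank K L := by
  rw [← IntermediateField.adjoin.finrank (Algebra.IsIntegral.isIntegral x), mul_comm,
    Module.finrank_mul_finrank]

theorem natDegree_minpolyPow (x : L) :
    (minpolyPow K x).natDegree = Module.finrank K L := by
  rw [minpolyPow, natDegree_pow, finrank_adjoin_mul_natDegree_minpoly]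

theorem charWeight_minpolyPow [Algebra.IsSeparable K L] (x : L) :
    charWeight χA χB ψ (minpolyPow K x) = χA (Algebra.norm K x) *
      χB (Algebra.norm K (x ^ 2 + 1)) * ψ (Algebra.trace K L x) := by
  have hx : IsIntegral K x := Algebra.IsIntegral.isIntegral x
  rw [minpolyPow, charWeight_pow _ _ _ (minpoly.monic hx)]
  set k := Module.finrank (IntermediateField.adjoin K {x}) L
  let pb := IntermediateField.adjoin.powerBasis hx
  have hgen : pb.gen = IntermediateField.AdjoinSimple.gen K x := rfl
  have hmin : minpoly K pb.gen = minpoly K x := IntermediateField.minpoly_gen K x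
  have hnorm :
      Algebra.norm K x = ((-1) ^ (minpoly K x).natDegree * (minpoly K x).coeff 0) ^ k := by
    rw [Algebra.norm_eq_norm_adjoin, ← hgen, Algebra.PowerBasis.norm_gen_eq_coeff_zero_minpoly,
      ← pb.natDegree_minpoly, hmin]
  have hnormSq : Algebra.norm K (x ^ 2 + 1) = normModSqAddOne (minpoly K x) ^ k := by
    rw [← hmin, ← norm_gen_sq_add_one, ← map_pow, ← Algebra.norm_algebraMap, Algebra.norm_norm,
      hgen]
    simp
  have htrace : Algebra.trace K L x = k • (-(minpoly K x).nextCoeff) := by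
    rw [trace_eq_trace_adjoin, trace_adjoinSimpleGen hx]
  rw [hnorm, hnormSq, htrace, charWeight, AddChar.map_nsmul_eq_pow, map_pow, map_pow, mul_pow,
    mul_pow]

theorem mixedCharSum_eq_sum_charWeight [Fintype L] :
    mixedCharSum K L χA χB ψ = ∑ x : L, charWeight χA χB ψ (minpolyPow K x) :=
  have : Finite K := Finite.of_injective _ (algebraMap K L).injective
  Finset.sum_congr rfl fun x _ => (charWeight_minpolyPow χA χB ψ x).symm

end CharWeight

section EulerProduct

theorem card_filter_dvd_succ_and_succ_div_le {n d m : ℕ} (hd : 0 < d) (h : d * m ≤ n) :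
    ((Finset.range n).filter fun j => d ∣ j + 1 ∧ (j + 1) / d ≤ m).card = m := by
  refine Eq.trans (congrArg Finset.card ?_)
    ((Nat.card_multiples (d * m) d).trans (Nat.mul_div_cancel_left m hd))
  ext j
  simp only [Finset.mem_filter, Finset.mem_range]
  constructor
  · rintro ⟨-, ⟨c, hc⟩, hle⟩
    rw [hc, Nat.mul_div_cancel_left _ hd] at hle
    exact ⟨by rw [← Nat.succ_le_iff, Nat.succ_eq_add_one, hc]; gcongr, c, hc⟩
  · rintro ⟨hlt, hdvd⟩
    exact ⟨by lia, hdvd, Nat.div_le_of_le_mul hlt⟩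

open Classical in
theorem card_filter_minpoly_eq {K L : Type*} [Field K] [Field L] [Fintype L] [Algebra K L]
    {P : K[X]} (hP : Irreducible P) (hm : P.Monic) :
    (Finset.univ.filter fun x : L => minpoly K x = P).card =
      if P.natDegree ∣ Module.finrank K L then P.natDegree else 0 := by
  have : Finite K := Finite.of_injective _ (algebraMap K L).injective
  split_ifs with hd
  · have hdvd : P ∣ X ^ Fintype.card L - X := by
      rw [← Nat.card_eq_fintype_card, Module.natCard_eq_pow_finrank (K := K) (V := L)]
      exact hP.natDegree_dvd_iff_dvd_X_pow_card_pow_sub_X.1 hd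
    have hsplits : (P.map (algebraMap K L)).Splits :=
      Splits.of_dvd (IsSplittingField.splits L (X ^ Fintype.card L - X : K[X]))
        ((Polynomial.map_ne_zero_iff (algebraMap K L).injective).2
          (FiniteField.X_pow_card_sub_X_ne_zero _ Fintype.one_lt_card))
        (map_dvd (mapRingHom (algebraMap K L)) hdvd)
    rw [← card_rootSet_eq_natDegree (PerfectField.separable_of_irreducible hP) hsplits,
      Fintype.card_subtype]
    congr 1
    ext x
    simp only [Finset.mem_filter, Finset.mem_univ, true_and, mem_rootSet]
    refine ⟨?_, fun h => (minpoly.eq_of_irreducible_of_monic hP h.2 hm).symm⟩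
    rintro rfl
    exact ⟨hP.ne_zero, minpoly.aeval _ _⟩
  · rw [Finset.card_eq_zero, Finset.filter_eq_empty_iff]
    rintro x - rfl
    exact hd (minpoly.degree_dvd (Algebra.IsIntegral.isIntegral x))

open UniqueFactorizationMonoid

variable {K : Type*} [Field K]

open Classical in
theorem pow_dvd_iff_le_count_normalizedFactors {h P : K[X]} (h0 : h ≠ 0) (hP : Irreducible P)
    (hPm : P.Monic) {k : ℕ} : P ^ k ∣ h ↔ k ≤ (normalizedFactors h).count P := by
  rw [pow_dvd_iff_le_emultiplicity, emultiplicity_eq_count_normalizedFactors hP h0,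
    hPm.normalize_eq_self, Nat.cast_le]

open Classical in
theorem monic_of_mem_normalizedFactors {h P : K[X]} (hP : P ∈ normalizedFactors h) : P.Monic := by
  rw [← normalize_normalized_factor P hP]
  exact monic_normalize (irreducible_of_normalized_factor P hP).ne_zero

open Classical in
theorem sum_natDegree_mul_count_normalizedFactors {h : K[X]} (hh : h.Monic) :
    ∑ P ∈ (normalizedFactors h).toFinset, P.natDegree * (normalizedFactors h).count P =
      h.natDegree := by
  conv_rhs => rw [← hh.normalize_eq_self, ← prod_normalizedFactors_eq hh.ne_zero]
  rw [natDegree_multiset_prod_of_monic _ fun P => monic_of_mem_normalizedFactors,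
    Finset.sum_multiset_map_count]
  simp only [smul_eq_mul, mul_comm]

open Classical in
theorem card_filter_minpoly_eq_and_minpolyPow_dvd {L : Type*} [Field L] [Fintype L] [Algebra K L]
    {h P : K[X]} (h0 : h ≠ 0) (hP : P ∈ normalizedFactors h) :
    (Finset.univ.filter fun x : L => minpolyPow K x ∣ h ∧ minpoly K x = P).card =
      if P.natDegree ∣ Module.finrank K L ∧
        Module.finrank K L / P.natDegree ≤ (normalizedFactors h).count P
      then P.natDegree else 0 := by
  have hPi := irreducible_of_normalized_factor P hP
  have hPm := monic_of_mem_normalizedFactors hP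
  have hiff : ∀ x : L, minpoly K x = P → (minpolyPow K x ∣ h ↔
      Module.finrank K L / P.natDegree ≤ (normalizedFactors h).count P) := fun x hx => by
    rw [minpolyPow, hx, pow_dvd_iff_le_count_normalizedFactors h0 hPi hPm,
      ← finrank_adjoin_mul_natDegree_minpoly (K := K) x, hx, Nat.mul_div_cancel _ hPi.natDegree_pos]
  by_cases hle : Module.finrank K L / P.natDegree ≤ (normalizedFactors h).count P
  · simp only [hle, and_true]
    rw [← card_filter_minpoly_eq hPi hPm]
    congr 1
    ext x
    simp only [Finset.mem_filter, Finset.mem_univ, true_and]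
    exact ⟨And.right, fun hx => ⟨(hiff x hx).2 hle, hx⟩⟩
  · simp only [hle, and_false, if_false]
    rw [Finset.card_eq_zero, Finset.filter_eq_empty_iff]
    exact fun x _ hx => hle ((hiff x hx.2).1 hx.1)

open Classical in
theorem card_filter_minpolyPow_dvd {L : Type*} [Field L] [Fintype L] [Algebra K L] {h : K[X]}
    (h0 : h ≠ 0) :
    (Finset.univ.filter fun x : L => minpolyPow K x ∣ h).card =
      ∑ P ∈ (normalizedFactors h).toFinset, if P.natDegree ∣ Module.finrank K L ∧
        Module.finrank K L / P.natDegree ≤ (normalizedFactors h).count P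
      then P.natDegree else 0 := by
  rw [Finset.card_eq_sum_card_fiberwise (f := fun x : L => minpoly K x)
    (t := (normalizedFactors h).toFinset)]
  · refine Finset.sum_congr rfl fun P hP => ?_
    rw [Finset.filter_filter,
      card_filter_minpoly_eq_and_minpolyPow_dvd h0 (Multiset.mem_toFinset.1 hP)]
  · intro x hx
    have hxi : IsIntegral K x := Algebra.IsIntegral.isIntegral x
    rw [Finset.mem_coe, Multiset.mem_toFinset, ← Multiset.one_le_count_iff_mem,
      ← pow_dvd_iff_le_count_normalizedFactors h0 (minpoly.irreducible hxi) (minpoly.monic hxi),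
      pow_one]
    exact (dvd_pow_self _ Module.finrank_pos.ne').trans (Finset.mem_filter.1 hx).2

variable (L : ℕ → Type*) [∀ j, Field (L j)] [∀ j, Fintype (L j)] [∀ j, Algebra K (L j)]

open Classical in
theorem sum_card_filter_minpolyPow_dvd (hL : ∀ j, Module.finrank K (L j) = j + 1) {h : K[X]}
    (hh : h.Monic) :
    ∑ j ∈ Finset.range h.natDegree,
      (Finset.univ.filter fun x : L j => minpolyPow K x ∣ h).card = h.natDegree := by
  simp only [card_filter_minpolyPow_dvd hh.ne_zero, hL]
  rw [Finset.sum_comm]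
  refine Eq.trans (Finset.sum_congr rfl fun P hP => ?_)
    (sum_natDegree_mul_count_normalizedFactors hh)
  have hPi := irreducible_of_normalized_factor P (Multiset.mem_toFinset.1 hP)
  rw [← Finset.sum_filter, Finset.sum_const, smul_eq_mul, mul_comm,
    card_filter_dvd_succ_and_succ_div_le hPi.natDegree_pos]
  rw [← sum_natDegree_mul_count_normalizedFactors hh]
  exact Finset.single_le_sum (f := fun P : K[X] => P.natDegree * (normalizedFactors h).count P)
    (fun _ _ => Nat.zero_le _) hP

end EulerProduct

section LFunction

variable (K : Type*) [Field K] [Finite K]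

theorem finite_setOf_monic_natDegree_eq (n : ℕ) :
    {h : K[X] | h.Monic ∧ h.natDegree = n}.Finite :=
  Set.finite_coe_iff.1 (Finite.of_equiv _
    ((monicEquivDegreeLT n).trans (degreeLTEquiv K n).toEquiv).symm)

/-- The monic polynomials of degree `n` over a finite field. -/
noncomputable def monicOfDegree (n : ℕ) : Finset K[X] :=
  (finite_setOf_monic_natDegree_eq K n).toFinset

variable {K}

theorem mem_monicOfDegree {n : ℕ} {h : K[X]} :
    h ∈ monicOfDegree K n ↔ h.Monic ∧ h.natDegree = n :=
  Set.Finite.mem_toFinset _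

theorem monicOfDegree_zero : monicOfDegree K 0 = {1} := by
  ext h
  rw [mem_monicOfDegree, Finset.mem_singleton]
  exact ⟨fun hh => hh.1.natDegree_eq_zero.1 hh.2, by rintro rfl; simp⟩

open Classical in
theorem sum_monicOfDegree_filter_dvd {M : Type*} [AddCommMonoid M] (f : K[X] → M) {P : K[X]}
    (hP : P.Monic) {n : ℕ} (hn : P.natDegree ≤ n) :
    ∑ h ∈ (monicOfDegree K n).filter (P ∣ ·), f h =
      ∑ g ∈ monicOfDegree K (n - P.natDegree), f (P * g) := by
  symm
  refine Finset.sum_bij (fun g _ => P * g) (fun g hg => ?_)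
    (fun a _ b _ => mul_left_cancel₀ hP.ne_zero) (fun h hh => ?_) fun _ _ => rfl
  · obtain ⟨hm, hdeg⟩ := mem_monicOfDegree.1 hg
    rw [Finset.mem_filter, mem_monicOfDegree, hP.natDegree_mul hm]
    exact ⟨⟨hP.mul hm, by lia⟩, dvd_mul_right _ _⟩
  · rw [Finset.mem_filter, mem_monicOfDegree] at hh
    obtain ⟨⟨hm, hdeg⟩, g, rfl⟩ := hh
    have hg : g.Monic := hP.of_mul_monic_left hm
    rw [hP.natDegree_mul hg] at hdeg
    exact ⟨g, mem_monicOfDegree.2 ⟨hg, by lia⟩, rfl⟩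

variable (χA χB : MulChar K ℂ) (ψ : AddChar K ℂ)

/-- The `n`-th coefficient of the L-function of the character sum `∑ χA x χB (x² + 1) ψ x`. -/
noncomputable def lCoeff (n : ℕ) : ℂ :=
  ∑ h ∈ monicOfDegree K n, charWeight χA χB ψ h

theorem lCoeff_zero : lCoeff χA χB ψ 0 = 1 := by
  rw [lCoeff, monicOfDegree_zero, Finset.sum_singleton, charWeight_one]

-- The logarithmic derivative of the Euler product: count the pairs `(h, x)` where `h` is monic of
-- degree `n` and divisible by the characteristic polynomial of `x`, an element of degree `j + 1`.
open Classical in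
theorem mul_lCoeff_eq_sum (L : ℕ → Type*) [∀ j, Field (L j)] [∀ j, Fintype (L j)]
    [∀ j, Algebra K (L j)] (hL : ∀ j, Module.finrank K (L j) = j + 1) (n : ℕ) :
    (n : ℂ) * lCoeff χA χB ψ n =
      ∑ j ∈ Finset.range n, mixedCharSum K (L j) χA χB ψ * lCoeff χA χB ψ (n - 1 - j) := by
  have hcount : (n : ℂ) * lCoeff χA χB ψ n = ∑ h ∈ monicOfDegree K n, ∑ j ∈ Finset.range n,
      ∑ x : L j, if minpolyPow K x ∣ h then charWeight χA χB ψ h else 0 := by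
    rw [lCoeff, Finset.mul_sum]
    refine Finset.sum_congr rfl fun h hh => ?_
    obtain ⟨hm, rfl⟩ := mem_monicOfDegree.1 hh
    conv_lhs => rw [← sum_card_filter_minpolyPow_dvd L hL hm, Nat.cast_sum, Finset.sum_mul]
    simp only [← Finset.sum_filter, Finset.sum_const, nsmul_eq_mul]
  rw [hcount, Finset.sum_comm]
  refine Finset.sum_congr rfl fun j hj => ?_
  rw [Finset.sum_comm, mixedCharSum_eq_sum_charWeight, Finset.sum_mul]
  refine Finset.sum_congr rfl fun x _ => ?_
  have hdeg : (minpolyPow K x).natDegree = j + 1 := by rw [natDegree_minpolyPow, hL]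
  have hlt := Finset.mem_range.1 hj
  rw [← Finset.sum_filter, sum_monicOfDegree_filter_dvd _ (monic_minpolyPow x) (by lia), hdeg,
    show n - (j + 1) = n - 1 - j by lia, lCoeff, Finset.mul_sum]
  exact Finset.sum_congr rfl fun g hg =>
    charWeight_mul χA χB ψ (monic_minpolyPow x) (mem_monicOfDegree.1 hg).1

end LFunction

section TwistModSqAddOne

variable {K : Type*} [Field K]

theorem isCoprime_X_sq_add_one {u v : K} (huv : u ^ 2 + v ^ 2 ≠ 0) :
    IsCoprime (X ^ 2 + 1) (C v * X + C u : K[X]) := by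
  refine ⟨C ((u ^ 2 + v ^ 2)⁻¹ * v ^ 2), C (u ^ 2 + v ^ 2)⁻¹ * (C u - C v * X), ?_⟩
  have hone : C (u ^ 2 + v ^ 2)⁻¹ * (C u ^ 2 + C v ^ 2) = (1 : K[X]) := by
    rw [← C_pow, ← C_pow, ← C_add, ← C_mul, inv_mul_cancel₀ huv, C_1]
  rw [C_mul, C_pow]
  linear_combination hone

/-- The polynomial that differs from `h` in degrees at most `2`, has the same constant coefficient
and is congruent to `w * h` modulo `X² + 1`. -/
noncomputable def twistModSqAddOne (w h : K[X]) : K[X] :=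
  h + ((w * h - h) %ₘ (X ^ 2 + 1) - (X ^ 2 + 1) * C (((w * h - h) %ₘ (X ^ 2 + 1)).coeff 0))

theorem coeff_zero_twistModSqAddOne (w h : K[X]) :
    (twistModSqAddOne w h).coeff 0 = h.coeff 0 := by
  simp [twistModSqAddOne]

theorem exists_twistModSqAddOne_eq (w h : K[X]) :
    ∃ d, twistModSqAddOne w h = w * h + (X ^ 2 + 1) * d :=
  ⟨-((w * h - h) /ₘ (X ^ 2 + 1)) - C (((w * h - h) %ₘ (X ^ 2 + 1)).coeff 0), by
    rw [twistModSqAddOne]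
    linear_combination modByMonic_add_div (w * h - h) (X ^ 2 + 1)⟩

theorem normModSqAddOne_twistModSqAddOne (w h : K[X]) :
    normModSqAddOne (twistModSqAddOne w h) = normModSqAddOne w * normModSqAddOne h := by
  obtain ⟨d, hd⟩ := exists_twistModSqAddOne_eq w h
  rw [hd, normModSqAddOne_add_mul, normModSqAddOne_mul]

theorem twistModSqAddOne_injective {w : K[X]} (hw : IsCoprime (X ^ 2 + 1) w) :
    Function.Injective (twistModSqAddOne w) := by
  intro a b hab
  obtain ⟨d, hd⟩ := exists_twistModSqAddOne_eq w a
  obtain ⟨e, he⟩ := exists_twistModSqAddOne_eq w b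
  have hdvd : (X ^ 2 + 1) ∣ a - b := hw.dvd_of_dvd_mul_left
    ⟨e - d, by linear_combination hab - hd + he⟩
  have hmod : (w * a - a) %ₘ (X ^ 2 + 1) = (w * b - b) %ₘ (X ^ 2 + 1) := by
    rw [← sub_eq_zero, ← sub_modByMonic, modByMonic_eq_zero_iff_dvd monic_X_sq_add_one,
      show w * a - a - (w * b - b) = (w - 1) * (a - b) by ring]
    exact hdvd.mul_left _
  rw [twistModSqAddOne, twistModSqAddOne, hmod] at hab
  exact add_right_cancel hab

end TwistModSqAddOne

section Vanishing

variable {K : Type*} [Field K] [Finite K]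

theorem exists_sq_add_sq_eq (c : K) : ∃ u v : K, u ^ 2 + v ^ 2 = c := by
  have := Fintype.ofFinite K
  by_cases h2 : ringChar K = 2
  · obtain ⟨u, hu⟩ := FiniteField.isSquare_of_char_two h2 c
    exact ⟨u, 0, by rw [hu]; ring⟩
  · obtain ⟨u, v, huv⟩ := FiniteField.exists_root_sum_quadratic (f := (X ^ 2 : K[X]))
      (g := X ^ 2 - C c) (degree_X_pow 2) (degree_X_pow_sub_C two_pos c)
      (FiniteField.odd_card_of_char_ne_two h2)
    refine ⟨u, v, ?_⟩
    simp only [eval_pow, eval_X, eval_sub, eval_C] at huv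
    linear_combination huv

theorem add_mem_monicOfDegree {n : ℕ} {h d : K[X]} (hh : h ∈ monicOfDegree K n)
    (hd : d.degree < n) : h + d ∈ monicOfDegree K n := by
  obtain ⟨hm, hn⟩ := mem_monicOfDegree.1 hh
  have hlt : d.degree < h.degree := by rwa [degree_eq_natDegree hm.ne_zero, hn]
  exact mem_monicOfDegree.2
    ⟨hm.add_of_left hlt, by rw [natDegree_add_eq_left_of_degree_lt hlt, hn]⟩

variable (χA χB : MulChar K ℂ) (ψ : AddChar K ℂ)

theorem charWeight_eq_of_mem_monicOfDegree {n : ℕ} (hn : 0 < n) {h : K[X]}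
    (hh : h ∈ monicOfDegree K n) : charWeight χA χB ψ h =
      χA ((-1) ^ n * h.coeff 0) * χB (normModSqAddOne h) * ψ (-h.coeff (n - 1)) := by
  obtain ⟨-, rfl⟩ := mem_monicOfDegree.1 hh
  rw [charWeight, nextCoeff_of_natDegree_pos hn]

variable {χA χB ψ}

theorem lCoeff_eq_zero_of_injOn {n : ℕ} (f : K[X] → K[X]) {z : ℂ} (hz : z ≠ 1)
    (hf : Set.MapsTo f (monicOfDegree K n) (monicOfDegree K n))
    (hinj : Set.InjOn f (monicOfDegree K n))
    (hweight : ∀ h ∈ monicOfDegree K n,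
      charWeight χA χB ψ (f h) = z * charWeight χA χB ψ h) :
    lCoeff χA χB ψ n = 0 := by
  have hscale : lCoeff χA χB ψ n = z * lCoeff χA χB ψ n := by
    conv_rhs => rw [lCoeff, Finset.mul_sum]
    exact (Finset.sum_nbij f hf hinj (Finset.surjOn_of_injOn_of_card_le f hf hinj le_rfl)
      fun h hh => (hweight h hh).symm).symm
  by_contra hne
  exact hz (mul_right_cancel₀ hne (hscale.symm.trans (one_mul _).symm))

theorem lCoeff_eq_zero_of_addChar_ne_one (hψ : ψ ≠ 1) {n : ℕ} (hn : 4 ≤ n) :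
    lCoeff χA χB ψ n = 0 := by
  obtain ⟨t, ht⟩ := AddChar.ne_one_iff.1 hψ
  obtain ⟨k, rfl⟩ := Nat.exists_eq_add_of_le' hn
  set d : K[X] := C (-t) * X ^ (k + 3) + C (-t) * X ^ (k + 1) with hd
  have hmul : d = (X ^ 2 + 1) * (C (-t) * X ^ (k + 1)) := by rw [hd]; ring
  have hdeg : d.degree < (k + 4 : ℕ) :=
    (degree_add_le _ _).trans_lt (max_lt
      ((degree_C_mul_X_pow_le _ _).trans_lt (by exact_mod_cast (by lia : k + 3 < k + 4)))
      ((degree_C_mul_X_pow_le _ _).trans_lt (by exact_mod_cast (by lia : k + 1 < k + 4))))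
  have hzero : d.coeff 0 = 0 := by simp [hd]
  have hnext : d.coeff (k + 3) = -t := by simp [hd, coeff_X_pow]
  refine lCoeff_eq_zero_of_injOn (· + d) ht (fun h hh => add_mem_monicOfDegree hh hdeg)
    (add_left_injective d).injOn fun h hh => ?_
  rw [charWeight_eq_of_mem_monicOfDegree _ _ _ (by lia) hh,
    charWeight_eq_of_mem_monicOfDegree _ _ _ (by lia) (add_mem_monicOfDegree hh hdeg)]
  simp only [Nat.add_one_sub_one, coeff_add, hzero, hnext, add_zero, neg_add,
    neg_neg, AddChar.map_add_eq_mul]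
  rw [hmul, normModSqAddOne_add_mul]
  ring

theorem lCoeff_one_eq_zero_of_left_ne_one (hA : χA ≠ 1) {n : ℕ} (hn : 3 ≤ n) :
    lCoeff χA χB 1 n = 0 := by
  obtain ⟨g, hg⟩ := MulChar.ne_one_iff.1 hA
  have hdeg : ∀ s : K, ((X ^ 2 + 1) * C s : K[X]).degree < n := fun s => by
    refine (degree_le_of_natDegree_le ?_).trans_lt (by exact_mod_cast hn : (2 : WithBot ℕ) < n)
    exact (natDegree_mul_C_le _ _).trans natDegree_X_sq_add_one.le
  have hcoeff : ∀ (h : K[X]) (s : K), (h + (X ^ 2 + 1) * C s).coeff 0 = h.coeff 0 + s := by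
    simp
  refine lCoeff_eq_zero_of_injOn (fun h => h + (X ^ 2 + 1) * C ((g - 1) * h.coeff 0)) hg
    (fun h hh => add_mem_monicOfDegree hh (hdeg _)) (fun a _ b _ hab => ?_) fun h hh => ?_
  · have hab0 : (g : K) * a.coeff 0 = g * b.coeff 0 := by
      have := congrArg (fun p : K[X] => p.coeff 0) hab
      simp only [hcoeff] at this
      linear_combination this
    simp only [mul_left_cancel₀ g.ne_zero hab0] at hab
    exact add_right_cancel hab
  · rw [charWeight_eq_of_mem_monicOfDegree _ _ _ (by lia) hh,
      charWeight_eq_of_mem_monicOfDegree _ _ _ (by lia) (add_mem_monicOfDegree hh (hdeg _)),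
      normModSqAddOne_add_mul, hcoeff,
      show (-1) ^ n * (h.coeff 0 + (g - 1) * h.coeff 0) = (g : K) * ((-1) ^ n * h.coeff 0) by ring,
      map_mul]
    simp only [AddChar.one_apply, mul_one, mul_assoc]

theorem twistModSqAddOne_mem_monicOfDegree (w : K[X]) {h : K[X]} {n : ℕ} (hn : 3 ≤ n)
    (hh : h ∈ monicOfDegree K n) : twistModSqAddOne w h ∈ monicOfDegree K n := by
  have hlt : (2 : WithBot ℕ) < n := by exact_mod_cast hn
  refine add_mem_monicOfDegree hh ((degree_sub_le _ _).trans_lt (max_lt ?_ ?_))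
  · refine (degree_modByMonic_lt _ monic_X_sq_add_one).trans ?_
    rwa [degree_eq_natDegree monic_X_sq_add_one.ne_zero, natDegree_X_sq_add_one]
  · refine (degree_le_of_natDegree_le ?_).trans_lt hlt
    exact (natDegree_mul_C_le _ _).trans natDegree_X_sq_add_one.le

theorem lCoeff_one_eq_zero_of_right_ne_one (hB : χB ≠ 1) {n : ℕ} (hn : 3 ≤ n) :
    lCoeff χA χB 1 n = 0 := by
  obtain ⟨g, hg⟩ := MulChar.ne_one_iff.1 hB
  obtain ⟨u, v, huv⟩ := exists_sq_add_sq_eq (g : K)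
  have hnorm : normModSqAddOne (C v * X + C u) = (g : K) :=
    (normModSqAddOne_eq (g := 0) (by ring)).trans huv
  refine lCoeff_eq_zero_of_injOn (twistModSqAddOne (C v * X + C u)) hg
    (fun h hh => twistModSqAddOne_mem_monicOfDegree _ hn hh)
    (twistModSqAddOne_injective
      (isCoprime_X_sq_add_one (huv ▸ g.ne_zero : u ^ 2 + v ^ 2 ≠ 0))).injOn fun h hh => ?_
  rw [charWeight_eq_of_mem_monicOfDegree _ _ _ (by lia) hh,
    charWeight_eq_of_mem_monicOfDegree _ _ _ (by lia)
      (twistModSqAddOne_mem_monicOfDegree _ hn hh),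
    coeff_zero_twistModSqAddOne, normModSqAddOne_twistModSqAddOne, hnorm, map_mul χB]
  simp only [AddChar.one_apply]
  ring

theorem lCoeff_eq_zero (hχ : χA ≠ 1 ∨ χB ≠ 1) (ψ : AddChar K ℂ) {n : ℕ} (hn : 4 ≤ n) :
    lCoeff χA χB ψ n = 0 := by
  by_cases hψ : ψ = 1
  · subst hψ
    exact hχ.elim (lCoeff_one_eq_zero_of_left_ne_one · (by lia))
      (lCoeff_one_eq_zero_of_right_ne_one · (by lia))
  · exact lCoeff_eq_zero_of_addChar_ne_one hψ hn

end Vanishing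

section Weil

theorem le_of_forall_pow_le_mul_pow {w ρ C : ℝ} (hρ : 0 < ρ) (h : ∀ m : ℕ, w ^ m ≤ C * ρ ^ m) :
    w ≤ ρ := by
  by_contra! hlt
  obtain ⟨m, hm⟩ := pow_unbounded_of_one_lt C ((one_lt_div hρ).2 hlt)
  rw [div_pow, lt_div_iff₀ (by positivity)] at hm
  exact (h m).not_gt hm

-- Some shift-combination of the power sums isolates a multiple of `z₁ ^ m`.
theorem exists_combination_power_sums (z₁ z₂ z₃ : ℂ) : ∃ g₀ g₁ g₂ D : ℂ, D ≠ 0 ∧ ∀ m : ℕ,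
    g₀ * (z₁ ^ m + z₂ ^ m + z₃ ^ m) + g₁ * (z₁ ^ (m + 1) + z₂ ^ (m + 1) + z₃ ^ (m + 1)) +
      g₂ * (z₁ ^ (m + 2) + z₂ ^ (m + 2) + z₃ ^ (m + 2)) = D * z₁ ^ m := by
  by_cases h₂ : z₁ = z₂ <;> by_cases h₃ : z₁ = z₃
  · exact ⟨1, 0, 0, 3, three_ne_zero, fun m => by rw [← h₂, ← h₃]; ring⟩
  · exact ⟨-z₃, 1, 0, 2 * (z₁ - z₃), mul_ne_zero two_ne_zero (sub_ne_zero.2 h₃),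
      fun m => by rw [← h₂]; ring⟩
  · exact ⟨-z₂, 1, 0, 2 * (z₁ - z₂), mul_ne_zero two_ne_zero (sub_ne_zero.2 h₂),
      fun m => by rw [← h₃]; ring⟩
  · exact ⟨z₂ * z₃, -(z₂ + z₃), 1, (z₁ - z₂) * (z₁ - z₃),
      mul_ne_zero (sub_ne_zero.2 h₂) (sub_ne_zero.2 h₃), fun m => by ring⟩

theorem norm_le_of_norm_power_sum_le {z₁ z₂ z₃ : ℂ} {ρ C : ℝ} (hρ : 0 < ρ)
    (h : ∀ m : ℕ, ‖z₁ ^ m + z₂ ^ m + z₃ ^ m‖ ≤ C * ρ ^ m) : ‖z₁‖ ≤ ρ := by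
  obtain ⟨g₀, g₁, g₂, D, hD, hg⟩ := exists_combination_power_sums z₁ z₂ z₃
  refine le_of_forall_pow_le_mul_pow (C := (‖g₀‖ * C + ‖g₁‖ * C * ρ + ‖g₂‖ * C * ρ ^ 2) / ‖D‖) hρ
    fun m => ?_
  rw [div_mul_eq_mul_div, le_div_iff₀ (norm_pos_iff.2 hD), ← norm_pow, mul_comm, ← norm_mul, ← hg m]
  calc _ ≤ ‖g₀‖ * (C * ρ ^ m) + ‖g₁‖ * (C * ρ ^ (m + 1)) + ‖g₂‖ * (C * ρ ^ (m + 2)) := by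
        refine norm_add₃_le.trans ?_
        simp only [norm_mul]
        gcongr <;> exact h _
    _ = _ := by ring

theorem exists_elementary_symmetric_eq (c₁ c₂ c₃ : ℂ) : ∃ w₁ w₂ w₃ : ℂ,
    c₁ = -(w₁ + w₂ + w₃) ∧ c₂ = w₁ * w₂ + w₁ * w₃ + w₂ * w₃ ∧ c₃ = -(w₁ * w₂ * w₃) := by
  obtain ⟨w₁, hw₁⟩ : ∃ w₁ : ℂ, w₁ ^ 3 + c₁ * w₁ ^ 2 + c₂ * w₁ + c₃ = 0 := by
    have hdeg : (Cubic.toPoly ⟨1, c₁, c₂, c₃⟩ : ℂ[X]).degree = 3 :=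
      Cubic.degree_of_a_ne_zero one_ne_zero
    obtain ⟨w, hw⟩ := IsAlgClosed.exists_root _ (hdeg.trans_ne three_ne_zero)
    exact ⟨w, by simpa [Cubic.toPoly, IsRoot] using hw⟩
  -- The other two roots are those of `X² + (c₁ + w₁) X + (c₂ + w₁ c₁ + w₁²)`.
  obtain ⟨s, hs⟩ := IsAlgClosed.exists_pow_nat_eq
    ((c₁ + w₁) ^ 2 - 4 * (c₂ + w₁ * c₁ + w₁ ^ 2)) two_pos
  refine ⟨w₁, (-(c₁ + w₁) + s) / 2, (-(c₁ + w₁) - s) / 2, by ring, ?_, ?_⟩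
  · linear_combination (1 / 4) * hs
  · linear_combination hw₁ - (w₁ / 4) * hs

theorem newton_identity_of_recurrence {S c : ℕ → ℂ} {w₁ w₂ w₃ : ℂ} (hc0 : c 0 = 1)
    (hc1 : c 1 = -(w₁ + w₂ + w₃)) (hc2 : c 2 = w₁ * w₂ + w₁ * w₃ + w₂ * w₃)
    (hc3 : c 3 = -(w₁ * w₂ * w₃)) (hc : ∀ n, 4 ≤ n → c n = 0)
    (hrec : ∀ n : ℕ, (n : ℂ) * c n = ∑ j ∈ Finset.range n, S j * c (n - 1 - j)) (n : ℕ) :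
    S n = -(w₁ ^ (n + 1) + w₂ ^ (n + 1) + w₃ ^ (n + 1)) := by
  have h0 : S 0 = -(w₁ ^ 1 + w₂ ^ 1 + w₃ ^ 1) := by
    have := hrec 1
    simp only [Nat.cast_one, hc1, one_mul, Finset.sum_range_one, Nat.sub_self, hc0, mul_one] at this
    linear_combination -this
  have h1 : S 1 = -(w₁ ^ 2 + w₂ ^ 2 + w₃ ^ 2) := by
    have := hrec 2
    simp [Finset.sum_range_succ, hc0, hc1, hc2, h0] at this
    linear_combination -this
  have h2 : S 2 = -(w₁ ^ 3 + w₂ ^ 3 + w₃ ^ 3) := by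
    have := hrec 3
    simp [Finset.sum_range_succ, hc0, hc1, hc2, hc3, h0, h1] at this
    linear_combination -this
  induction n using Nat.strong_induction_on with
  | _ n ih =>
    match n with
    | 0 => exact h0
    | 1 => exact h1
    | 2 => exact h2
    | n + 3 =>
      have hvanish : ∑ j ∈ Finset.range n, S j * c (n + 4 - 1 - j) = 0 :=
        Finset.sum_eq_zero fun j hj => by
          rw [hc _ (by have := Finset.mem_range.1 hj; lia), mul_zero]
      have := hrec (n + 4)
      rw [hc (n + 4) (by lia), mul_zero, Finset.sum_range_succ, Finset.sum_range_succ,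
        Finset.sum_range_succ, Finset.sum_range_succ, hvanish, show n + 4 - 1 - n = 3 by lia,
        show n + 4 - 1 - (n + 1) = 2 by lia, show n + 4 - 1 - (n + 2) = 1 by lia,
        show n + 4 - 1 - (n + 3) = 0 by lia, hc0, hc1, hc2, hc3, ih n (by lia),
        ih (n + 1) (by lia), ih (n + 2) (by lia)] at this
      linear_combination -this

theorem mixedCharSum_of_finrank_eq_one {K L : Type*} [Field K] [Fintype K] [Field L] [Fintype L]
    [Algebra K L] (hL : Module.finrank K L = 1) (χA χB : MulChar K ℂ) (ψ : AddChar K ℂ) :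
    mixedCharSum K L χA χB ψ = ∑ x : K, χA x * χB (x ^ 2 + 1) * ψ x := by
  have hbij : Function.Bijective (algebraMap K L) :=
    Algebra.finrank_eq_one_iff_bijective_algebraMap.1 hL
  rw [mixedCharSum, ← hbij.sum_comp]
  refine Finset.sum_congr rfl fun x _ => ?_
  rw [← map_one (algebraMap K L), ← map_pow, ← map_add, Algebra.norm_algebraMap,
    Algebra.norm_algebraMap, Algebra.trace_algebraMap, hL, pow_one, pow_one, one_smul]

theorem exists_mixedCharSum_eq_neg_power_sum {K : Type u} [Field K] [Finite K]
    {χA χB : MulChar K ℂ} (hχ : χA ≠ 1 ∨ χB ≠ 1) (ψ : AddChar K ℂ) (L : ℕ → Type v)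
    [∀ j, Field (L j)] [∀ j, Fintype (L j)] [∀ j, Algebra K (L j)]
    (hL : ∀ j, Module.finrank K (L j) = j + 1) :
    ∃ w₁ w₂ w₃ : ℂ, ∀ j,
      mixedCharSum K (L j) χA χB ψ = -(w₁ ^ (j + 1) + w₂ ^ (j + 1) + w₃ ^ (j + 1)) := by
  obtain ⟨w₁, w₂, w₃, h1, h2, h3⟩ := exists_elementary_symmetric_eq (lCoeff χA χB ψ 1)
    (lCoeff χA χB ψ 2) (lCoeff χA χB ψ 3)
  exact ⟨w₁, w₂, w₃, newton_identity_of_recurrence (S := fun j => mixedCharSum K (L j) χA χB ψ)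
    (lCoeff_zero χA χB ψ) h1 h2 h3 (fun n => lCoeff_eq_zero hχ ψ)
    (mul_lCoeff_eq_sum χA χB ψ L hL)⟩

theorem norm_mixedCharSum_zero_le {K : Type u} [Field K] [Fintype K]
    {χA χB : MulChar K ℂ} (hχ : χA ≠ 1 ∨ χB ≠ 1) (ψ : AddChar K ℂ) (L : ℕ → Type v)
    [∀ j, Field (L j)] [∀ j, Fintype (L j)] [∀ j, Algebra K (L j)]
    (hL : ∀ j, Module.finrank K (L j) = j + 1) :
    ‖mixedCharSum K (L 0) χA χB ψ‖ ≤ 3 * √(Fintype.card K) := by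
  obtain ⟨w₁, w₂, w₃, hS⟩ := exists_mixedCharSum_eq_neg_power_sum hχ ψ L hL
  obtain ⟨C, hC⟩ := exists_norm_mixedCharSum_le.{u, v} hχ ψ
  set Q : ℝ := (Fintype.card K : ℝ)
  have hQ : 0 < Q := Nat.cast_pos.2 Fintype.card_pos
  have hpow : ∀ m : ℕ, ‖(w₁ ^ 2) ^ m + (w₂ ^ 2) ^ m + (w₃ ^ 2) ^ m‖ ≤ max C 3 * Q ^ m := by
    rintro (_ | m)
    · norm_num
    · have := hC (L (2 * m + 1)) (m + 1) (by rw [hL]; ring)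
      rw [hS, norm_neg, show 2 * m + 1 + 1 = 2 * (m + 1) by ring] at this
      simp only [← pow_mul]
      exact this.trans (by gcongr; exact le_max_left _ _)
  have hroot : ∀ z₁ z₂ z₃ : ℂ, (∀ m : ℕ, z₁ ^ m + z₂ ^ m + z₃ ^ m =
      (w₁ ^ 2) ^ m + (w₂ ^ 2) ^ m + (w₃ ^ 2) ^ m) → ‖z₁‖ ≤ Q := fun z₁ z₂ z₃ hz =>
    norm_le_of_norm_power_sum_le hQ fun m => (hz m).symm ▸ hpow m
  have h₁ := hroot (w₁ ^ 2) (w₂ ^ 2) (w₃ ^ 2) fun m => rfl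
  have h₂ := hroot (w₂ ^ 2) (w₁ ^ 2) (w₃ ^ 2) fun m => by ring
  have h₃ := hroot (w₃ ^ 2) (w₂ ^ 2) (w₁ ^ 2) fun m => by ring
  rw [norm_pow] at h₁ h₂ h₃
  have := Real.le_sqrt_of_sq_le h₁
  have := Real.le_sqrt_of_sq_le h₂
  have := Real.le_sqrt_of_sq_le h₃
  rw [hS, norm_neg, zero_add, pow_one, pow_one, pow_one]
  linarith [norm_add₃_le (a := w₁) (b := w₂) (c := w₃)]

theorem norm_sum_mulChar_mul_mulChar_sq_add_one_mul_addChar_le {K : Type*} [Field K] [Fintype K]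
    {χA χB : MulChar K ℂ} (hχ : χA ≠ 1 ∨ χB ≠ 1) (ψ : AddChar K ℂ) :
    ‖∑ x : K, χA x * χB (x ^ 2 + 1) * ψ x‖ ≤ 3 * √(Fintype.card K) := by
  obtain ⟨p, hp⟩ := CharP.exists K
  have : Fact p.Prime := ⟨CharP.char_is_prime K p⟩
  let L : ℕ → Type := fun j => FiniteField.Extension K p (j + 1)
  let _ : ∀ j, Field (L j) := fun j => inferInstanceAs (Field (FiniteField.Extension K p (j + 1)))
  have : ∀ j, Finite (L j) := fun j => inferInstanceAs (Finite (FiniteField.Extension K p (j + 1)))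
  let _ : ∀ j, Fintype (L j) := fun j => Fintype.ofFinite _
  let _ : ∀ j, Algebra K (L j) := fun j =>
    inferInstanceAs (Algebra K (FiniteField.Extension K p (j + 1)))
  have hL : ∀ j, Module.finrank K (L j) = j + 1 :=
    fun j => FiniteField.finrank_extension K p (j + 1)
  rw [← mixedCharSum_of_finrank_eq_one (hL 0)]
  exact norm_mixedCharSum_zero_le hχ ψ L hL

end Weil

section CharacterSieve

open Classical in
/-- The elements of `X` whose character `ev x` is nontrivial on each of the subgroups `H i`,
`i ∈ s`; primitivity of a field element is a condition of this shape. -/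
noncomputable def sifted {Γ ι α : Type*} [CommGroup Γ] (X : Finset α) (ev : α → Γ →* ℂ)
    (H : ι → Subgroup Γ) (s : Finset ι) : Finset α :=
  {x ∈ X | ∀ i ∈ s, ∃ h ∈ H i, ev x h ≠ 1}

variable {Γ ι α : Type*} [CommGroup Γ] {X : Finset α} {ev : α → Γ →* ℂ} {H : ι → Subgroup Γ}

theorem mem_sifted {s : Finset ι} {x : α} :
    x ∈ sifted X ev H s ↔ x ∈ X ∧ ∀ i ∈ s, ∃ h ∈ H i, ev x h ≠ 1 := by
  simp only [sifted, Finset.mem_filter]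

theorem sifted_empty : sifted X ev H ∅ = X := by
  ext x
  simp [mem_sifted]

theorem sifted_insert_subset [DecidableEq ι] (i : ι) (s : Finset ι) :
    sifted X ev H (insert i s) ⊆ sifted X ev H s := fun _ hx =>
  mem_sifted.2 ⟨(mem_sifted.1 hx).1, fun j hj =>
    (mem_sifted.1 hx).2 j (Finset.mem_insert_of_mem hj)⟩

theorem card_sifted_le_card_sifted_union_add_sum [DecidableEq ι] (core rest : Finset ι) :
    (sifted X ev H core).card ≤ (sifted X ev H (core ∪ rest)).card +
      ∑ i ∈ rest, ((sifted X ev H core).card - (sifted X ev H (insert i core)).card) := by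
  classical
  have hcover : sifted X ev H core ⊆ sifted X ev H (core ∪ rest) ∪
      rest.biUnion fun i => sifted X ev H core \ sifted X ev H (insert i core) := by
    intro x hx
    by_cases hrest : ∀ i ∈ rest, x ∈ sifted X ev H (insert i core)
    · refine Finset.mem_union_left _ (mem_sifted.2 ⟨(mem_sifted.1 hx).1, fun i hi => ?_⟩)
      rcases Finset.mem_union.1 hi with hi | hi
      · exact (mem_sifted.1 hx).2 i hi
      · exact (mem_sifted.1 (hrest i hi)).2 i (Finset.mem_insert_self i core)
    · push Not at hrest
      obtain ⟨i, hi, hxi⟩ := hrest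
      exact Finset.mem_union_right _
        (Finset.mem_biUnion.2 ⟨i, hi, Finset.mem_sdiff.2 ⟨hx, hxi⟩⟩)
  calc (sifted X ev H core).card
      ≤ (sifted X ev H (core ∪ rest)).card + ∑ i ∈ rest,
          (sifted X ev H core \ sifted X ev H (insert i core)).card :=
        (Finset.card_le_card hcover).trans ((Finset.card_union_le _ _).trans
          (Nat.add_le_add_left Finset.card_biUnion_le _))
    _ = _ := by simp only [Finset.card_sdiff_of_subset (sifted_insert_subset _ core)]

theorem sum_sifted_insert [DecidableEq ι] (γ : Γ) (i : ι) [Fintype (H i)] (s : Finset ι) :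
    ∑ x ∈ sifted X ev H (insert i s), ev x γ = ∑ x ∈ sifted X ev H s, ev x γ -
      (Nat.card (H i) : ℂ)⁻¹ * ∑ h : H i, ∑ x ∈ sifted X ev H s, ev x (γ * h) := by
  classical
  have hfilter : sifted X ev H (insert i s) =
      {x ∈ sifted X ev H s | ∃ h ∈ H i, ev x h ≠ 1} := by
    ext x
    simp only [mem_sifted, Finset.mem_filter, Finset.forall_mem_insert]
    tauto
  rw [hfilter, Finset.sum_filter, Finset.sum_comm, Finset.mul_sum, ← Finset.sum_sub_distrib]
  refine Finset.sum_congr rfl fun x _ => ?_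
  have hcard : (Fintype.card (H i) : ℂ) ≠ 0 := Nat.cast_ne_zero.2 Fintype.card_ne_zero
  have horth := sum_hom_units ((ev x).comp (H i).subtype)
  have htriv : (ev x).comp (H i).subtype = 1 ↔ ¬ ∃ h ∈ H i, ev x h ≠ 1 := by
    simp [MonoidHom.ext_iff]
  simp only [MonoidHom.comp_apply, Subgroup.subtype_apply, htriv] at horth
  simp only [map_mul, ← Finset.mul_sum, horth, Nat.card_eq_fintype_card]
  split_ifs with h
  · rw [Nat.cast_zero, mul_zero, mul_zero, sub_zero]
  · rw [mul_comm (ev x γ), inv_mul_cancel_left₀ hcard, sub_self]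

variable [Finite Γ]

theorem norm_sum_sifted_insert_sub_le [DecidableEq ι] (γ : Γ) (i : ι) (s : Finset ι) {B : ℝ}
    (hB : ∀ h ∈ H i, h ≠ 1 → ‖∑ x ∈ sifted X ev H s, ev x (γ * h)‖ ≤ B) :
    ‖∑ x ∈ sifted X ev H (insert i s), ev x γ -
        (1 - (Nat.card (H i) : ℝ)⁻¹ : ℝ) * ∑ x ∈ sifted X ev H s, ev x γ‖ ≤
      (1 - (Nat.card (H i) : ℝ)⁻¹) * B := by
  classical
  have := Fintype.ofFinite (H i)
  have hcard : (0 : ℝ) < Nat.card (H i) := Nat.cast_pos.2 Nat.card_pos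
  rw [sum_sifted_insert, ← Finset.add_sum_erase _ _ (Finset.mem_univ (1 : H i)),
    OneMemClass.coe_one, mul_one]
  set R := ∑ h ∈ Finset.univ.erase (1 : H i), ∑ x ∈ sifted X ev H s, ev x (γ * h)
  have hRle : ‖R‖ ≤ ((Nat.card (H i) : ℝ) - 1) * B := by
    refine (norm_sum_le_of_le _ fun (h : H i) hh => hB h h.2 fun h1 =>
      (Finset.mem_erase.1 hh).1 (Subtype.ext h1)).trans_eq ?_
    rw [Finset.sum_const, Finset.card_erase_of_mem (Finset.mem_univ _), Finset.card_univ,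
      nsmul_eq_mul, ← Nat.card_eq_fintype_card, Nat.cast_pred Nat.card_pos]
  calc _ = ‖-((Nat.card (H i) : ℂ)⁻¹ * R)‖ := by congr 1; push_cast; ring
    _ = (Nat.card (H i) : ℝ)⁻¹ * ‖R‖ := by
      rw [norm_neg, norm_mul, norm_inv, RCLike.norm_natCast]
    _ ≤ (Nat.card (H i) : ℝ)⁻¹ * (((Nat.card (H i) : ℝ) - 1) * B) := by gcongr
    _ = _ := by field_simp

theorem norm_sum_sifted_le {B : ℝ} (hB : ∀ γ, γ ≠ 1 → ‖∑ x ∈ X, ev x γ‖ ≤ B) (s : Finset ι)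
    {γ : Γ} (hγ : γ ∉ s.sup H) :
    ‖∑ x ∈ sifted X ev H s, ev x γ‖ ≤
      (∏ i ∈ s, (1 - (Nat.card (H i) : ℝ)⁻¹)) * (2 ^ s.card * B) := by
  classical
  induction s using Finset.induction_on generalizing γ with
  | empty =>
    rw [Finset.sup_empty, Subgroup.mem_bot] at hγ
    simpa [sifted_empty] using hB γ hγ
  | insert i s his ih =>
    have hmul : ∀ h ∈ H i, γ * h ∉ s.sup H := fun h hh hcon => hγ <| by
      rw [Finset.sup_insert, ← mul_inv_cancel_right γ h, mul_comm]
      exact Subgroup.mul_mem_sup (inv_mem hh) hcon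
    have hstep := norm_sum_sifted_insert_sub_le γ i s fun h hh _ => ih (hmul h hh)
    have hγs := ih (by simpa using hmul 1 (one_mem _))
    have hn : 0 ≤ 1 - (Nat.card (H i) : ℝ)⁻¹ :=
      sub_nonneg.2 (inv_le_one_of_one_le₀ (Nat.one_le_cast.2 Nat.card_pos))
    have hmain := norm_mul_le ((1 - (Nat.card (H i) : ℝ)⁻¹ : ℝ) : ℂ)
      (∑ x ∈ sifted X ev H s, ev x γ)
    rw [Complex.norm_real, Real.norm_of_nonneg hn] at hmain
    rw [Finset.prod_insert his, Finset.card_insert_of_notMem his, pow_succ]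
    refine (norm_le_norm_add_norm_sub' _ _).trans
      ((add_le_add (hmain.trans (mul_le_mul_of_nonneg_left hγs hn)) hstep).trans_eq ?_)
    ring

theorem abs_card_sifted_insert_sub_le [DecidableEq ι] {B : ℝ}
    (hB : ∀ γ, γ ≠ 1 → ‖∑ x ∈ X, ev x γ‖ ≤ B) {i : ι} {s : Finset ι}
    (hdis : Disjoint (H i) (s.sup H)) :
    |((sifted X ev H (insert i s)).card : ℝ) -
        (1 - (Nat.card (H i) : ℝ)⁻¹) * (sifted X ev H s).card| ≤
      (1 - (Nat.card (H i) : ℝ)⁻¹) *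
        ((∏ j ∈ s, (1 - (Nat.card (H j) : ℝ)⁻¹)) * (2 ^ s.card * B)) := by
  have hstep := norm_sum_sifted_insert_sub_le (X := X) (ev := ev) 1 i s fun h hh hne =>
    norm_sum_sifted_le hB s fun hs => hne (Subgroup.disjoint_def.1 hdis hh (by rwa [one_mul] at hs))
  simp only [map_one, Finset.sum_const, nsmul_eq_mul, mul_one] at hstep
  rwa [← Complex.ofReal_natCast, ← Complex.ofReal_natCast, ← Complex.ofReal_mul,
    ← Complex.ofReal_sub, Complex.norm_real, Real.norm_eq_abs] at hstep

theorem abs_card_sifted_sub_le {B : ℝ} (hB : ∀ γ, γ ≠ 1 → ‖∑ x ∈ X, ev x γ‖ ≤ B)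
    {s : Finset ι} (hind : s.SupIndep H) :
    |((sifted X ev H s).card : ℝ) - (∏ i ∈ s, (1 - (Nat.card (H i) : ℝ)⁻¹)) * X.card| ≤
      (∏ i ∈ s, (1 - (Nat.card (H i) : ℝ)⁻¹)) * ((2 ^ s.card - 1) * B) := by
  classical
  induction s using Finset.induction_on with
  | empty => simp [sifted_empty]
  | insert i s his ih =>
    have hstep := abs_card_sifted_insert_sub_le hB
      (hind (Finset.subset_insert i s) (Finset.mem_insert_self i s) his)
    have hn : 0 ≤ 1 - (Nat.card (H i) : ℝ)⁻¹ :=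
      sub_nonneg.2 (inv_le_one_of_one_le₀ (Nat.one_le_cast.2 Nat.card_pos))
    have hprev := mul_le_mul_of_nonneg_left (ih (hind.subset (Finset.subset_insert i s))) hn
    rw [← abs_of_nonneg hn, ← abs_mul, abs_of_nonneg hn, mul_sub] at hprev
    rw [Finset.prod_insert his, Finset.card_insert_of_notMem his, pow_succ, mul_assoc]
    refine (abs_sub_le _ _ _).trans ((add_le_add hstep hprev).trans_eq ?_)
    ring

theorem sifted_union_nonempty [DecidableEq ι] {B : ℝ}
    (hB : ∀ γ, γ ≠ 1 → ‖∑ x ∈ X, ev x γ‖ ≤ B) {core rest : Finset ι} (hdis : Disjoint core rest)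
    (hind : (core ∪ rest).SupIndep H) (hcore : ∀ i ∈ core, 1 < Nat.card (H i)) {δ : ℝ}
    (hδ : δ = 1 - ∑ i ∈ rest, (Nat.card (H i) : ℝ)⁻¹) (hδ0 : 0 < δ)
    (hlt : 2 ^ core.card * B * (2 * δ + rest.card - 1) < δ * (X.card + B)) :
    (sifted X ev H (core ∪ rest)).Nonempty := by
  set θ : ℝ := ∏ i ∈ core, (1 - (Nat.card (H i) : ℝ)⁻¹)
  set N : ℝ := ((sifted X ev H core).card : ℝ)
  have hθ0 : 0 < θ := Finset.prod_pos fun i hi =>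
    sub_pos.2 (inv_lt_one_of_one_lt₀ (Nat.one_lt_cast.2 (hcore i hi)))
  have hN := mul_le_mul_of_nonneg_left
    (abs_le.1 (abs_card_sifted_sub_le hB (hind.subset Finset.subset_union_left))).1 hδ0.le
  have hloss : ∑ i ∈ rest, (N - (sifted X ev H (insert i core)).card) ≤
      (1 - δ) * N + (rest.card - 1 + δ) * (θ * (2 ^ core.card * B)) := by
    have hterm : ∀ i ∈ rest, N - (sifted X ev H (insert i core)).card ≤
        (Nat.card (H i) : ℝ)⁻¹ * N +
          (1 - (Nat.card (H i) : ℝ)⁻¹) * (θ * (2 ^ core.card * B)) := fun i hi => by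
      have hdisj := hind Finset.subset_union_left (Finset.mem_union_right core hi)
        (Finset.disjoint_right.1 hdis hi)
      linarith [(abs_le.1 (abs_card_sifted_insert_sub_le hB hdisj)).1]
    refine (Finset.sum_le_sum hterm).trans_eq ?_
    rw [Finset.sum_add_distrib, ← Finset.sum_mul, ← Finset.sum_mul, Finset.sum_sub_distrib, hδ]
    simp
  have hunion : N ≤ (sifted X ev H (core ∪ rest)).card +
      ∑ i ∈ rest, (N - (sifted X ev H (insert i core)).card) := by
    have h := card_sifted_le_card_sifted_union_add_sum (X := X) (ev := ev) (H := H) core rest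
    rw [← Nat.cast_le (α := ℝ)] at h
    simpa only [Nat.cast_add, Nat.cast_sum,
      Nat.cast_sub (Finset.card_le_card (sifted_insert_subset _ core))] using h
  have hpos : (0 : ℝ) < (sifted X ev H (core ∪ rest)).card := by
    linarith [mul_lt_mul_of_pos_left hlt hθ0]
  exact Finset.card_pos.1 (Nat.cast_pos.1 hpos)

end CharacterSieve

section SingleTorsion

variable {κ G : Type*} [DecidableEq κ] [CommGroup G]

/-- The elements of `κ → G` supported at the coordinate `i.1` and of order dividing `i.2`. The
sieve runs over these subgroups for `G` the character group of a field, the coordinate recording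
which of the elements `ξ` and `ξ + ξ⁻¹` is tested and `i.2` the prime it is tested against. -/
def singleTorsion (G : Type*) [CommGroup G] (i : κ × ℕ) : Subgroup (κ → G) :=
  (powMonoidHom i.2 : G →* G).ker.map (MonoidHom.mulSingle (fun _ : κ => G) i.1)

theorem card_singleTorsion [IsCyclic G] [Finite G] {i : κ × ℕ} (hi : i.2 ∣ Nat.card G) :
    Nat.card (singleTorsion G i) = i.2 := by
  rw [singleTorsion, Subgroup.card_map_of_injective (Pi.mulSingle_injective (M := fun _ => G) i.1),
    IsCyclic.card_powMonoidHom_ker, Nat.gcd_eq_right hi]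

theorem supIndep_singleTorsion {S : Finset (κ × ℕ)} (hS : ∀ i ∈ S, i.2.Prime) :
    S.SupIndep (singleTorsion G) := by
  intro t ht i hi hit
  set m := ∏ j ∈ t with j.1 = i.1, j.2
  have hcop : Nat.Coprime i.2 m := Nat.Coprime.prod_right fun j hj => by
    rw [Finset.mem_filter] at hj
    exact (Nat.coprime_primes (hS i hi) (hS j (ht hj.1))).2 fun h =>
      hit (Prod.ext hj.2.symm h ▸ hj.1)
  have hle : t.sup (singleTorsion G) ≤
      (powMonoidHom m : G →* G).ker.comap (Pi.evalMonoidHom _ i.1) := by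
    refine Finset.sup_le fun j hj => ?_
    rintro _ ⟨g, hg, rfl⟩
    change (Pi.mulSingle j.1 g : κ → G) i.1 ^ m = 1
    by_cases hji : i.1 = j.1
    · obtain ⟨c, hc⟩ : j.2 ∣ m := Finset.dvd_prod_of_mem (fun j : κ × ℕ => j.2)
        (Finset.mem_filter.2 ⟨hj, hji.symm⟩)
      rw [hji, Pi.mulSingle_eq_same, hc, pow_mul, show g ^ j.2 = 1 from hg, one_pow]
    · rw [Pi.mulSingle_eq_of_ne hji, one_pow]
  rw [Subgroup.disjoint_def]
  rintro _ ⟨g, hg, rfl⟩ hsup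
  have hgm : (Pi.mulSingle i.1 g : κ → G) i.1 ^ m = 1 := hle hsup
  rw [Pi.mulSingle_eq_same] at hgm
  have hg1 : orderOf g ∣ Nat.gcd i.2 m :=
    Nat.dvd_gcd (orderOf_dvd_of_pow_eq_one hg) (orderOf_dvd_of_pow_eq_one hgm)
  rw [hcop, Nat.dvd_one, orderOf_eq_one_iff] at hg1
  rw [hg1, map_one]

end SingleTorsion

section MulCharOrder

variable {E : Type*} [Field E]

/-- Evaluation of a family of characters at a family of units, multiplied over the family. -/
noncomputable def evalProd {κ : Type*} [Fintype κ] (y : κ → Eˣ) : (κ → MulChar E ℂ) →* ℂ where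
  toFun γ := ∏ k, γ k (y k)
  map_one' := Finset.prod_eq_one fun _ _ => MulChar.one_apply_coe _
  map_mul' _ _ := Finset.prod_mul_distrib

theorem evalProd_apply {κ : Type*} [Fintype κ] (y : κ → Eˣ) (γ : κ → MulChar E ℂ) :
    evalProd y γ = ∏ k, γ k (y k) := rfl

theorem evalProd_mulSingle {κ : Type*} [Fintype κ] [DecidableEq κ] (y : κ → Eˣ) (k : κ)
    (χ : MulChar E ℂ) : evalProd y (Pi.mulSingle k χ) = χ (y k) := by
  rw [evalProd_apply, Finset.prod_eq_single k _ (by simp), Pi.mulSingle_eq_same]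
  intro j _ hj
  rw [Pi.mulSingle_eq_of_ne hj, MulChar.one_apply_coe]

variable [Fintype E]

theorem natCard_mulChar_complex (E : Type*) [Field E] [Fintype E] :
    Nat.card (MulChar E ℂ) = Fintype.card E - 1 := by
  classical
  rw [MulChar.card_eq_card_units_of_hasEnoughRootsOfUnity, Nat.card_eq_fintype_card,
    Fintype.card_units]

theorem orderOf_eq_card_sub_one {x : Eˣ}
    (h : ∀ p, p.Prime → p ∣ Fintype.card E - 1 → ∃ χ : MulChar E ℂ, χ ^ p = 1 ∧ χ x ≠ 1) :
    orderOf (x : E) = Fintype.card E - 1 := by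
  refine orderOf_eq_of_pow_and_pow_div_prime (Nat.sub_pos_of_lt Fintype.one_lt_card)
    (FiniteField.pow_card_sub_one_eq_one _ x.ne_zero) fun p hp hpd hpow => ?_
  obtain ⟨χ, hχp, hχx⟩ := h p hp hpd
  have := isCyclic_mulChar_complex E
  obtain ⟨g, hg⟩ := IsCyclic.exists_generator (α := MulChar E ℂ)
  obtain ⟨k, rfl⟩ := mem_powers_iff_mem_zpowers.2 (hg χ)
  have hk : Fintype.card E - 1 ∣ k * p := by
    rw [← natCard_mulChar_complex, ← orderOf_eq_card_of_forall_mem_zpowers hg,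
      orderOf_dvd_iff_pow_eq_one, pow_mul]
    exact hχp
  obtain ⟨j, rfl⟩ : (Fintype.card E - 1) / p ∣ k :=
    Nat.dvd_of_mul_dvd_mul_right hp.pos (by rwa [Nat.div_mul_cancel hpd])
  refine hχx ?_
  simp only [MulChar.pow_apply_coe]
  rw [← map_pow, pow_mul, hpow, one_pow, map_one]

end MulCharOrder

section TraceFibre

theorem norm_sum_filter_eq_le {A ι : Type*} [AddCommGroup A] [Finite A] [DecidableEq A]
    (s : Finset ι) (T : ι → A) (f : ι → ℂ) {B : ℝ}
    (hB : ∀ φ : AddChar A ℂ, ‖∑ x ∈ s, f x * φ (T x)‖ ≤ B) (a : A) :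
    ‖∑ x ∈ s with T x = a, f x‖ ≤ B := by
  have := Fintype.ofFinite A
  have hA : (0 : ℝ) < Fintype.card A := Nat.cast_pos.2 Fintype.card_pos
  have hsum : (Fintype.card A : ℂ) * ∑ x ∈ s with T x = a, f x =
      ∑ φ : AddChar A ℂ, φ (-a) * ∑ x ∈ s, f x * φ (T x) := by
    simp only [Finset.mul_sum, Finset.sum_filter]
    rw [Finset.sum_comm]
    refine Finset.sum_congr rfl fun x _ => ?_
    have horth := AddChar.sum_apply_eq_ite (T x - a)
    simp only [sub_eq_zero] at horth
    calc _ = f x * ∑ φ : AddChar A ℂ, φ (T x - a) := by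
          rw [horth]
          split_ifs <;> ring
      _ = _ := by
          rw [Finset.mul_sum]
          refine Finset.sum_congr rfl fun φ _ => ?_
          rw [sub_eq_add_neg, AddChar.map_add_eq_mul]
          ring
  have hle : (Fintype.card A : ℝ) * ‖∑ x ∈ s with T x = a, f x‖ ≤ Fintype.card A * B := by
    rw [← RCLike.norm_natCast (K := ℂ), ← norm_mul, hsum]
    refine (norm_sum_le_of_le _ fun φ _ => ?_).trans_eq (b := ∑ _φ : AddChar A ℂ, B) ?_
    · rw [norm_mul, AddChar.norm_apply, one_mul]
      exact hB φ
    · rw [Finset.sum_const, Finset.card_univ, AddChar.card_eq, nsmul_eq_mul, RCLike.norm_natCast]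
  exact le_of_mul_le_mul_left hle hA

theorem mulChar_apply_mul_mulChar_apply_add_inv {K R : Type*} [Field K] [CommRing R]
    (χ₁ χ₂ : MulChar K R) (x : K) :
    χ₁ x * χ₂ (x + x⁻¹) = (χ₁ * χ₂⁻¹) x * χ₂ (x ^ 2 + 1) := by
  rcases eq_or_ne x 0 with rfl | hx
  · simp only [MulChar.map_zero, zero_mul]
  · rw [MulChar.mul_apply, MulChar.inv_apply', mul_assoc, ← map_mul]
    congr 2
    field_simp

variable {F E : Type*} [Field F] [Field E] [Fintype E] [Algebra F E] [DecidableEq F]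

theorem norm_sum_mulChar_mul_mulChar_add_inv_le (a : F) {χ₁ χ₂ : MulChar E ℂ}
    (h : χ₁ ≠ 1 ∨ χ₂ ≠ 1) :
    ‖∑ x : E with Algebra.trace F E x = a, χ₁ x * χ₂ (x + x⁻¹)‖ ≤ 3 * √(Fintype.card E) := by
  have h' : χ₁ * χ₂⁻¹ ≠ 1 ∨ χ₂ ≠ 1 := by
    refine or_iff_not_imp_right.2 fun h₂ => ?_
    rw [not_ne_iff.1 h₂, inv_one, mul_one]
    exact h.resolve_right h₂
  have : Finite F := Finite.of_injective _ (algebraMap F E).injective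
  refine norm_sum_filter_eq_le _ _ _ (fun φ => ?_) a
  simp only [mulChar_apply_mul_mulChar_apply_add_inv]
  exact norm_sum_mulChar_mul_mulChar_sq_add_one_mul_addChar_le h'
    (φ.compAddMonoidHom (Algebra.trace F E).toAddMonoidHom)

theorem card_trace_eq [Fintype F] (a : F) :
    (Finset.univ.filter fun x : E => Algebra.trace F E x = a).card * Fintype.card F =
      Fintype.card E := by
  have := Module.Finite.of_finite (R := F) (M := E)
  have hsurj := Algebra.trace_surjective F E
  have hfibre : ∀ b : F, (Finset.univ.filter fun x : E => Algebra.trace F E x = b).card =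
      (Finset.univ.filter fun x : E => Algebra.trace F E x = a).card := fun b =>
    AddMonoidHom.card_fiber_eq_of_mem_range (Algebra.trace F E).toAddMonoidHom (hsurj b) (hsurj a)
  have hcard := Finset.card_eq_sum_card_fiberwise (s := Finset.univ) (t := Finset.univ)
    (f := Algebra.trace F E) fun _ _ => Finset.mem_coe.2 (Finset.mem_univ _)
  rw [Finset.sum_congr rfl fun b _ => hfibre b, Finset.sum_const, Finset.card_univ,
    Finset.card_univ, smul_eq_mul, mul_comm] at hcard
  exact hcard.symm

theorem card_add_inv_eq_zero_le [DecidableEq E] :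
    (Finset.univ.filter fun x : E => x + x⁻¹ = 0).card ≤ 3 := by
  have hne : (X * (X ^ 2 + 1) : E[X]) ≠ 0 := mul_ne_zero X_ne_zero monic_X_sq_add_one.ne_zero
  have hdeg : (X * (X ^ 2 + 1) : E[X]).natDegree = 3 := by
    rw [natDegree_mul X_ne_zero monic_X_sq_add_one.ne_zero, natDegree_X, natDegree_X_sq_add_one]
  have hroots : (Finset.univ.filter fun x : E => x + x⁻¹ = 0) ⊆
      (X * (X ^ 2 + 1) : E[X]).roots.toFinset := by
    intro x hx
    rw [Finset.mem_filter_univ] at hx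
    rw [Multiset.mem_toFinset, mem_roots hne, IsRoot, eval_mul, eval_X, mul_eq_zero]
    refine or_iff_not_imp_left.2 fun hx0 => ?_
    have hmul : x * (x + x⁻¹) = 0 := by rw [hx, mul_zero]
    simpa [mul_add, mul_inv_cancel₀ hx0, sq] using hmul
  exact (Finset.card_le_card hroots).trans
    ((Multiset.toFinset_card_le _).trans ((card_roots' _).trans hdeg.le))

end TraceFibre

section Criterion

theorem ne_zero_of_add_inv_ne_zero {E : Type*} [Field E] {x : E} (hx : x + x⁻¹ ≠ 0) : x ≠ 0 := by
  rintro rfl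
  simp at hx

/-- The pair of units `(x, x + x⁻¹)`, indexed by `Bool`. The condition `x + x⁻¹ ≠ 0` also excludes
`x = 0`, since `0⁻¹ = 0`. -/
def unitPair {E : Type*} [Field E] (x : {x : E // x + x⁻¹ ≠ 0}) : Bool → Eˣ
  | false => Units.mk0 x.1 (ne_zero_of_add_inv_ne_zero x.2)
  | true => Units.mk0 (x.1 + x.1⁻¹) x.2

theorem evalProd_unitPair {E : Type*} [Field E] (x : {x : E // x + x⁻¹ ≠ 0})
    (γ : Bool → MulChar E ℂ) :
    evalProd (unitPair x) γ = γ false x.1 * γ true (x.1 + x.1⁻¹) := by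
  rw [evalProd_apply, Fintype.prod_bool, mul_comm]
  rfl

theorem orderOf_eq_card_sub_one_of_evalProd_ne_one {E κ : Type*} [Field E] [Fintype E] [Fintype κ]
    [DecidableEq κ] {y : κ → Eˣ} (k : κ)
    (h : ∀ p ∈ (Fintype.card E - 1).primeFactors,
      ∃ γ ∈ singleTorsion (MulChar E ℂ) (k, p), evalProd y γ ≠ 1) :
    orderOf (y k : E) = Fintype.card E - 1 := by
  refine orderOf_eq_card_sub_one fun p hp hpd => ?_
  obtain ⟨_, ⟨χ, hχ, rfl⟩, hne⟩ :=
    h p (hp.mem_primeFactors hpd (Nat.sub_pos_of_lt Fintype.one_lt_card).ne')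
  exact ⟨χ, hχ, by rwa [MonoidHom.mulSingle_apply, evalProd_mulSingle] at hne⟩

variable {F E : Type*} [Field F] [Field E] [Fintype E] [Algebra F E] [DecidableEq F]
  [DecidableEq E]

theorem norm_sum_evalProd_unitPair_le (a : F) {γ : Bool → MulChar E ℂ} (hγ : γ ≠ 1) :
    ‖∑ x : {x : E // x + x⁻¹ ≠ 0} with Algebra.trace F E x.1 = a, evalProd (unitPair x) γ‖ ≤
      3 * √(Fintype.card E) := by
  have h : γ false ≠ 1 ∨ γ true ≠ 1 := by
    by_contra! hcon
    exact hγ (funext (Bool.forall_bool.2 hcon))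
  refine (congrArg norm ?_).trans_le (norm_sum_mulChar_mul_mulChar_add_inv_le a h)
  simp only [Finset.sum_filter, evalProd_unitPair]
  rw [← Fintype.sum_subtype_add_sum_subtype fun x : E => x + x⁻¹ ≠ 0, left_eq_add]
  refine Finset.sum_eq_zero fun x _ => ?_
  rw [not_ne_iff.1 x.2, MulChar.map_zero, mul_zero, ite_self]

theorem card_trace_eq_le_card_subtype_add_three (a : F) :
    (Finset.univ.filter fun x : E => Algebra.trace F E x = a).card ≤
      (Finset.univ.filter fun x : {x : E // x + x⁻¹ ≠ 0} =>
        Algebra.trace F E x.1 = a).card + 3 := by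
  rw [← Finset.card_map (Function.Embedding.subtype fun x : E => x + x⁻¹ ≠ 0)]
  refine (Finset.card_le_card fun x hx => ?_).trans ((Finset.card_union_le _ _).trans
    (Nat.add_le_add_left card_add_inv_eq_zero_le _))
  rw [Finset.mem_filter_univ] at hx
  rw [Finset.mem_union, Finset.mem_filter_univ, Finset.mem_map]
  exact or_iff_not_imp_right.2 fun hx0 => ⟨⟨x, hx0⟩, (Finset.mem_filter_univ _).2 hx, rfl⟩

theorem exists_primitive_pair_of_card_lt (a : F) {core rest : Finset ℕ}
    (hdis : Disjoint core rest) (hun : core ∪ rest = (Fintype.card E - 1).primeFactors) {δ : ℝ}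
    (hδ : δ = 1 - 2 * ∑ p ∈ rest, (p : ℝ)⁻¹) (hδ0 : 0 < δ)
    (hlt : 4 ^ core.card * (3 * √(Fintype.card E)) * (2 * δ + 2 * rest.card - 1) <
      δ * ((Finset.univ.filter fun x : {x : E // x + x⁻¹ ≠ 0} =>
        Algebra.trace F E x.1 = a).card + 3 * √(Fintype.card E))) :
    ∃ ξ : E, orderOf ξ = Fintype.card E - 1 ∧ orderOf (ξ + ξ⁻¹) = Fintype.card E - 1 ∧
      Algebra.trace F E ξ = a := by
  classical
  have := isCyclic_mulChar_complex E
  have := Fintype.ofFinite (MulChar E ℂ)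
  have hunion : (Finset.univ : Finset Bool) ×ˢ core ∪ Finset.univ ×ˢ rest =
      Finset.univ ×ˢ (Fintype.card E - 1).primeFactors := by
    rw [← Finset.product_union, hun]
  have hprime : ∀ i ∈ (Finset.univ : Finset Bool) ×ˢ core ∪ Finset.univ ×ˢ rest,
      i.2 ∈ (Fintype.card E - 1).primeFactors := fun i hi =>
    (Finset.mem_product.1 (hunion ▸ hi)).2
  have hcard : ∀ i ∈ (Finset.univ : Finset Bool) ×ˢ core ∪ Finset.univ ×ˢ rest,
      Nat.card (singleTorsion (MulChar E ℂ) i) = i.2 := fun i hi =>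
    card_singleTorsion (natCard_mulChar_complex E ▸ Nat.dvd_of_mem_primeFactors (hprime i hi))
  have hδ' : δ = 1 - ∑ i ∈ (Finset.univ : Finset Bool) ×ˢ rest,
      (Nat.card (singleTorsion (MulChar E ℂ) i) : ℝ)⁻¹ := by
    rw [Finset.sum_congr rfl fun i hi => by rw [hcard i (Finset.mem_union_right _ hi)],
      Finset.sum_product, hδ]
    simp
  obtain ⟨x, hx⟩ := sifted_union_nonempty (ev := fun x => evalProd (unitPair x))
    (fun γ hγ => norm_sum_evalProd_unitPair_le a hγ)
    (Finset.disjoint_product.2 (Or.inr hdis))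
    (supIndep_singleTorsion fun i hi => Nat.prime_of_mem_primeFactors (hprime i hi))
    (fun i hi => by
      have hi' := Finset.mem_union_left (Finset.univ ×ˢ rest) hi
      exact (hcard i hi').symm ▸ (Nat.prime_of_mem_primeFactors (hprime i hi')).one_lt) hδ' hδ0
    (by simpa [Finset.card_product, pow_mul, show (2 : ℝ) ^ 2 = 4 by norm_num] using hlt)
  obtain ⟨hxa, hsift⟩ := mem_sifted.1 hx
  rw [hunion] at hsift
  have horder : ∀ b, orderOf (unitPair x b : E) = Fintype.card E - 1 := fun b =>
    orderOf_eq_card_sub_one_of_evalProd_ne_one b fun p hp =>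
      hsift (b, p) (Finset.mem_product.2 ⟨Finset.mem_univ b, hp⟩)
  exact ⟨x.1, horder false, horder true, (Finset.mem_filter_univ x).1 hxa⟩

end Criterion

section SieveCondition

/-- The numerical condition on `q` under which sieving the cubic extension of `𝔽_q` produces
primitive pairs of every trace: the prime divisors of `q ^ 3 - 1` split into a core, treated by
inclusion-exclusion, and a rest, whose contribution `1 - δ` is merely bounded. -/
def SieveCondition (q : ℕ) : Prop :=
  ∃ core rest : Finset ℕ, Disjoint core rest ∧ core ∪ rest = (q ^ 3 - 1).primeFactors ∧
    ∃ δ : ℝ, δ = 1 - 2 * ∑ p ∈ rest, (p : ℝ)⁻¹ ∧ 0 < δ ∧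
      3 * 4 ^ core.card * (2 * δ + 2 * rest.card - 1) ≤ δ * √q

variable {q : ℕ}

theorem SieveCondition.exists_primitive_pair (h : SieveCondition q) (hq : 2 ≤ q)
    {F E : Type*} [Field F] [Fintype F] [Field E] [Fintype E] [Algebra F E]
    (hF : Fintype.card F = q) (hE : Fintype.card E = q ^ 3) (a : F) :
    ∃ ξ : E, orderOf ξ = q ^ 3 - 1 ∧ orderOf (ξ + ξ⁻¹) = q ^ 3 - 1 ∧ Algebra.trace F E ξ = a := by
  classical
  obtain ⟨core, rest, hdis, hun, δ, hδ, hδ0, hle⟩ := h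
  rw [← hE] at hun ⊢
  refine exists_primitive_pair_of_card_lt a hdis hun hδ hδ0 ?_
  set X := Finset.univ.filter fun x : {x : E // x + x⁻¹ ≠ 0} => Algebra.trace F E x.1 = a
  have hfibre : q ^ 2 ≤ X.card + 3 := by
    have hcard := card_trace_eq (E := E) a
    rw [hF, hE] at hcard
    exact (Nat.eq_of_mul_eq_mul_right (by lia) (hcard.trans (by ring))).ge.trans
      (card_trace_eq_le_card_subtype_add_three a)
  have hsq : √(q : ℝ) * √q = q := Real.mul_self_sqrt q.cast_nonneg
  have hsqrt : √(Fintype.card E : ℝ) = q * √q := by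
    rw [hE, Nat.cast_pow, Real.sqrt_eq_iff_mul_self_eq (by positivity) (by positivity)]
    linear_combination -(q : ℝ) ^ 2 * hsq
  have hlarge : (q : ℝ) ^ 2 < X.card + 3 * (q * √q) := by
    have hfibre' : (q : ℝ) ^ 2 ≤ X.card + 3 := by exact_mod_cast hfibre
    have hq' : (2 : ℝ) ≤ q := by exact_mod_cast hq
    nlinarith [Real.one_le_sqrt.2 (show (1 : ℝ) ≤ q by linarith)]
  rw [hsqrt]
  calc 4 ^ core.card * (3 * (q * √q)) * (2 * δ + 2 * rest.card - 1)
      = 3 * 4 ^ core.card * (2 * δ + 2 * rest.card - 1) * (q * √q) := by ring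
    _ ≤ δ * √q * (q * √q) := by gcongr
    _ = δ * q ^ 2 := by linear_combination δ * q * hsq
    _ < δ * (X.card + 3 * (q * √q)) := by gcongr

/-- The prime divisors of `q ^ 3 - 1` in increasing order. -/
def cubePrimes (q : ℕ) : List ℕ := (q ^ 3 - 1).primeFactors.sort

theorem sortedLT_cubePrimes : (cubePrimes q).SortedLT := Finset.sortedLT_sort _

theorem length_cubePrimes : (cubePrimes q).length = (q ^ 3 - 1).primeFactors.card :=
  Finset.length_sort _

theorem prime_of_mem_cubePrimes {p : ℕ} (h : p ∈ cubePrimes q) : p.Prime :=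
  Nat.prime_of_mem_primeFactors ((Finset.mem_sort _).1 h)

theorem dvd_of_mem_cubePrimes {p : ℕ} (h : p ∈ cubePrimes q) : p ∣ q ^ 3 - 1 :=
  Nat.dvd_of_mem_primeFactors ((Finset.mem_sort _).1 h)

theorem prod_dvd_of_nodup_of_prime {l : List ℕ} {n : ℕ} (hl : l.Nodup)
    (hprime : ∀ p ∈ l, p.Prime) (hdvd : ∀ p ∈ l, p ∣ n) : l.prod ∣ n := by
  rw [← List.map_id l, ← List.prod_toFinset _ hl]
  exact Finset.prod_primes_dvd _ (fun p hp => (hprime p (List.mem_toFinset.1 hp)).prime)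
    fun p hp => hdvd p (List.mem_toFinset.1 hp)

theorem prod_cubePrimes_le (hq : 2 ≤ q) : (cubePrimes q).prod ≤ q ^ 3 := by
  have hpos : 0 < q ^ 3 - 1 := Nat.sub_pos_of_lt (Nat.one_lt_pow three_ne_zero hq)
  exact (Nat.le_of_dvd hpos (prod_dvd_of_nodup_of_prime sortedLT_cubePrimes.nodup
    (fun _ => prime_of_mem_cubePrimes) fun _ => dvd_of_mem_cubePrimes)).trans (Nat.sub_le _ _)

theorem cast_le_mul_sqrt_of_pow_six_le {A D Q : ℕ} (h : A ^ 6 ≤ D ^ 6 * Q) (hQ : Q ≤ q ^ 3) :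
    (A : ℝ) ≤ D * √q := by
  refine le_of_pow_le_pow_left₀ (n := 6) (by norm_num) (by positivity) ?_
  calc (A : ℝ) ^ 6 ≤ D ^ 6 * q ^ 3 := by exact_mod_cast h.trans (Nat.mul_le_mul_left _ hQ)
    _ = (D * √q) ^ 6 := by
      rw [mul_pow, show (√(q : ℝ)) ^ 6 = (√q ^ 2) ^ 3 by ring, Real.sq_sqrt q.cast_nonneg]

-- The number of sieved primes enters through the truncated difference `2 * length - 1`, so that
-- the bound also forces `6 * 4 ^ core.length ≤ √q`, which makes it monotone in `d`.
theorem sieveCondition_of_perm {core rest : List ℕ} (hperm : (core ++ rest).Perm (cubePrimes q))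
    {d : ℝ} (hd : 0 < d) (hrest : 2 * (rest.map fun p : ℕ => (p : ℝ)⁻¹).sum ≤ 1 - d)
    (h : 3 * 4 ^ core.length * (2 * d + (2 * rest.length - 1 : ℕ)) ≤ d * √q) :
    SieveCondition q := by
  have hnodup := hperm.nodup_iff.2 sortedLT_cubePrimes.nodup
  obtain ⟨hcore, hrest', hdis⟩ := List.nodup_append'.1 hnodup
  have hsum : ∑ p ∈ rest.toFinset, (p : ℝ)⁻¹ = (rest.map fun p : ℕ => (p : ℝ)⁻¹).sum :=
    List.sum_toFinset _ hrest'
  refine ⟨core.toFinset, rest.toFinset, List.disjoint_toFinset_iff_disjoint.2 hdis, ?_, _, rfl,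
    by rw [hsum]; linarith, ?_⟩
  · rw [← List.toFinset_append, List.toFinset_eq_of_perm _ _ hperm]
    exact Finset.sort_toFinset _ _
  rw [hsum, List.toFinset_card_of_nodup hcore, List.toFinset_card_of_nodup hrest']
  set δ := 1 - 2 * (rest.map fun p : ℕ => (p : ℝ)⁻¹).sum
  have hdδ : d ≤ δ := by simp only [δ]; linarith
  set c : ℝ := 3 * 4 ^ core.length
  have hc : 0 ≤ c := by positivity
  have hs : 2 * (rest.length : ℝ) - 1 ≤ (2 * rest.length - 1 : ℕ) := by
    rw [sub_le_iff_le_add]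
    exact_mod_cast (show 2 * rest.length ≤ 2 * rest.length - 1 + 1 by lia)
  set s : ℝ := ((2 * rest.length - 1 : ℕ) : ℝ)
  have hs0 : 0 ≤ c * s := mul_nonneg hc (Nat.cast_nonneg _)
  have hsqrt : 0 ≤ √q - 2 * c := nonneg_of_mul_nonneg_right (by linarith) hd
  nlinarith [mul_le_mul_of_nonneg_right hdδ hsqrt, mul_le_mul_of_nonneg_left hs hc]

end SieveCondition

section Tables

/-- The increasing list `cs` contains all entries smaller than `B` of the increasing list `l`.
The entries of `cs` then bound the entries of `l` from below, position by position. -/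
structure IsTableBelow (B : ℕ) (cs l : List ℕ) : Prop where
  sortedLT_table : cs.SortedLT
  le_bound : ∀ c ∈ cs, c ≤ B
  sortedLT : l.SortedLT
  mem_or_le : ∀ x ∈ l, x ∈ cs ∨ B ≤ x

namespace IsTableBelow

variable {B c x : ℕ} {cs l : List ℕ}

theorem sublist {l' : List ℕ} (h : IsTableBelow B cs l) (hl : l'.Sublist l) :
    IsTableBelow B cs l' :=
  ⟨h.sortedLT_table, h.le_bound, (h.sortedLT.pairwise.sublist hl).sortedLT,
    fun x hx => h.mem_or_le x (hl.subset hx)⟩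

theorem head_le (h : IsTableBelow B (c :: cs) l) (hx : x ∈ l) : c ≤ x := by
  rcases h.mem_or_le x hx with hmem | hB
  · rcases List.mem_cons.1 hmem with rfl | hmem
    · exact le_rfl
    · exact (List.rel_of_pairwise_cons h.sortedLT_table.pairwise hmem).le
  · exact (h.le_bound c List.mem_cons_self).trans hB

theorem head_eq_of_mem (h : IsTableBelow B (c :: cs) (x :: l)) (hc : c ∈ x :: l) : c = x := by
  refine (h.head_le List.mem_cons_self).antisymm ?_
  rcases List.mem_cons.1 hc with rfl | hc
  · exact le_rfl
  · exact (List.rel_of_pairwise_cons h.sortedLT.pairwise hc).le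

theorem tail_of_notMem (h : IsTableBelow B (c :: cs) l) (hc : c ∉ l) : IsTableBelow B cs l where
  sortedLT_table := h.sortedLT_table.pairwise.of_cons.sortedLT
  le_bound _ hx := h.le_bound _ (List.mem_cons_of_mem _ hx)
  sortedLT := h.sortedLT
  mem_or_le x hx := (h.mem_or_le x hx).imp_left fun hmem =>
    (List.mem_cons.1 hmem).resolve_left (ne_of_mem_of_not_mem hx hc)

theorem tail_tail (h : IsTableBelow B (c :: cs) (x :: l)) : IsTableBelow B cs l :=
  (h.sublist (List.sublist_cons_self x l)).tail_of_notMem fun hc =>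
    ((h.head_le List.mem_cons_self).trans_lt
      (List.rel_of_pairwise_cons h.sortedLT.pairwise hc)).ne rfl

theorem forall₂_take_le (h : IsTableBelow B cs l) (hlen : l.length ≤ cs.length) :
    List.Forall₂ (· ≤ ·) (cs.take l.length) l := by
  induction cs generalizing l with
  | nil => simp [List.length_eq_zero_iff.1 (Nat.le_zero.1 hlen)]
  | cons c cs ih =>
    cases l with
    | nil => exact .nil
    | cons x l =>
      exact .cons (h.head_le List.mem_cons_self) (ih h.tail_tail (Nat.le_of_succ_le_succ hlen))

theorem prod_take_le (h : IsTableBelow B cs l) (hlen : l.length ≤ cs.length) {k : ℕ}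
    (hk : k ≤ l.length) : (cs.take k).prod ≤ (l.take k).prod := by
  have hle := List.forall₂_take k (h.forall₂_take_le hlen)
  rw [List.take_take, min_eq_left hk] at hle
  exact hle.prod_le_prod'

theorem prod_take_succ_le_gcd_or_prod_take_mul_pow_le (h : IsTableBelow B cs l)
    (hlen : l.length ≤ cs.length) {n : ℕ} (hn : 0 < n) (hprime : ∀ p ∈ l, p.Prime)
    (hdvd : ∀ p ∈ l, p ∣ n) {k : ℕ} (hk : k ≤ l.length) :
    (cs.take (k + 1)).prod ≤ n.gcd cs.prod ∨
      (cs.take k).prod * B ^ (l.length - k) ≤ l.prod := by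
  by_cases hB : ∀ x ∈ l.drop k, B ≤ x
  · right
    rw [← List.prod_take_mul_prod_drop l k, ← List.length_drop]
    exact Nat.mul_le_mul (h.prod_take_le hlen hk) (List.pow_card_le_prod _ _ hB)
  · left
    obtain ⟨x, hx, hxB⟩ : ∃ x ∈ l.drop k, x < B := by simpa using hB
    obtain ⟨i, hi, rfl⟩ := List.mem_iff_getElem.1 hx
    have hk' : k + 1 ≤ l.length := by
      rw [List.length_drop] at hi
      lia
    have hcs : ∀ p ∈ l.take (k + 1), p ∈ cs := by
      intro p hp
      obtain ⟨j, hj, rfl⟩ := List.mem_take_iff_getElem.1 hp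
      refine (h.mem_or_le _ (List.getElem_mem _)).resolve_right (not_le.2 (lt_of_le_of_lt ?_ hxB))
      rw [List.getElem_drop]
      exact h.sortedLT.strictMono_get.monotone (show (⟨j, _⟩ : Fin _) ≤ ⟨k + i, _⟩ by
        simp only [Fin.mk_le_mk]; lia)
    have hmem {p : ℕ} : p ∈ l.take (k + 1) → p ∈ l := List.mem_of_mem_take
    exact (h.prod_take_le hlen hk').trans <| Nat.le_of_dvd (Nat.gcd_pos_of_pos_left _ hn) <|
      prod_dvd_of_nodup_of_prime (h.sublist (List.take_sublist _ _)).sortedLT.nodup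
        (fun p hp => hprime p (hmem hp))
        fun p hp => Nat.dvd_gcd (hdvd p (hmem hp)) (List.dvd_prod (hcs p hp))

end IsTableBelow

end Tables

section PrimeCandidates

variable {m r B p : ℕ}

/-- The integers `2 ≤ n < B` in the residue class of `r` modulo `m` without a proper divisor
`2 ≤ d < 78`, in increasing order. For `B ≤ 79 ^ 2` these are the primes in this class. -/
def primeCandidates (m r B : ℕ) : List ℕ :=
  (List.range B).filter fun n => n % m = r ∧ 2 ≤ n ∧ ∀ d ∈ List.range' 2 76, d ∣ n → d = n

theorem mem_primeCandidates_of_prime (hp : p.Prime) (hr : p % m = r) (hB : p < B) :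
    p ∈ primeCandidates m r B := by
  refine List.mem_filter.2
    ⟨List.mem_range.2 hB, decide_eq_true ⟨hr, hp.two_le, fun d hd hdvd => ?_⟩⟩
  exact ((Nat.dvd_prime hp).1 hdvd).resolve_left
    (Nat.lt_of_succ_le (List.mem_range'_1.1 hd).1).ne'

theorem pos_of_mem_primeCandidates (hp : p ∈ primeCandidates m r B) : 0 < p :=
  zero_lt_two.trans_le (of_decide_eq_true (List.mem_filter.1 hp).2).2.1

theorem isTableBelow_primeCandidates {l : List ℕ} (hl : l.SortedLT) (hprime : ∀ p ∈ l, p.Prime)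
    (hr : ∀ p ∈ l, p % m = r) : IsTableBelow B (primeCandidates m r B) l where
  sortedLT_table := (List.pairwise_lt_range.filter _).sortedLT
  le_bound _ hc := (List.mem_range.1 (List.mem_filter.1 hc).1).le
  sortedLT := hl
  mem_or_le p hp := (lt_or_ge p B).imp_left
    (mem_primeCandidates_of_prime (hprime p hp) (hr p hp))

end PrimeCandidates

section SieveTest

variable {q : ℕ}

/-- An upper bound for `10 ^ 6` times the sum of the reciprocals of the entries of `l`. -/
def reciprocalBound (l : List ℕ) : ℕ := (l.map fun p => 10 ^ 6 / p + 1).sum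

/-- The inequality of `SieveCondition` in integer arithmetic, for a core of `k` primes, lower bounds
`R` for the remaining primes and a lower bound `Q` for `q ^ 3`; here `δ` is bounded below by an
integer multiple of `10⁻⁶`, and sixth powers remove the square root. -/
def sieveTest (k : ℕ) (R : List ℕ) (Q : ℕ) : Bool :=
  2 * reciprocalBound R < 10 ^ 6 ∧
    (3 * 4 ^ k * (2 * (10 ^ 6 - 2 * reciprocalBound R) + (2 * R.length - 1) * 10 ^ 6)) ^ 6 ≤
      (10 ^ 6 - 2 * reciprocalBound R) ^ 6 * Q

theorem inv_le_reciprocalBound_div {a b : ℕ} (ha : 0 < a) (hab : a ≤ b) :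
    (b : ℝ)⁻¹ ≤ (10 ^ 6 / a + 1 : ℕ) / 10 ^ 6 := by
  have hlt : 10 ^ 6 < (10 ^ 6 / a + 1) * a := by
    rw [add_one_mul]
    exact Nat.lt_div_mul_add ha
  have ha' : (0 : ℝ) < a := Nat.cast_pos.2 ha
  calc (b : ℝ)⁻¹ ≤ (a : ℝ)⁻¹ := inv_anti₀ ha' (Nat.cast_le.2 hab)
    _ ≤ (10 ^ 6 / a + 1 : ℕ) / 10 ^ 6 := by
      rw [inv_le_iff_one_le_mul₀ ha', div_mul_eq_mul_div, one_le_div (by norm_num)]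
      exact_mod_cast hlt.le

theorem sum_inv_le_reciprocalBound_div {R l : List ℕ} (h : List.Forall₂ (· ≤ ·) R l)
    (hR : ∀ x ∈ R, 0 < x) :
    (l.map fun p : ℕ => (p : ℝ)⁻¹).sum ≤ reciprocalBound R / 10 ^ 6 := by
  induction h with
  | nil => simp [reciprocalBound]
  | @cons a b R l hab _ ih =>
    have hhead := inv_le_reciprocalBound_div (hR a List.mem_cons_self) hab
    have htail := ih fun x hx => hR x (List.mem_cons_of_mem _ hx)
    rw [reciprocalBound] at htail ⊢
    rw [List.map_cons, List.sum_cons, List.map_cons, List.sum_cons, Nat.cast_add, add_div]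
    exact add_le_add hhead htail

theorem sieveCondition_of_sieveTest {core rest R : List ℕ}
    (hperm : (core ++ rest).Perm (cubePrimes q)) (hR : List.Forall₂ (· ≤ ·) R rest)
    (hR0 : ∀ x ∈ R, 0 < x) {Q : ℕ} (hQ : Q ≤ q ^ 3) (h : sieveTest core.length R Q = true) :
    SieveCondition q := by
  obtain ⟨hr, htest⟩ := of_decide_eq_true h
  obtain ⟨D, hD⟩ : ∃ D, D + 2 * reciprocalBound R = 10 ^ 6 := ⟨_, Nat.sub_add_cancel hr.le⟩
  have hD0 : (0 : ℝ) < D := Nat.cast_pos.2 (by lia)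
  have hDcast : (D : ℝ) + 2 * reciprocalBound R = 10 ^ 6 := by exact_mod_cast hD
  rw [← Nat.eq_sub_of_add_eq hD, hR.length_eq] at htest
  refine sieveCondition_of_perm hperm (d := D / 10 ^ 6) (by positivity) ?_ ?_
  · calc 2 * (rest.map fun p : ℕ => (p : ℝ)⁻¹).sum
        ≤ 2 * (reciprocalBound R / 10 ^ 6) := by gcongr; exact sum_inv_le_reciprocalBound_div hR hR0
      _ = 1 - D / 10 ^ 6 := by rw [← hDcast]; field_simp; ring
  · have hsqrt : 3 * 4 ^ core.length * (2 * D + (2 * rest.length - 1 : ℕ) * 10 ^ 6) ≤ D * √q := by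
      exact_mod_cast cast_le_mul_sqrt_of_pow_six_le htest hQ
    calc 3 * 4 ^ core.length * (2 * (D / 10 ^ 6) + ((2 * rest.length - 1 : ℕ) : ℝ))
        = 3 * 4 ^ core.length * (2 * D + (2 * rest.length - 1 : ℕ) * 10 ^ 6) / 10 ^ 6 := by ring
      _ ≤ D * √q / 10 ^ 6 := by gcongr
      _ = D / 10 ^ 6 * √q := by ring

end SieveTest

section ManyPrimes

variable {q : ℕ}

/-- The first 200 primes. -/
def smallPrimes : List ℕ := primeCandidates 1 0 1224

theorem length_smallPrimes : smallPrimes.length = 200 := by decide +kernel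

theorem isTableBelow_smallPrimes : IsTableBelow 1224 smallPrimes (cubePrimes q) :=
  isTableBelow_primeCandidates sortedLT_cubePrimes (fun _ => prime_of_mem_cubePrimes)
    fun p _ => Nat.mod_one p

theorem sieveTest_smallPrimes : ∀ t ∈ List.range 201, 29 ≤ t →
    sieveTest (t / 5 + 2) ((smallPrimes.take t).drop (t / 5 + 2)) (smallPrimes.take t).prod =
      true := by
  decide +kernel

theorem sieveCondition_of_card_mem_Icc (hq : 2 ≤ q)
    (h : (q ^ 3 - 1).primeFactors.card ∈ Set.Icc 29 200) : SieveCondition q := by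
  rw [← length_cubePrimes] at h
  set t := (cubePrimes q).length
  have hle : List.Forall₂ (· ≤ ·) (smallPrimes.take t) (cubePrimes q) :=
    isTableBelow_smallPrimes.forall₂_take_le (h.2.trans_eq length_smallPrimes.symm)
  have hprod : (smallPrimes.take t).prod ≤ q ^ 3 := hle.prod_le_prod'.trans (prod_cubePrimes_le hq)
  refine sieveCondition_of_sieveTest (core := (cubePrimes q).take (t / 5 + 2))
    (by rw [List.take_append_drop]) (List.forall₂_drop (t / 5 + 2) hle)
    (fun x hx => pos_of_mem_primeCandidates (List.mem_of_mem_take (List.mem_of_mem_drop hx)))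
    hprod ?_
  rw [List.length_take_of_le (show t / 5 + 2 ≤ t by have := h.1; lia)]
  exact sieveTest_smallPrimes t (List.mem_range.2 (Nat.lt_succ_of_le h.2)) h.1

theorem two_mul_le_getElem_of_prime {l : List ℕ} (hl : l.SortedLT) (hprime : ∀ p ∈ l, p.Prime)
    {i : ℕ} (hi : i < l.length) : 2 * i ≤ l[i] ∧ (1 ≤ i → 2 * i + 1 ≤ l[i]) := by
  induction i with
  | zero => simp
  | succ i ih =>
    have hi' : i < l.length := Nat.lt_of_succ_lt hi
    have hlt : l[i] < l[i + 1] := hl.getElem_lt_getElem_of_lt (Nat.lt_succ_self i)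
    have hp := hprime l[i] (List.getElem_mem hi')
    rcases hp.eq_two_or_odd, (hprime l[i + 1] (List.getElem_mem hi)).eq_two_or_odd with
      ⟨h | h, h' | h'⟩ <;> have := hp.two_le <;> have := ih hi' <;> lia

theorem two_mul_le_of_mem_drop_cubePrimes {k p : ℕ} (hp : p ∈ (cubePrimes q).drop k) :
    2 * k ≤ p := by
  obtain ⟨i, hi, rfl⟩ := List.mem_iff_getElem.1 hp
  rw [List.getElem_drop]
  exact (Nat.mul_le_mul_left 2 (Nat.le_add_right k i)).trans
    (two_mul_le_getElem_of_prime sortedLT_cubePrimes (fun _ => prime_of_mem_cubePrimes) _).1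

theorem pow_mul_pow_le_prod_smallPrimes_mul_pow {t : ℕ} (ht : 200 ≤ t) :
    (4 * t) ^ 6 * 4 ^ (4 * t + 4) ≤ smallPrimes.prod * 400 ^ (t - 200) := by
  induction t, ht using Nat.le_induction with
  | base => decide +kernel
  | succ t ht ih =>
    have hstep : 256 * (t + 1) ^ 6 ≤ 400 * t ^ 6 := by
      have hbase : (200 * (t + 1)) ^ 6 ≤ (201 * t) ^ 6 := Nat.pow_le_pow_left (by lia) 6
      rw [mul_pow, mul_pow] at hbase
      lia
    calc (4 * (t + 1)) ^ 6 * 4 ^ (4 * (t + 1) + 4)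
        = 4 ^ 6 * 4 ^ (4 * t + 4) * (256 * (t + 1) ^ 6) := by ring
      _ ≤ 4 ^ 6 * 4 ^ (4 * t + 4) * (400 * t ^ 6) := Nat.mul_le_mul_left _ hstep
      _ = (4 * t) ^ 6 * 4 ^ (4 * t + 4) * 400 := by ring
      _ ≤ smallPrimes.prod * 400 ^ (t - 200) * 400 := Nat.mul_le_mul_right _ ih
      _ = smallPrimes.prod * 400 ^ (t + 1 - 200) := by
        rw [mul_assoc, ← pow_succ, Nat.sub_add_comm ht]

theorem prod_smallPrimes_mul_pow_le_prod_cubePrimes (h : 200 ≤ (cubePrimes q).length) :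
    smallPrimes.prod * 400 ^ ((cubePrimes q).length - 200) ≤ (cubePrimes q).prod := by
  rw [← List.prod_take_mul_prod_drop (cubePrimes q) 200, ← List.length_drop]
  refine Nat.mul_le_mul ?_
    (List.pow_card_le_prod _ _ fun p hp => two_mul_le_of_mem_drop_cubePrimes hp)
  have hle := (isTableBelow_smallPrimes.sublist (List.take_sublist 200 (cubePrimes q))).prod_take_le
    (k := 200) (by rw [List.length_take_of_le h, length_smallPrimes])
    (List.length_take_of_le h).ge
  rwa [List.take_of_length_le length_smallPrimes.le, List.take_take, min_self] at hle

theorem two_mul_sum_inv_drop_cubePrimes_le {k : ℕ} (hk : 0 < k)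
    (hlen : 2 * ((cubePrimes q).drop k).length ≤ k) :
    2 * (((cubePrimes q).drop k).map fun p : ℕ => (p : ℝ)⁻¹).sum ≤ 1 - 1 / 2 := by
  have hk' : (0 : ℝ) < k := Nat.cast_pos.2 hk
  have hinv : ∀ x ∈ ((cubePrimes q).drop k).map fun p : ℕ => (p : ℝ)⁻¹, x ≤ (2 * k : ℝ)⁻¹ := by
    simp only [List.mem_map, forall_exists_index, and_imp, forall_apply_eq_imp_iff₂]
    intro p hp
    exact inv_anti₀ (by positivity) (by exact_mod_cast two_mul_le_of_mem_drop_cubePrimes hp)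
  have hsum := List.sum_le_card_nsmul _ _ hinv
  rw [List.length_map, nsmul_eq_mul, ← div_eq_mul_inv, le_div_iff₀ (by positivity)] at hsum
  have hlen' : (2 * ((cubePrimes q).drop k).length : ℝ) ≤ k := by exact_mod_cast hlen
  nlinarith

-- A third of the primes is sieved; as the `i`-th prime is at least `2 * i`, this leaves
-- `δ ≥ 1 / 2`.
theorem sieveCondition_of_two_hundred_le_card (hq : 2 ≤ q)
    (h : 200 ≤ (q ^ 3 - 1).primeFactors.card) : SieveCondition q := by
  rw [← length_cubePrimes] at h
  set t := (cubePrimes q).length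
  obtain ⟨k, s, hkt, hsk, hk, hst, hs⟩ : ∃ k s : ℕ,
      k + s = t ∧ 2 * s ≤ k ∧ 6 * k ≤ 4 * t + 4 ∧ 3 * s ≤ t ∧ 0 < s :=
    ⟨t - t / 3, t / 3, by lia, by lia, by lia, by lia, by lia⟩
  have hcore : ((cubePrimes q).take k).length = k := List.length_take_of_le (by lia)
  have hrest : ((cubePrimes q).drop k).length = s := by rw [List.length_drop]; lia
  have hsqrt : (4 * t * 4 ^ k : ℝ) ≤ √q := by
    have hpow : (4 * t * 4 ^ k) ^ 6 ≤ q ^ 3 := calc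
      (4 * t * 4 ^ k) ^ 6 = (4 * t) ^ 6 * 4 ^ (6 * k) := by ring
      _ ≤ (4 * t) ^ 6 * 4 ^ (4 * t + 4) := by gcongr; norm_num
      _ ≤ smallPrimes.prod * 400 ^ (t - 200) := pow_mul_pow_le_prod_smallPrimes_mul_pow h
      _ ≤ q ^ 3 := (prod_smallPrimes_mul_pow_le_prod_cubePrimes h).trans (prod_cubePrimes_le hq)
    have hle := cast_le_mul_sqrt_of_pow_six_le (A := 4 * t * 4 ^ k) (D := 1) (Q := q ^ 3)
      (by rwa [one_pow, one_mul]) le_rfl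
    rw [Nat.cast_one, one_mul] at hle
    exact_mod_cast hle
  refine sieveCondition_of_perm (d := 1 / 2) (by rw [List.take_append_drop k]) (by norm_num)
    (two_mul_sum_inv_drop_cubePrimes_le (by lia) (by lia)) ?_
  have hcast : ((2 * s - 1 : ℕ) : ℝ) = 2 * s - 1 := by
    push_cast [Nat.cast_sub (show 1 ≤ 2 * s by lia)]
    rfl
  have hst' : (3 * s : ℝ) ≤ t := by exact_mod_cast hst
  rw [hcore, hrest, hcast]
  calc (3 * 4 ^ k * (2 * (1 / 2) + (2 * s - 1)) : ℝ) = 2 * (3 * s) * 4 ^ k := by ring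
    _ ≤ 2 * t * 4 ^ k := by gcongr
    _ = 1 / 2 * (4 * t * 4 ^ k) := by ring
    _ ≤ 1 / 2 * √q := by gcongr

end ManyPrimes

section ResidueClasses

variable {p q r : ℕ}

theorem dvd_sub_one_of_dvd_pow_three_sub_one (hq : 1 ≤ q) (hp : p.Prime) (h3 : p % 3 ≠ 1)
    (h : p ∣ q ^ 3 - 1) : p ∣ q - 1 := by
  have : Fact p.Prime := ⟨hp⟩
  rw [← ZMod.natCast_eq_zero_iff, Nat.cast_sub (Nat.one_le_pow 3 q hq), Nat.cast_pow, Nat.cast_one,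
    sub_eq_zero] at h
  rw [← ZMod.natCast_eq_zero_iff, Nat.cast_sub hq, Nat.cast_one, sub_eq_zero]
  have hfermat : (q : ZMod p) ^ (p % 3) = q := by rw [← pow_eq_pow_mod p h, ZMod.pow_card]
  obtain h0 | h2 : p % 3 = 0 ∨ p % 3 = 2 := by lia
  · rw [← hfermat, h0, pow_zero]
  · rw [h2] at hfermat
    rw [← h, pow_succ, hfermat, ← sq, hfermat]

theorem nine_dvd_pow_three_sub_one (h : 3 ∣ q - 1) : 9 ∣ q ^ 3 - 1 := by
  rcases Nat.eq_zero_or_pos q with rfl | hq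
  · simp
  obtain ⟨k, hk⟩ := h
  obtain rfl : q = 3 * k + 1 := by lia
  exact ⟨k * (3 * k * k + 3 * k + 1), Nat.sub_eq_of_eq_add (by ring)⟩

/-- The prime divisors of `q ^ 3 - 1` in the residue class of `r` modulo `3`, in increasing
order. -/
def cubePrimesMod (q r : ℕ) : List ℕ := (cubePrimes q).filter (· % 3 = r)

theorem mem_cubePrimesMod : p ∈ cubePrimesMod q r ↔ p ∈ cubePrimes q ∧ p % 3 = r := by
  rw [cubePrimesMod, List.mem_filter, decide_eq_true_iff]

theorem sortedLT_cubePrimesMod : (cubePrimesMod q r).SortedLT :=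
  (sortedLT_cubePrimes.pairwise.sublist List.filter_sublist).sortedLT

theorem prime_of_mem_cubePrimesMod (h : p ∈ cubePrimesMod q r) : p.Prime :=
  prime_of_mem_cubePrimes (mem_cubePrimesMod.1 h).1

theorem dvd_of_mem_cubePrimesMod (h : p ∈ cubePrimesMod q r) : p ∣ q ^ 3 - 1 :=
  dvd_of_mem_cubePrimes (mem_cubePrimesMod.1 h).1

theorem disjoint_cubePrimesMod {s : ℕ} (hrs : r ≠ s) :
    (cubePrimesMod q r).Disjoint (cubePrimesMod q s) := fun _ hr hs =>
  hrs ((mem_cubePrimesMod.1 hr).2.symm.trans (mem_cubePrimesMod.1 hs).2)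

theorem cubePrimesMod_append_perm :
    (cubePrimesMod q 0 ++ (cubePrimesMod q 2 ++ cubePrimesMod q 1)).Perm (cubePrimes q) := by
  have hnodup (r : ℕ) : (cubePrimesMod q r).Nodup := sortedLT_cubePrimesMod.nodup
  refine (List.perm_ext_iff_of_nodup ?_ sortedLT_cubePrimes.nodup).2 fun p => ?_
  · exact (hnodup 0).append ((hnodup 2).append (hnodup 1) (disjoint_cubePrimesMod (by decide)))
      (List.disjoint_append_right.2
        ⟨disjoint_cubePrimesMod (by decide), disjoint_cubePrimesMod (by decide)⟩)
  · simp only [List.mem_append, mem_cubePrimesMod]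
    have : p % 3 < 3 := Nat.mod_lt p three_pos
    grind

theorem cubePrimesMod_zero_eq_replicate :
    cubePrimesMod q 0 = List.replicate (cubePrimesMod q 0).length 3 :=
  List.eq_replicate_length.2 fun _ hp =>
    ((Nat.prime_dvd_prime_iff_eq Nat.prime_three (prime_of_mem_cubePrimesMod hp)).1
      (Nat.dvd_of_mod_eq_zero (mem_cubePrimesMod.1 hp).2)).symm

theorem length_cubePrimesMod_zero_le_one : (cubePrimesMod q 0).length ≤ 1 :=
  List.nodup_replicate.1 (cubePrimesMod_zero_eq_replicate ▸ sortedLT_cubePrimesMod.nodup)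

theorem length_cubePrimesMod_add : (cubePrimesMod q 0).length + (cubePrimesMod q 2).length +
    (cubePrimesMod q 1).length = (q ^ 3 - 1).primeFactors.card := by
  rw [← length_cubePrimes, ← cubePrimesMod_append_perm.length_eq, List.length_append,
    List.length_append, add_assoc]

theorem pow_mul_prod_cubePrimesMod_two_dvd (hq : 1 ≤ q) :
    3 ^ (cubePrimesMod q 0).length * (cubePrimesMod q 2).prod ∣ q - 1 := by
  rw [← List.prod_replicate, ← cubePrimesMod_zero_eq_replicate, ← List.prod_append]
  have hmem {p : ℕ} (hp : p ∈ cubePrimesMod q 0 ++ cubePrimesMod q 2) :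
      p ∈ cubePrimes q ∧ p % 3 ≠ 1 := by
    rcases List.mem_append.1 hp with hp | hp <;>
      exact ⟨(mem_cubePrimesMod.1 hp).1, (mem_cubePrimesMod.1 hp).2.trans_ne (by decide)⟩
  exact prod_dvd_of_nodup_of_prime (sortedLT_cubePrimesMod.nodup.append
    sortedLT_cubePrimesMod.nodup (disjoint_cubePrimesMod (by decide)))
    (fun p hp => prime_of_mem_cubePrimes (hmem hp).1) fun p hp =>
      dvd_sub_one_of_dvd_pow_three_sub_one hq (prime_of_mem_cubePrimes (hmem hp).1) (hmem hp).2
        (dvd_of_mem_cubePrimes (hmem hp).1)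

theorem nine_pow_dvd_pow_three_sub_one (hq : 1 ≤ q) :
    9 ^ (cubePrimesMod q 0).length ∣ q ^ 3 - 1 := by
  rcases Nat.le_one_iff_eq_zero_or_eq_one.1 (length_cubePrimesMod_zero_le_one (q := q)) with h | h
  · rw [h, pow_zero]
    exact one_dvd _
  · have hdvd := pow_mul_prod_cubePrimesMod_two_dvd hq
    rw [h, pow_one] at hdvd ⊢
    exact nine_dvd_pow_three_sub_one (dvd_of_mul_right_dvd hdvd)

theorem pow_mul_prod_cubePrimesMod_dvd (hq : 1 ≤ q) :
    9 ^ (cubePrimesMod q 0).length * ((cubePrimesMod q 2).prod * (cubePrimesMod q 1).prod) ∣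
      q ^ 3 - 1 := by
  have hmem {p : ℕ} (hp : p ∈ cubePrimesMod q 2 ++ cubePrimesMod q 1) :
      p ∈ cubePrimes q ∧ p % 3 ≠ 0 := by
    rcases List.mem_append.1 hp with hp | hp <;>
      exact ⟨(mem_cubePrimesMod.1 hp).1, (mem_cubePrimesMod.1 hp).2.trans_ne (by decide)⟩
  rw [← List.prod_append]
  refine Nat.Coprime.mul_dvd_of_dvd_of_dvd (Nat.Coprime.pow_left _ ?_)
    (nine_pow_dvd_pow_three_sub_one hq)
    (prod_dvd_of_nodup_of_prime (sortedLT_cubePrimesMod.nodup.append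
      sortedLT_cubePrimesMod.nodup (disjoint_cubePrimesMod (by decide)))
      (fun p hp => prime_of_mem_cubePrimes (hmem hp).1)
      fun p hp => dvd_of_mem_cubePrimes (hmem hp).1)
  refine Nat.coprime_list_prod_right_iff.2 fun p hp => ?_
  exact Nat.Coprime.pow_left (m := 3) 2 <| Nat.prime_three.coprime_iff_not_dvd.2
    fun h => (hmem hp).2 (Nat.mod_eq_zero_of_dvd h)

theorem pow_mul_prod_cubePrimesMod_lt (hq : 2 ≤ q) :
    9 ^ (cubePrimesMod q 0).length * ((cubePrimesMod q 2).prod * (cubePrimesMod q 1).prod) <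
      q ^ 3 := by
  have hlt : 1 < q ^ 3 := Nat.one_lt_pow three_ne_zero hq
  exact (Nat.le_of_dvd (Nat.sub_pos_of_lt hlt)
    (pow_mul_prod_cubePrimesMod_dvd (by lia))).trans_lt (Nat.sub_one_lt (by lia))

/-- A lower bound for `q ^ 3` in terms of the multiplicity `h` of the prime `3` and lower bounds
`L₂` and `L₁` for the prime divisors of `q ^ 3 - 1` in the residue classes of `2` and `1` modulo
`3`. -/
def cubeLowerBound (h : ℕ) (L₂ L₁ : List ℕ) : ℕ :=
  max ((3 ^ h * L₂.prod) ^ 3) (9 ^ h * (L₂.prod * L₁.prod))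

theorem cubeLowerBound_le (hq : 2 ≤ q) {L₂ L₁ : List ℕ}
    (h₂ : List.Forall₂ (· ≤ ·) L₂ (cubePrimesMod q 2))
    (h₁ : List.Forall₂ (· ≤ ·) L₁ (cubePrimesMod q 1)) :
    cubeLowerBound (cubePrimesMod q 0).length L₂ L₁ ≤ q ^ 3 := by
  refine max_le (Nat.pow_le_pow_left ?_ 3) ?_
  · exact (Nat.mul_le_mul_left _ h₂.prod_le_prod').trans ((Nat.le_of_dvd (by lia)
      (pow_mul_prod_cubePrimesMod_two_dvd (by lia))).trans (Nat.sub_le q 1))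
  · exact (Nat.mul_le_mul_left _ (Nat.mul_le_mul h₂.prod_le_prod' h₁.prod_le_prod')).trans
      (pow_mul_prod_cubePrimesMod_lt hq).le

end ResidueClasses

section SplitTest

variable {q : ℕ} {L₂ L₁ : List ℕ}

/-- `sieveTest` for the core consisting of `h` copies of the prime `3` and of the first `a` and `b`
prime divisors of `q ^ 3 - 1` in the residue classes of `2` and `1` modulo `3`, where `L₂` and `L₁`
bound the prime divisors in these classes from below. -/
def splitTest (h : ℕ) (L₂ L₁ : List ℕ) (Q a b : ℕ) : Bool :=
  sieveTest (h + (L₂.take a).length + (L₁.take b).length) (L₂.drop a ++ L₁.drop b) Q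

/-- One of the given splits passes `splitTest` with the bound for `q ^ 3` obtained from `L₂` and
`L₁`. -/
def boundTest (h : ℕ) (L₂ L₁ : List ℕ) (splits : List (ℕ × ℕ)) : Bool :=
  splits.any fun c => splitTest h L₂ L₁ (cubeLowerBound h L₂ L₁) c.1 c.2

theorem sieveCondition_of_splitTest (h₂ : List.Forall₂ (· ≤ ·) L₂ (cubePrimesMod q 2))
    (h₁ : List.Forall₂ (· ≤ ·) L₁ (cubePrimesMod q 1)) (hpos : ∀ x ∈ L₂ ++ L₁, 0 < x)
    {Q a b : ℕ} (hQ : Q ≤ q ^ 3)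
    (h : splitTest (cubePrimesMod q 0).length L₂ L₁ Q a b = true) : SieveCondition q := by
  refine sieveCondition_of_sieveTest
    (core := cubePrimesMod q 0 ++ ((cubePrimesMod q 2).take a ++ (cubePrimesMod q 1).take b))
    (rest := (cubePrimesMod q 2).drop a ++ (cubePrimesMod q 1).drop b)
    ?_ (List.rel_append (List.forall₂_drop a h₂) (List.forall₂_drop b h₁)) ?_ hQ ?_
  · refine List.Perm.trans ?_ cubePrimesMod_append_perm
    conv_rhs => rw [← List.take_append_drop a (cubePrimesMod q 2),
      ← List.take_append_drop b (cubePrimesMod q 1)]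
    simp only [List.append_assoc]
    exact (List.perm_append_comm_assoc _ _ _).append_left _ |>.append_left _
  · intro x hx
    exact hpos x ((List.mem_append.1 hx).elim
      (fun hx => List.mem_append_left _ (List.mem_of_mem_drop hx))
      fun hx => List.mem_append_right _ (List.mem_of_mem_drop hx))
  · rwa [List.length_append, List.length_append, ← (List.forall₂_take a h₂).length_eq,
      ← (List.forall₂_take b h₁).length_eq, ← add_assoc]

theorem sieveCondition_of_boundTest (hq : 2 ≤ q)
    (h₂ : List.Forall₂ (· ≤ ·) L₂ (cubePrimesMod q 2))
    (h₁ : List.Forall₂ (· ≤ ·) L₁ (cubePrimesMod q 1)) (hpos : ∀ x ∈ L₂ ++ L₁, 0 < x)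
    {splits : List (ℕ × ℕ)} (h : boundTest (cubePrimesMod q 0).length L₂ L₁ splits = true) :
    SieveCondition q := by
  obtain ⟨c, -, hc⟩ := List.any_eq_true.1 h
  exact sieveCondition_of_splitTest h₂ h₁ hpos (cubeLowerBound_le hq h₂ h₁) hc

end SplitTest

section ResidueTables

variable {q t₂ t₁ : ℕ}

/-- The primes below `620` that are congruent to `1` modulo `3`. -/
def primesOneMod : List ℕ := primeCandidates 3 1 620

/-- The primes below `6000` that are congruent to `2` modulo `3`. -/
def primesTwoMod : List ℕ := primeCandidates 3 2 6000

theorem le_length_primesOneMod : 28 ≤ primesOneMod.length := by decide +kernel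

theorem le_length_primesTwoMod : 28 ≤ primesTwoMod.length := by decide +kernel

theorem isTableBelow_primesOneMod : IsTableBelow 620 primesOneMod (cubePrimesMod q 1) :=
  isTableBelow_primeCandidates sortedLT_cubePrimesMod (fun _ => prime_of_mem_cubePrimesMod)
    fun _ hp => (mem_cubePrimesMod.1 hp).2

theorem isTableBelow_primesTwoMod : IsTableBelow 6000 primesTwoMod (cubePrimesMod q 2) :=
  isTableBelow_primeCandidates sortedLT_cubePrimesMod (fun _ => prime_of_mem_cubePrimesMod)
    fun _ hp => (mem_cubePrimesMod.1 hp).2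

theorem forall₂_take_primesOneMod_le (h : (cubePrimesMod q 1).length ≤ 28) :
    List.Forall₂ (· ≤ ·) (primesOneMod.take (cubePrimesMod q 1).length) (cubePrimesMod q 1) :=
  isTableBelow_primesOneMod.forall₂_take_le (h.trans le_length_primesOneMod)

theorem forall₂_take_primesTwoMod_le (h : (cubePrimesMod q 2).length ≤ 28) :
    List.Forall₂ (· ≤ ·) (primesTwoMod.take (cubePrimesMod q 2).length) (cubePrimesMod q 2) :=
  isTableBelow_primesTwoMod.forall₂_take_le (h.trans le_length_primesTwoMod)

theorem pos_of_mem_take_append_take :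
    ∀ x ∈ primesTwoMod.take t₂ ++ primesOneMod.take t₁, 0 < x := fun _ hx =>
  (List.mem_append.1 hx).elim (fun hx => pos_of_mem_primeCandidates (List.mem_of_mem_take hx))
    fun hx => pos_of_mem_primeCandidates (List.mem_of_mem_take hx)

end ResidueTables

section Search

variable {q P T M n k j LO HI : ℕ}

/-- `gcd (x ^ 3 - 1, P) < T` for the first `k` terms `x` of the progression `n, n + M, …`. -/
def gcdTest (P T M n : ℕ) : ℕ → Bool
  | 0 => true
  | k + 1 => Nat.blt (((n + M * k) ^ 3 - 1).gcd P) T && gcdTest P T M n k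

theorem gcd_lt_of_gcdTest (h : gcdTest P T M n k = true) (hj : j < k) :
    ((n + M * j) ^ 3 - 1).gcd P < T := by
  induction k with
  | zero => exact absurd hj (Nat.not_lt_zero j)
  | succ k ih =>
    rw [gcdTest, Bool.and_eq_true, Nat.blt_eq] at h
    rcases Nat.lt_succ_iff_lt_or_eq.1 hj with hj | rfl
    · exact ih h.2 hj
    · exact h.1

/-- Excludes every `q` with `LO + 1 < q < HI`, where `q ≡ 1` modulo `M` and `q ^ 3 - 1` has `t`
prime divisors congruent to `1` modulo `3`: either at least `t - 4` of them lie below `620`, which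
makes the greatest common divisor of `q ^ 3 - 1` and `primesOneMod.prod` large, or five of them
exceed `620`, which makes `q ^ 3 - 1` large. -/
def leafTest (t LO HI M : ℕ) : Bool :=
  HI ^ 3 ≤ 3 * M * ((primesOneMod.take (t - 5)).prod * 620 ^ (t - (t - 5))) &&
    gcdTest primesOneMod.prod (primesOneMod.take (t - 5 + 1)).prod M (M * (LO / M + 1) + 1)
      (HI / M - LO / M)

theorem le_of_leafTest (hq : 2 ≤ q) (h₀ : (cubePrimesMod q 0).length = 1)
    (hlen : (cubePrimesMod q 1).length ≤ 28) (hLO : LO + 1 < q)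
    (h : leafTest (cubePrimesMod q 1).length LO HI (3 * (cubePrimesMod q 2).prod) = true) :
    HI ≤ q := by
  by_contra! hHI
  have hdvd := pow_mul_prod_cubePrimesMod_two_dvd (q := q) (by lia)
  have hlt := pow_mul_prod_cubePrimesMod_lt hq
  rw [h₀, pow_one] at hdvd hlt
  obtain ⟨hprod, hgcd⟩ := (Bool.and_eq_true _ _).mp h
  have hprod := of_decide_eq_true hprod
  have hpos : 0 < q ^ 3 - 1 := Nat.sub_pos_of_lt (Nat.one_lt_pow three_ne_zero hq)
  rcases isTableBelow_primesOneMod.prod_take_succ_le_gcd_or_prod_take_mul_pow_le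
      (hlen.trans le_length_primesOneMod) hpos (fun _ => prime_of_mem_cubePrimesMod)
      (fun _ => dvd_of_mem_cubePrimesMod) (Nat.sub_le _ 5) with hlarge | hlarge
  · set M := 3 * (cubePrimesMod q 2).prod
    obtain ⟨J, hJ⟩ := hdvd
    have hM : 0 < M := Nat.pos_of_ne_zero fun hM => by rw [hM, zero_mul] at hJ; lia
    have hJlow : LO / M < J := Nat.div_lt_of_lt_mul (by lia)
    have hJhigh : J ≤ HI / M := (Nat.le_div_iff_mul_le hM).2 (by rw [mul_comm]; lia)
    have hqJ : q = M * (LO / M + 1) + 1 + M * (J - (LO / M + 1)) := by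
      rw [add_right_comm, ← mul_add, Nat.add_sub_of_le hJlow]
      lia
    have hsmall := gcd_lt_of_gcdTest hgcd (j := J - (LO / M + 1)) (by lia)
    rw [← hqJ] at hsmall
    exact hlarge.not_gt hsmall
  · have hcube : HI ^ 3 ≤ 9 * ((cubePrimesMod q 2).prod * (cubePrimesMod q 1).prod) :=
      hprod.trans ((Nat.mul_le_mul_left _ hlarge).trans_eq (by ring))
    exact hHI.not_ge ((Nat.pow_le_pow_iff_left three_ne_zero).1 (hcube.trans hlt.le))

/-- Depth-first search through the candidates for the prime divisors of `q ^ 3 - 1` that are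
congruent to `2` modulo `3`. Those in `chosen` have been selected and `r` more are to be selected
from the table; a branch is cut off as soon as the smallest possible completion passes
`boundTest`. -/
def search (L₁ : List ℕ) (LO HI : ℕ) : List ℕ → ℕ → List ℕ → Bool
  | _, 0, chosen => leafTest L₁.length LO HI (3 * chosen.prod)
  | [], _ + 1, _ => false
  | c :: cs, r + 1, chosen =>
    (r ≤ cs.length && boundTest 1 (chosen ++ c :: cs.take r) L₁ [(3, 2), (3, 1)]) ||
      (search L₁ LO HI cs r (chosen ++ [c]) && search L₁ LO HI cs (r + 1) chosen)

theorem sieveCondition_or_le_of_search (hq : 2 ≤ q) (h₀ : (cubePrimesMod q 0).length = 1)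
    (hlen : (cubePrimesMod q 1).length ≤ 28) (hLO : LO + 1 < q) {cs chosen rest : List ℕ} {r : ℕ}
    (hcs : IsTableBelow 6000 cs rest) (hpos : ∀ x ∈ cs, 0 < x) (hrest : rest.length = r)
    (hchosen : chosen ++ rest = cubePrimesMod q 2)
    (h : search (primesOneMod.take (cubePrimesMod q 1).length) LO HI cs r chosen = true) :
    SieveCondition q ∨ HI ≤ q := by
  induction cs, r, chosen using search.induct generalizing rest with
  | case1 cs chosen =>
    rw [List.length_eq_zero_iff.1 hrest, List.append_nil] at hchosen
    rw [search, List.length_take_of_le (hlen.trans le_length_primesOneMod), hchosen] at h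
    exact .inr (le_of_leafTest hq h₀ hlen hLO h)
  | case2 r chosen => exact absurd h (by rw [search]; decide)
  | case3 c cs r chosen ihmem ihnotMem =>
    obtain ⟨x, rest, rfl⟩ := List.exists_cons_of_length_eq_add_one hrest
    have hrest' : rest.length = r := Nat.succ_injective hrest
    have hpos' : ∀ x ∈ cs, 0 < x := fun x hx => hpos x (List.mem_cons_of_mem c hx)
    rw [search, Bool.or_eq_true, Bool.and_eq_true, Bool.and_eq_true, decide_eq_true_iff] at h
    rcases h with ⟨hr, h⟩ | ⟨hmem, hnotMem⟩
    · have hle := hcs.forall₂_take_le (hrest.trans_le (Nat.succ_le_succ hr))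
      rw [hrest, List.take_succ_cons] at hle
      have hle' : List.Forall₂ (· ≤ ·) (chosen ++ c :: cs.take r) (cubePrimesMod q 2) :=
        hchosen ▸ List.rel_append (List.forall₂_refl chosen) hle
      have hbound_pos : ∀ y ∈ (chosen ++ c :: cs.take r) ++
          primesOneMod.take (cubePrimesMod q 1).length, 0 < y :=
        List.forall_mem_append.2 ⟨List.forall_mem_append.2
          ⟨fun y hy => (prime_of_mem_cubePrimesMod (hchosen ▸ List.mem_append_left _ hy)).pos,
            fun y hy => hpos y (((List.take_sublist r cs).cons_cons c).subset hy)⟩,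
          fun y hy => pos_of_mem_primeCandidates (List.mem_of_mem_take hy)⟩
      exact .inl (sieveCondition_of_boundTest hq hle' (forall₂_take_primesOneMod_le hlen)
        hbound_pos (splits := [(3, 2), (3, 1)]) (by rwa [h₀]))
    · by_cases hc : c ∈ x :: rest
      · obtain rfl := hcs.head_eq_of_mem hc
        exact ihmem hcs.tail_tail hpos' hrest'
          (by rw [← hchosen, List.append_assoc]; rfl) hmem
      · exact ihnotMem (hcs.tail_of_notMem hc) hpos' hrest hchosen hnotMem

end Search

section FewPrimes

variable {q t₂ t₁ LO HI : ℕ}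

/-- Decides a pair `(t₂, t₁)` for which `boundTest` fails when `3 ∣ q - 1`: the sieve inequality
holds for `HI ≤ q`, the product of the primes forces `LO + 1 < q`, and `search` treats the range in
between. -/
def exceptionalTest (t₂ t₁ LO HI : ℕ) : Bool :=
  (splitTest 1 (primesTwoMod.take t₂) (primesOneMod.take t₁) (HI ^ 3) 3 2 ||
    splitTest 1 (primesTwoMod.take t₂) (primesOneMod.take t₁) (HI ^ 3) 3 1) &&
  ((LO + 1) ^ 3 ≤ 9 * ((primesTwoMod.take t₂).prod * (primesOneMod.take t₁).prod) &&
    search (primesOneMod.take t₁) LO HI primesTwoMod t₂ [])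

/-- The tuples `(t₂, t₁, LO, HI)` to be treated by `exceptionalTest`. Here `LO` and
`HI` are the numerically found bounds for `q` beyond which the product of the primes and the sieve
inequality, respectively, become decisive. -/
def exceptionalCases : List (ℕ × ℕ × ℕ × ℕ) :=
  [(6, 17, 2174573015533, 2487000000000), (7, 16, 1389959232658, 5227000000000),
    (8, 15, 941981483972, 7281000000000), (9, 14, 683066084953, 9937000000000),
    (8, 16, 5016121129149, 9639000000000), (9, 15, 3538351628989, 13819000000000),
    (9, 16, 18841984338875, 19239000000000), (10, 15, 13774790209758, 29115000000000)]

/-- Decides the case that `q ^ 3 - 1` has `h`, `t₁` and `t₂` prime divisors in the residue classes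
of `0`, `1` and `2` modulo `3`, under the hypothesis that `24 ≤ h + t₂ + t₁` or
`8 * 10 ^ 12 ≤ q`. -/
def smallCaseTest (h t₂ t₁ : ℕ) : Bool :=
  boundTest h (primesTwoMod.take t₂) (primesOneMod.take t₁)
      [(3, 2), (3, 3), (2, 2), (3, 1), (1, 3), (4, 3)] ||
    (h + t₂ + t₁ < 24 && splitTest h (primesTwoMod.take t₂) (primesOneMod.take t₁)
      ((8 * 10 ^ 12) ^ 3) 3 2) ||
    (h = 1 && exceptionalCases.any fun c =>
      c.1 = t₂ && (c.2.1 = t₁ && exceptionalTest c.1 c.2.1 c.2.2.1 c.2.2.2))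

set_option maxRecDepth 20000 in
theorem smallCaseTest_eq_true : ∀ h ∈ List.range 2, ∀ t₂ ∈ List.range 29, ∀ t₁ ∈ List.range 29,
    h + t₂ + t₁ ≤ 28 → smallCaseTest h t₂ t₁ = true := by
  decide +kernel

theorem sieveCondition_of_exceptionalTest (hq : 2 ≤ q) (h₀ : (cubePrimesMod q 0).length = 1)
    (h₂ : (cubePrimesMod q 2).length ≤ 28) (h₁ : (cubePrimesMod q 1).length ≤ 28)
    (h : exceptionalTest (cubePrimesMod q 2).length (cubePrimesMod q 1).length LO HI = true) :
    SieveCondition q := by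
  have hle₂ := forall₂_take_primesTwoMod_le h₂
  have hle₁ := forall₂_take_primesOneMod_le h₁
  rw [exceptionalTest, Bool.and_eq_true, Bool.and_eq_true, Bool.or_eq_true,
    decide_eq_true_iff] at h
  obtain ⟨hsplit, hLO, hsearch⟩ := h
  have hLOq : (LO + 1) ^ 3 < q ^ 3 := by
    have hlt := pow_mul_prod_cubePrimesMod_lt hq
    rw [h₀, pow_one] at hlt
    exact (hLO.trans (Nat.mul_le_mul_left 9
      (Nat.mul_le_mul hle₂.prod_le_prod' hle₁.prod_le_prod'))).trans_lt hlt
  rcases sieveCondition_or_le_of_search hq h₀ h₁ (lt_of_pow_lt_pow_left' 3 hLOq)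
    isTableBelow_primesTwoMod (fun _ => pos_of_mem_primeCandidates) rfl rfl hsearch with h | hHI
  · exact h
  · have hHI' : HI ^ 3 ≤ q ^ 3 := Nat.pow_le_pow_left hHI 3
    exact hsplit.elim
      (fun h => sieveCondition_of_splitTest (a := 3) (b := 2) hle₂ hle₁
        pos_of_mem_take_append_take hHI' (by rwa [h₀]))
      (fun h => sieveCondition_of_splitTest (a := 3) (b := 1) hle₂ hle₁
        pos_of_mem_take_append_take hHI' (by rwa [h₀]))

theorem sieveCondition_of_card_le_twentyEight (hq : 2 ≤ q)
    (hcond : 24 ≤ (q ^ 3 - 1).primeFactors.card ∨ 8 * 10 ^ 12 ≤ q)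
    (h : (q ^ 3 - 1).primeFactors.card ≤ 28) : SieveCondition q := by
  rw [← length_cubePrimesMod_add] at hcond h
  have hle₂ := forall₂_take_primesTwoMod_le (q := q) (by lia)
  have hle₁ := forall₂_take_primesOneMod_le (q := q) (by lia)
  have htest := smallCaseTest_eq_true (cubePrimesMod q 0).length
    (List.mem_range.2 (Nat.lt_succ_of_le length_cubePrimesMod_zero_le_one))
    (cubePrimesMod q 2).length (List.mem_range.2 (by lia))
    (cubePrimesMod q 1).length (List.mem_range.2 (by lia)) h
  simp only [smallCaseTest, Bool.or_eq_true, Bool.and_eq_true, decide_eq_true_iff,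
    List.any_eq_true] at htest
  rcases htest with (hbound | ⟨hfew, hsplit⟩) | ⟨h₀, c, -, hc₂, hc₁, hexc⟩
  · exact sieveCondition_of_boundTest hq hle₂ hle₁ pos_of_mem_take_append_take hbound
  · exact sieveCondition_of_splitTest hle₂ hle₁ pos_of_mem_take_append_take
      (Nat.pow_le_pow_left (hcond.resolve_left hfew.not_ge) 3) hsplit
  · rw [hc₂, hc₁] at hexc
    exact sieveCondition_of_exceptionalTest hq h₀ (by lia) (by lia) hexc

theorem sieveCondition_of_le_card_or_le (hq : 2 ≤ q)
    (hcond : 24 ≤ (q ^ 3 - 1).primeFactors.card ∨ 8 * 10 ^ 12 ≤ q) : SieveCondition q := by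
  rcases le_or_gt (q ^ 3 - 1).primeFactors.card 28 with h | h
  · exact sieveCondition_of_card_le_twentyEight hq hcond h
  rcases le_total (q ^ 3 - 1).primeFactors.card 200 with h' | h'
  · exact sieveCondition_of_card_mem_Icc hq ⟨h, h'⟩
  · exact sieveCondition_of_two_hundred_le_card hq h'

end FewPrimes

end PrimitivePair

/-- If `q` is a prime power with `ω(q^3 - 1) ≥ 24` or `q ≥ 8·10^12`, then for
every `a ∈ F_q` there is a primitive `ξ ∈ F_{q^3}` with `ξ + ξ⁻¹` also primitive
and `Tr ξ = a`. -/
theorem stmt17 (q : ℕ) (hq : IsPrimePow q)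
    (hcond : 24 ≤ (q ^ 3 - 1).primeFactors.card ∨ 8 * 10 ^ 12 ≤ q)
    (F E : Type*) [Field F] [Fintype F] [Field E] [Fintype E] [Algebra F E]
    (hF : Fintype.card F = q) (hE : Fintype.card E = q ^ 3) (a : F) :
    ∃ ξ : E, orderOf ξ = q ^ 3 - 1 ∧ orderOf (ξ + ξ⁻¹) = q ^ 3 - 1 ∧
      Algebra.trace F E ξ = a := by
  exact (PrimitivePair.sieveCondition_of_le_card_or_le hq.two_le hcond).exists_primitive_pair
    hq.two_le hF hE a
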